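/- arXiv:1605.08383 — 4 statements merged into one kernel-verified Lean document; each statement's English description precedes it below -/
import Mathlib

section
/- Suppose α : ℕ → ℕ satisfies liminf_{n→∞} α(n) ≥ 4 and limsup_{n→∞} (α(n)/n)·log(n)·(log(log n))² < 1/(12π²e). Then for every z ∈ ℝ, the proportion of permutations σ in S_{n,α} with C(σ) − m_{n,α} ≤ z·√(v_{n,α}) converges, as n → ∞, to Φ(z) = (1/√(2π))∫_{−∞}^z e^{−t²/2} dt, the distribution function of the standard normal distribution. -/
open scoped Classical in
/-- `S_{n,a}`: the set of permutations of `{1,…,n}` all of whose cycles have length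
at most `a`. -/
noncomputable def Snalpha (n a : ℕ) : Finset (Equiv.Perm (Fin n)) :=
  Finset.univ.filter fun σ => ∀ c ∈ σ.cycleType, c ≤ a

/-- `C(σ)`: the total number of cycles of a permutation (nontrivial cycles plus
fixed points). -/
def numCycles {n : ℕ} (σ : Equiv.Perm (Fin n)) : ℕ :=
  σ.cycleType.card + (Finset.univ.filter fun i => σ i = i).card

namespace CLTproof
open Finset

/-- Multisets of integers in `[1,a]` with sum `n`. -/
noncomputable def Pset (n a : ℕ) : Finset (Multiset ℕ) :=
  ((Finset.univ : Finset (Nat.Partition n)).image Nat.Partition.parts).filter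
    (fun s => ∀ i ∈ s, i ≤ a)

lemma mem_Pset {n a : ℕ} {s : Multiset ℕ} :
    s ∈ Pset n a ↔ s.sum = n ∧ ∀ i ∈ s, 0 < i ∧ i ≤ a := by
  unfold Pset
  simp only [mem_filter, mem_image, mem_univ, true_and]
  constructor
  · rintro ⟨⟨p, rfl⟩, h⟩
    exact ⟨p.parts_sum, fun i hi => ⟨p.parts_pos hi, h i hi⟩⟩
  · rintro ⟨h1, h2⟩
    exact ⟨⟨⟨s, fun {i} hi => (h2 i hi).1, h1⟩, rfl⟩, fun i hi => (h2 i hi).2⟩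

/-- weight of a multiset -/
noncomputable def Wt (w : ℂ) (s : Multiset ℕ) : ℂ :=
  ∏ i ∈ s.toFinset, (w / i) ^ (s.count i) / ((s.count i).factorial : ℂ)

lemma Wt_eq (w : ℂ) (s : Multiset ℕ) (S : Finset ℕ) (h : s.toFinset ⊆ S) :
    Wt w s = ∏ i ∈ S, (w / i) ^ (s.count i) / ((s.count i).factorial : ℂ) := by
  unfold Wt
  apply Finset.prod_subset h
  intro i _ hi
  have : s.count i = 0 := by
    rw [Multiset.count_eq_zero]
    simpa using hi
  simp [this]

lemma Wt_cons (w : ℂ) (j : ℕ) (hj : 0 < j) (t : Multiset ℕ) :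
    (j : ℂ) * ((t.count j + 1 : ℕ) : ℂ) * Wt w (j ::ₘ t) = w * Wt w t := by
  have hS : t.toFinset ⊆ (j ::ₘ t).toFinset := by
    intro i; simp; tauto
  have hj' : j ∈ (j ::ₘ t).toFinset := by simp
  rw [Wt_eq w t _ hS, Wt, ← Finset.mul_prod_erase _ _ hj', ← Finset.mul_prod_erase _ _ hj']
  have h2 : ∏ i ∈ ((j ::ₘ t).toFinset).erase j,
      (w / i) ^ ((j ::ₘ t).count i) / (((j ::ₘ t).count i).factorial : ℂ) =
      ∏ i ∈ ((j ::ₘ t).toFinset).erase j, (w / i) ^ (t.count i) / ((t.count i).factorial : ℂ) := by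
    apply Finset.prod_congr rfl
    intro i hi
    rw [Multiset.count_cons_of_ne (Finset.ne_of_mem_erase hi)]
  rw [h2, Multiset.count_cons_self, Nat.factorial_succ]
  have : (j : ℂ) ≠ 0 := by exact_mod_cast hj.ne'
  have h3 : ((t.count j).factorial : ℂ) ≠ 0 := by exact_mod_cast Nat.factorial_ne_zero _
  have h4 : ((t.count j + 1 : ℕ) : ℂ) ≠ 0 := Nat.cast_ne_zero.2 (Nat.succ_ne_zero _)
  rw [pow_succ, Nat.cast_mul]
  field_simp

/-- coefficient sequence -/
noncomputable def bc (w : ℂ) (a n : ℕ) : ℂ := ∑ s ∈ Pset n a, Wt w s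

lemma bc_zero (w : ℂ) (a : ℕ) : bc w a 0 = 1 := by
  have : Pset 0 a = {0} := by
    ext s
    rw [mem_Pset, mem_singleton]
    constructor
    · rintro ⟨h1, h2⟩
      rw [Multiset.sum_eq_zero_iff] at h1
      apply Multiset.eq_zero_of_forall_notMem
      intro i hi
      have := h1 i hi
      have := h2 i hi
      omega
    · rintro rfl; simp
  simp [bc, this, Wt]

lemma bc_rec (w : ℂ) (a n : ℕ) :
    (n : ℂ) * bc w a n = w * ∑ j ∈ (Icc 1 a).filter (· ≤ n), bc w a (n - j) := by
  have h1 : ∀ s ∈ Pset n a, (n : ℂ) * Wt w s =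
      ∑ j ∈ (Icc 1 a).filter (· ≤ n), if j ∈ s then w * Wt w (s.erase j) else 0 := by
    intro s hs
    rw [mem_Pset] at hs
    have hsub : s.toFinset ⊆ (Icc 1 a).filter (· ≤ n) := by
      intro i hi
      rw [Multiset.mem_toFinset] at hi
      have := hs.2 i hi
      have h3 := Multiset.le_sum_of_mem hi
      simp; omega
    have hn : (n : ℂ) = ∑ j ∈ (Icc 1 a).filter (· ≤ n), (j : ℂ) * (s.count j : ℂ) := by
      rw [← Finset.sum_subset hsub]
      · rw [← hs.1, Finset.sum_multiset_count s]
        push_cast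
        simp [mul_comm]
      · intro i _ hi
        have : s.count i = 0 := by
          rw [Multiset.count_eq_zero]
          simpa using hi
        simp [this]
    rw [hn, Finset.sum_mul]
    apply Finset.sum_congr rfl
    intro j hj
    split_ifs with hjs
    · obtain ⟨t, rfl⟩ := Multiset.exists_cons_of_mem hjs
      rw [Multiset.erase_cons_head, ← Wt_cons w j (hs.2 j hjs).1, Multiset.count_cons_self]
    · rw [Multiset.count_eq_zero.2 hjs]; simp
  unfold bc
  rw [Finset.mul_sum, Finset.sum_congr rfl h1, Finset.sum_comm, Finset.mul_sum]
  apply Finset.sum_congr rfl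
  intro j hj
  simp only [mem_filter, mem_Icc] at hj
  rw [← Finset.sum_filter, Finset.mul_sum]
  refine Finset.sum_nbij' (fun s => s.erase j) (fun t => j ::ₘ t) ?_ ?_ ?_ ?_ ?_
  · intro s hs
    rw [mem_filter, mem_Pset] at hs
    obtain ⟨⟨h1, h2⟩, h3⟩ := hs
    obtain ⟨t, rfl⟩ := Multiset.exists_cons_of_mem h3
    rw [Multiset.erase_cons_head, mem_Pset]
    rw [Multiset.sum_cons] at h1
    exact ⟨by omega, fun i hi => h2 i (Multiset.mem_cons_of_mem hi)⟩
  · intro t ht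
    rw [mem_Pset] at ht
    rw [mem_filter, mem_Pset, Multiset.sum_cons]
    refine ⟨⟨by omega, ?_⟩, by simp⟩
    intro i hi
    rw [Multiset.mem_cons] at hi
    rcases hi with rfl | hi
    · omega
    · exact ht.2 i hi
  · intro s hs
    rw [mem_filter] at hs
    exact Multiset.cons_erase hs.2
  · intro t _
    simp
  · intro s _; rfl

lemma prod_inv_eq (s : Multiset ℕ) (w : ℂ) :
    Wt w s * ((s.prod : ℂ) * ∏ i ∈ s.toFinset, ((s.count i).factorial : ℂ)) 
      = w ^ s.card * (if 0 ∈ s then 0 else 1) := by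
  by_cases h0 : 0 ∈ s
  · simp [h0, Multiset.prod_eq_zero h0]
  simp only [h0, if_false, mul_one]
  unfold Wt
  rw [Finset.prod_multiset_count s, ← Multiset.toFinset_sum_count_eq, ← Finset.prod_pow_eq_pow_sum]
  push_cast
  rw [← Finset.prod_mul_distrib, ← Finset.prod_mul_distrib]
  apply Finset.prod_congr rfl
  intro i hi
  have : (i : ℂ) ≠ 0 := by
    rw [Multiset.mem_toFinset] at hi
    intro h
    have : i = 0 := by exact_mod_cast h
    exact h0 (this ▸ hi)
  have h3 : ((s.count i).factorial : ℂ) ≠ 0 := by exact_mod_cast Nat.factorial_ne_zero _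
  rw [div_pow]
  field_simp

lemma numCycles_eq {n : ℕ} (σ : Equiv.Perm (Fin n)) :
    numCycles σ = σ.cycleType.card + (n - σ.cycleType.sum) := by
  unfold numCycles
  congr 1
  rw [Equiv.Perm.sum_cycleType]
  have h : (Finset.univ.filter fun i => σ i = i) = σ.supportᶜ := by
    ext i; simp
  rw [h, Finset.card_compl]; simp

lemma perm_sum (n a : ℕ) (ha : 1 ≤ a) (w : ℂ) :
    ∑ σ ∈ Snalpha n a, w ^ (numCycles σ) = (n.factorial : ℂ) * bc w a n := by
  classical
  set f : Equiv.Perm (Fin n) → Multiset ℕ := fun σ =>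
    σ.cycleType + Multiset.replicate (n - σ.cycleType.sum) 1 with hf
  have hle : ∀ σ : Equiv.Perm (Fin n), σ.cycleType.sum ≤ n := by
    intro σ; simpa using σ.sum_cycleType_le
  have hmaps : ∀ σ ∈ Snalpha n a, f σ ∈ Pset n a := by
    intro σ hσ
    simp only [Snalpha, mem_filter, mem_univ, true_and] at hσ
    rw [mem_Pset]
    constructor
    · simp only [hf, Multiset.sum_add, Multiset.sum_replicate, smul_eq_mul, mul_one]
      have := hle σ; omega
    · intro i hi
      simp only [hf, Multiset.mem_add] at hi
      rcases hi with hi | hi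
      · exact ⟨by have := Equiv.Perm.two_le_of_mem_cycleType hi; omega, hσ i hi⟩
      · have := Multiset.eq_of_mem_replicate hi
        omega
  rw [← Finset.sum_fiberwise_of_maps_to hmaps, bc, Finset.mul_sum]
  apply Finset.sum_congr rfl
  intro s hs
  have hs' := mem_Pset.1 hs
  have hcard : ∀ σ ∈ (Snalpha n a).filter (fun σ => f σ = s), w ^ numCycles σ = w ^ s.card := by
    intro σ hσ
    rw [mem_filter] at hσ
    rw [← hσ.2, numCycles_eq]; simp [hf]
  rw [Finset.sum_congr rfl hcard, Finset.sum_const, nsmul_eq_mul]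
  set m := s.filter (fun i => 2 ≤ i) with hm
  have hdec : s = m + Multiset.replicate (s.count 1) 1 := by
    rw [← Multiset.filter_eq' s 1, hm]
    conv_lhs => rw [← Multiset.filter_add_not (fun i => 2 ≤ i) s]
    congr 1
    apply Multiset.filter_congr
    intro i hi
    have := hs'.2 i hi
    omega
  have hsum : m.sum + s.count 1 = n := by
    have := congrArg Multiset.sum hdec
    simp only [Multiset.sum_add, Multiset.sum_replicate, smul_eq_mul, mul_one] at this
    omega
  have hfib : (Snalpha n a).filter (fun σ => f σ = s) =
      Finset.univ.filter (fun σ : Equiv.Perm (Fin n) => σ.cycleType = m) := by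
    ext σ
    simp only [Snalpha, mem_filter, mem_univ, true_and]
    constructor
    · rintro ⟨_, h⟩
      rw [hm, ← h]
      simp only [hf]
      rw [Multiset.filter_add, Multiset.filter_eq_self.2
        (fun _ => Equiv.Perm.two_le_of_mem_cycleType), Multiset.filter_eq_nil.2, add_zero]
      intro i hi
      rw [Multiset.eq_of_mem_replicate hi]; decide
    · intro h
      constructor
      · intro c hc
        rw [h, hm] at hc
        exact (hs'.2 c (Multiset.mem_of_mem_filter hc)).2
      · simp only [hf]
        rw [h, hdec]
        congr 2
        omega
  rw [hfib]
  have hmain := Equiv.Perm.card_of_cycleType_mul_eq (Fin n) m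
  rw [if_pos] at hmain
  swap
  · constructor
    · simp; omega
    · intro c hc
      exact Multiset.of_mem_filter hc
  simp only [Fintype.card_fin] at hmain
  have h01 : 1 ∉ m := by
    intro h
    have := Multiset.of_mem_filter h
    omega
  have hprod : (n - m.sum).factorial * m.prod * ∏ i ∈ m.toFinset, (m.count i).factorial
      = s.prod * ∏ i ∈ s.toFinset, (s.count i).factorial := by
    have e1 : s.prod = m.prod := by
      conv_lhs => rw [hdec]
      simp
    have e2 : n - m.sum = s.count 1 := by omega
    have e3 : ∏ i ∈ s.toFinset, (s.count i).factorial =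
        ∏ i ∈ insert 1 m.toFinset, (s.count i).factorial := by
      apply Finset.prod_subset
      · intro i hi
        rw [Multiset.mem_toFinset] at hi
        have := hs'.2 i hi
        rw [Finset.mem_insert, Multiset.mem_toFinset, hm, Multiset.mem_filter]
        rcases Nat.lt_or_ge i 2 with h | h
        · left; omega
        · right; exact ⟨hi, h⟩
      · intro i _ hi
        rw [Multiset.mem_toFinset] at hi
        rw [Multiset.count_eq_zero.2 hi]; rfl
    rw [e1, e2, e3, Finset.prod_insert (by simpa using h01)]
    have e4 : ∏ i ∈ m.toFinset, (m.count i).factorial =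
        ∏ i ∈ m.toFinset, (s.count i).factorial := by
      apply Finset.prod_congr rfl
      intro i hi
      rw [Multiset.mem_toFinset] at hi
      rw [hm, Multiset.count_filter_of_pos (Multiset.of_mem_filter hi)]
    rw [e4]; ring
  rw [hprod] at hmain
  have h0 : 0 ∉ s := fun h => absurd (hs'.2 0 h).1 (lt_irrefl _)
  have key := prod_inv_eq s w
  simp only [h0, if_false, mul_one] at key
  rw [← key, ← hmain]
  push_cast
  ring

end CLTproof

namespace CLTproof
open Finset Complex MeasureTheory intervalIntegral

/-- generating function -/
noncomputable def gf (w : ℂ) (a : ℕ) (z : ℂ) : ℂ := Complex.exp (w * ∑ j ∈ Icc 1 a, z ^ j / j)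

lemma gf_diff (w : ℂ) (a : ℕ) : Differentiable ℂ (gf w a) := by
  unfold gf
  fun_prop

/-- Fourier coefficient -/
noncomputable def Jf (w : ℂ) (a : ℕ) (r : ℝ) (k : ℤ) : ℂ :=
  ∫ θ in (0 : ℝ)..(2 * Real.pi), gf w a (r * Complex.exp (θ * I)) * Complex.exp (-(k * θ * I))

lemma Jf_neg (w : ℂ) (a : ℕ) (r : ℝ) (hr : 0 < r) (k : ℕ) :
    Jf w a r (-(k : ℤ)) = if k = 0 then (2 * Real.pi : ℂ) else 0 := by
  have h := Complex.circleIntegral_sub_center_inv_smul_of_differentiable_on_off_countable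
    (R := r) hr (f := fun z => gf w a z * z ^ k) (c := 0) (s := ∅) Set.countable_empty
    (by have := (gf_diff w a).continuous; fun_prop)
    (fun z _ => by have := (gf_diff w a); fun_prop)
  rw [circleIntegral] at h
  simp only [sub_zero, deriv_circleMap, smul_eq_mul] at h
  have hr' : (r : ℂ) ≠ 0 := by exact_mod_cast hr.ne'
  have h2 : ∀ θ : ℝ, circleMap 0 r θ * I * ((circleMap 0 r θ)⁻¹ *
      (gf w a (circleMap 0 r θ) * circleMap 0 r θ ^ k)) =
      (I * r ^ k) * (gf w a (r * Complex.exp (θ * I)) * Complex.exp (-(((-(k : ℤ) : ℤ) : ℂ) * θ * I))) := by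
    intro θ
    have : circleMap 0 r θ ≠ 0 := circleMap_ne_center hr.ne'
    have e : Complex.exp (-(((-(k : ℤ) : ℤ) : ℂ) * θ * I)) = Complex.exp (θ * I) ^ k := by
      rw [← Complex.exp_nat_mul]; congr 1; push_cast; ring
    rw [e]
    have e2 : circleMap 0 r θ = r * Complex.exp (θ * I) := by simp [circleMap]
    field_simp
    rw [e2]; ring
  simp_rw [h2] at h
  rw [intervalIntegral.integral_const_mul] at h
  change _ * Jf w a r (-(k : ℤ)) = _ at h
  have g0 : gf w a 0 = 1 := by
    unfold gf
    rw [Finset.sum_eq_zero]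
    · simp
    · intro j hj
      rw [mem_Icc] at hj
      rw [zero_pow (by omega)]; simp
  rw [g0] at h
  split_ifs with hk
  · subst hk
    simp only [pow_zero, mul_one] at h
    apply mul_left_cancel₀ I_ne_zero
    rw [h]; ring
  · rw [zero_pow hk] at h
    simp at h
    rcases h with h | h
    · exact absurd h.1 hr.ne'
    · simpa using h

lemma Jf_rec (w : ℂ) (a : ℕ) (r : ℝ) (k : ℤ) :
    (k : ℂ) * Jf w a r k = w * ∑ j ∈ Icc 1 a, (r : ℂ) ^ j * Jf w a r (k - j) := by
  have hd : ∀ θ : ℝ, HasDerivAt (fun θ : ℝ => gf w a (r * Complex.exp (θ * I)) * 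
      Complex.exp (-(k * θ * I)))
      (I * (w * ∑ j ∈ Icc 1 a, (r : ℂ) ^ j * (gf w a (r * Complex.exp (θ * I)) * 
        Complex.exp (-(((k - j : ℤ) : ℂ) * θ * I))) - 
        k * (gf w a (r * Complex.exp (θ * I)) * Complex.exp (-(k * θ * I))))) θ := by
    intro θ
    have hθ : HasDerivAt (fun θ : ℝ => (θ : ℂ)) 1 θ := Complex.ofRealCLM.hasDerivAt
    have hE : HasDerivAt (fun θ : ℝ => (r : ℂ) * Complex.exp (θ * I))
        (r * (Complex.exp (θ * I) * (1 * I))) θ := ((hθ.mul_const I).cexp).const_mul _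
    have hS : HasDerivAt (fun θ : ℝ => w * ∑ j ∈ Icc 1 a, (r * Complex.exp (θ * I)) ^ j / j)
        (w * ∑ j ∈ Icc 1 a, (j * (r * Complex.exp (θ * I)) ^ (j - 1) *
          (r * (Complex.exp (θ * I) * (1 * I)))) / j) θ := by
      apply HasDerivAt.const_mul
      apply HasDerivAt.fun_sum
      intro j _
      exact (hE.pow j).div_const _
    have hG := hS.cexp
    have h3 : HasDerivAt (fun θ : ℝ => Complex.exp (-(k * θ * I)))
        (Complex.exp (-(k * θ * I)) * (-(k * 1 * I))) θ :=
      (((hθ.const_mul (k : ℂ)).mul_const I).neg).cexp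
    refine (hG.mul h3).congr_deriv ?_
    unfold gf
    have e : ∀ j ∈ Icc 1 a, (j * (r * Complex.exp (θ * I)) ^ (j - 1) *
          (r * (Complex.exp (θ * I) * (1 * I)))) / j = I * (r ^ j * Complex.exp (j * (θ * I))) := by
      intro j hj
      rw [mem_Icc] at hj
      have hj0 : (j : ℂ) ≠ 0 := Nat.cast_ne_zero.2 (by omega)
      rw [Complex.exp_nat_mul]
      obtain ⟨i, rfl⟩ : ∃ i, j = i + 1 := ⟨j - 1, by omega⟩
      simp only [Nat.add_sub_cancel]
      field_simp
      ring
    rw [Finset.sum_congr rfl e]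
    have e2 : ∀ j ∈ Icc 1 a, (r : ℂ) ^ j * (Complex.exp (w * ∑ j ∈ Icc 1 a, (r * Complex.exp (θ * I)) ^ j / j) * 
        Complex.exp (-(((k - j : ℤ) : ℂ) * θ * I))) = 
        Complex.exp (w * ∑ j ∈ Icc 1 a, (r * Complex.exp (θ * I)) ^ j / j) * Complex.exp (-(k * θ * I)) *
        (r ^ j * Complex.exp (j * (θ * I))) := by
      intro j _
      have : Complex.exp (-(((k - j : ℤ) : ℂ) * θ * I)) = Complex.exp (-(k * θ * I)) * Complex.exp (j * (θ * I)) := by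
        rw [← Complex.exp_add]; congr 1; push_cast; ring
      rw [this]; ring
    rw [Finset.sum_congr rfl e2, ← Finset.mul_sum, ← Finset.mul_sum]
    ring
  have hcont : ∀ m : ℤ, Continuous (fun θ : ℝ => gf w a (r * Complex.exp (θ * I)) * 
        Complex.exp (-((m : ℂ) * θ * I))) := by
    intro m
    have := (gf_diff w a).continuous
    fun_prop
  have hintg : ∀ m : ℤ, IntervalIntegrable (fun θ : ℝ => gf w a (r * Complex.exp (θ * I)) * 
        Complex.exp (-((m : ℂ) * θ * I))) volume 0 (2 * Real.pi) := 
    fun m => (hcont m).intervalIntegrable _ _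
  have h := integral_eq_sub_of_hasDerivAt (a := 0) (b := 2 * Real.pi) (fun θ _ => hd θ) (by
    apply Continuous.intervalIntegrable
    have := hcont k
    have h2 : Continuous (fun θ : ℝ => ∑ j ∈ Icc 1 a, (r : ℂ) ^ j * (gf w a (r * Complex.exp (θ * I)) * 
        Complex.exp (-(((k - j : ℤ) : ℂ) * θ * I)))) := by
      apply continuous_finsetSum
      intro j _
      exact continuous_const.mul (hcont _)
    fun_prop)
  have hp : Complex.exp (((2 * Real.pi : ℝ) : ℂ) * I) = 1 := by push_cast; exact Complex.exp_two_pi_mul_I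
  have hp2 : Complex.exp (-((k : ℂ) * ((2 * Real.pi : ℝ) : ℂ) * I)) = 1 := by
    rw [Complex.exp_eq_one_iff]
    exact ⟨-k, by push_cast; ring⟩
  rw [hp, hp2] at h
  simp only [ofReal_zero, zero_mul, mul_zero, neg_zero, Complex.exp_zero, sub_self] at h
  rw [intervalIntegral.integral_const_mul, intervalIntegral.integral_sub,
    intervalIntegral.integral_const_mul, intervalIntegral.integral_finsetSum,
    intervalIntegral.integral_const_mul] at h
  · simp_rw [intervalIntegral.integral_const_mul] at h
    rw [mul_eq_zero] at h
    have h := h.resolve_left I_ne_zero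
    exact (sub_eq_zero.1 h).symm
  · intro j _
    exact (hintg _).const_mul _
  · apply Continuous.intervalIntegrable
    apply continuous_const.mul
    apply continuous_finsetSum
    intro j _
    exact continuous_const.mul (hcont _)
  · exact (hintg _).const_mul _

lemma Jf_eq (w : ℂ) (a : ℕ) (r : ℝ) (hr : 0 < r) (n : ℕ) :
    Jf w a r n = 2 * Real.pi * r ^ n * bc w a n := by
  induction n using Nat.strong_induction_on with
  | _ n ih =>
  rcases Nat.eq_zero_or_pos n with rfl | hn
  · have := Jf_neg w a r hr 0
    simp at this
    simp [bc_zero, this]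
  · have hn' : (n : ℂ) ≠ 0 := Nat.cast_ne_zero.2 hn.ne'
    apply mul_left_cancel₀ hn'
    have h1 := Jf_rec w a r n
    have h2 := bc_rec w a n
    rw [show (n : ℂ) * (2 * Real.pi * r ^ n * bc w a n) = 2 * Real.pi * r ^ n * (n * bc w a n) by ring, h2]
    have h1' : (n : ℂ) * Jf w a r n = w * ∑ j ∈ Icc 1 a, (r : ℂ) ^ j * Jf w a r ((n : ℤ) - j) := by
      exact_mod_cast h1
    rw [h1', Finset.sum_filter, mul_left_comm]
    congr 1
    rw [Finset.mul_sum]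
    apply Finset.sum_congr rfl
    intro j hj
    rw [mem_Icc] at hj
    split_ifs with hjn
    · have := ih (n - j) (by omega)
      rw [Nat.cast_sub hjn] at this
      rw [this]
      rw [show (r : ℂ) ^ n = r ^ j * r ^ (n - j) by rw [← pow_add]; congr 1; omega]
      ring
    · have := Jf_neg w a r hr (j - n)
      rw [if_neg (by omega)] at this
      rw [show (n : ℤ) - j = -((j - n : ℕ) : ℤ) by omega, this]
      simp

end CLTproof

namespace CLTproof
open Finset Complex MeasureTheory intervalIntegral

/-- `Σ x^j/j` -/
noncomputable def lz (a : ℕ) (x : ℝ) : ℝ := ∑ j ∈ Icc 1 a, x ^ j / j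
/-- `Σ x^j` -/
noncomputable def lo (a : ℕ) (x : ℝ) : ℝ := ∑ j ∈ Icc 1 a, x ^ j
/-- `Σ j x^j` -/
noncomputable def lt (a : ℕ) (x : ℝ) : ℝ := ∑ j ∈ Icc 1 a, (j : ℝ) * x ^ j
/-- conditional variance -/
noncomputable def vv (a : ℕ) (x : ℝ) : ℝ := lz a x - lo a x ^ 2 / lt a x
/-- regression coefficient -/
noncomputable def be (a : ℕ) (x : ℝ) : ℝ := lo a x / lt a x

/-- normalised Fourier transform -/
noncomputable def Ef (a : ℕ) (x t θ : ℝ) : ℂ :=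
  Complex.exp (∑ j ∈ Icc 1 a, ((x ^ j / j : ℝ) : ℂ) *
    (Complex.exp (((t + j * θ : ℝ) : ℂ) * I) - 1 - ((t + j * θ : ℝ) : ℂ) * I))

lemma gf_Ef (a n : ℕ) (x t θ : ℝ) (hn : lo a x = n) :
    gf (Complex.exp (t * I)) a (x * Complex.exp (θ * I)) * Complex.exp (-((n : ℤ) * θ * I)) =
      Complex.exp ((lz a x : ℂ)) * Complex.exp ((lz a x : ℂ) * t * I) * Ef a x t θ := by
  unfold gf Ef
  rw [← Complex.exp_add, ← Complex.exp_add, ← Complex.exp_add]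
  congr 1
  have h1 : ∀ j ∈ Icc 1 a, ((x ^ j / j : ℝ) : ℂ) *
    (Complex.exp (((t + j * θ : ℝ) : ℂ) * I) - 1 - ((t + j * θ : ℝ) : ℂ) * I) = 
      Complex.exp (t * I) * ((x * Complex.exp (θ * I)) ^ j / j) - ((x ^ j / j : ℝ) : ℂ)
      - ((x ^ j / j : ℝ) : ℂ) * t * I - ((x ^ j : ℝ) : ℂ) * (θ * I) := by
    intro j hj
    rw [mem_Icc] at hj
    have hj0 : (j : ℂ) ≠ 0 := Nat.cast_ne_zero.2 (by omega)
    have : Complex.exp (((t + j * θ : ℝ) : ℂ) * I) = Complex.exp (t * I) * Complex.exp (θ * I) ^ j := by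
      rw [← Complex.exp_nat_mul, ← Complex.exp_add]; congr 1; push_cast; ring
    rw [this]
    push_cast
    field_simp
    ring
  rw [Finset.sum_congr rfl h1]
  simp only [Finset.sum_sub_distrib, ← Finset.mul_sum, ← Finset.sum_mul]
  have h2 : ((n : ℤ) : ℂ) = ∑ j ∈ Icc 1 a, ((x ^ j : ℝ) : ℂ) := by
    rw [← Complex.ofReal_sum]
    change _ = ((lo a x : ℝ) : ℂ)
    rw [hn]; simp
  rw [h2]
  unfold lz
  push_cast
  ring

lemma Ef_cont (a : ℕ) (x t : ℝ) : Continuous (fun θ => Ef a x t θ) := by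
  unfold Ef
  fun_prop

lemma Ef_periodic (a n : ℕ) (x t : ℝ) (hn : lo a x = n) :
    Function.Periodic (fun θ => Ef a x t θ) (2 * Real.pi) := by
  intro θ
  have h1 := gf_Ef a n x t θ hn
  have h2 := gf_Ef a n x t (θ + 2 * Real.pi) hn
  have e1 : Complex.exp (((θ + 2 * Real.pi : ℝ) : ℂ) * I) = Complex.exp (θ * I) := by
    rw [show ((θ + 2 * Real.pi : ℝ) : ℂ) * I = θ * I + 2 * Real.pi * I by push_cast; ring]
    exact Complex.exp_periodic _
  have e2 : Complex.exp (-((n : ℤ) * ((θ + 2 * Real.pi : ℝ) : ℂ) * I)) =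
      Complex.exp (-((n : ℤ) * θ * I)) := by
    rw [Complex.exp_eq_exp_iff_exists_int]
    exact ⟨-n, by push_cast; ring⟩
  rw [e1, e2, h1] at h2
  have := mul_left_cancel₀ (mul_ne_zero (Complex.exp_ne_zero _) (Complex.exp_ne_zero _)) h2
  exact this.symm

/-- total integral -/
noncomputable def Iint (a : ℕ) (x t : ℝ) : ℂ := ∫ θ in (-Real.pi)..Real.pi, Ef a x t θ

lemma perm_charfun (n a : ℕ) (ha : 1 ≤ a) (x t : ℝ) (hx : 0 < x) (hn : lo a x = n) :
    ∑ σ ∈ Snalpha n a, Complex.exp (((t * (numCycles σ - lz a x) : ℝ) : ℂ) * I) =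
      ((n.factorial * Real.exp (lz a x) / (2 * Real.pi * x ^ n) : ℝ) : ℂ) * Iint a x t := by
  have h1 : Jf (Complex.exp (t * I)) a x n = Complex.exp ((lz a x : ℂ)) *
      Complex.exp ((lz a x : ℂ) * t * I) * Iint a x t := by
    unfold Jf
    simp_rw [gf_Ef a n x t _ hn]
    rw [intervalIntegral.integral_const_mul]
    congr 1
    have := (Ef_periodic a n x t hn).intervalIntegral_add_eq 0 (-Real.pi)
    rw [zero_add, show -Real.pi + 2 * Real.pi = Real.pi by ring] at this
    exact this
  rw [Jf_eq _ _ _ hx] at h1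
  have h2 := perm_sum n a ha (Complex.exp (t * I))
  have h3 : ∀ σ ∈ Snalpha n a, Complex.exp (((t * (numCycles σ - lz a x) : ℝ) : ℂ) * I) =
      Complex.exp (-((lz a x : ℂ) * t * I)) * Complex.exp (t * I) ^ numCycles σ := by
    intro σ _
    rw [← Complex.exp_nat_mul, ← Complex.exp_add]
    congr 1
    push_cast; ring
  rw [Finset.sum_congr rfl h3, ← Finset.mul_sum, h2]
  have hx' : (x : ℂ) ≠ 0 := by exact_mod_cast hx.ne'
  have hpi : (Real.pi : ℂ) ≠ 0 := by exact_mod_cast Real.pi_ne_zero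
  push_cast
  have h4 : bc (Complex.exp (t * I)) a n = Complex.exp ((lz a x : ℂ)) *
      Complex.exp ((lz a x : ℂ) * t * I) * Iint a x t / (2 * Real.pi * x ^ n) := by
    rw [← h1]; field_simp
  rw [h4, Complex.exp_neg]
  field_simp

lemma Ef_norm (a : ℕ) (x t θ : ℝ) :
    ‖Ef a x t θ‖ = Real.exp (-∑ j ∈ Icc 1 a, x ^ j / j * (1 - Real.cos (t + j * θ))) := by
  unfold Ef
  rw [Complex.norm_exp]
  congr 1
  rw [Complex.re_sum, ← Finset.sum_neg_distrib]
  apply Finset.sum_congr rfl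
  intro j _
  rw [Complex.re_ofReal_mul, Complex.sub_re, Complex.sub_re, Complex.exp_ofReal_mul_I_re]
  have : (((t + j * θ : ℝ) : ℂ) * I).re = 0 := by simp
  rw [this]
  simp
  ring

lemma lt_pos {a : ℕ} {x : ℝ} (ha : 1 ≤ a) (hx : 0 < x) : 0 < lt a x := by
  unfold lt
  apply Finset.sum_pos
  · intro j hj
    rw [mem_Icc] at hj
    have : (0 : ℝ) < j := by exact_mod_cast hj.1
    positivity
  · exact ⟨1, by simp [ha]⟩

lemma lo_pos {a : ℕ} {x : ℝ} (ha : 1 ≤ a) (hx : 0 < x) : 0 < lo a x := by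
  unfold lo
  apply Finset.sum_pos
  · intro j hj
    positivity
  · exact ⟨1, by simp [ha]⟩

/-- quadratic identity -/
lemma quad_id {a : ℕ} {x : ℝ} (ha : 1 ≤ a) (hx : 0 < x) (t τ : ℝ) :
    ∑ j ∈ Icc 1 a, x ^ j / j * (t + j * (τ - t * be a x)) ^ 2 = t ^ 2 * vv a x + τ ^ 2 * lt a x := by
  have hl := (lt_pos ha hx).ne'
  set θ := τ - t * be a x with hθ
  have h1 : ∀ j ∈ Icc 1 a, x ^ j / j * (t + j * θ) ^ 2 =
      t ^ 2 * (x ^ j / j) + 2 * t * θ * x ^ j + θ ^ 2 * (j * x ^ j) := by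
    intro j hj
    rw [mem_Icc] at hj
    have hj0 : (j : ℝ) ≠ 0 := Nat.cast_ne_zero.2 (by omega)
    field_simp
    ring
  rw [Finset.sum_congr rfl h1]
  simp only [Finset.sum_add_distrib, ← Finset.mul_sum]
  change t ^ 2 * lz a x + 2 * t * θ * lo a x + θ ^ 2 * lt a x = _
  rw [hθ, vv, be]
  field_simp
  ring

lemma vv_eq {a : ℕ} {x : ℝ} (ha : 1 ≤ a) (hx : 0 < x) :
    vv a x = ∑ j ∈ Icc 1 a, x ^ j / j * (1 - j * be a x) ^ 2 := by
  have := quad_id ha hx 1 0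
  simp at this
  rw [← this]
  apply Finset.sum_congr rfl
  intro j _
  ring

lemma lt_ge {a : ℕ} {x : ℝ} (hx : 1 ≤ x) : lo a x * ((a + 1) / 2) ≤ lt a x := by
  rcases Nat.eq_zero_or_pos a with rfl | ha
  · simp [lo, lt]
  have h : MonovaryOn (fun j : ℕ => (j : ℝ)) (fun j : ℕ => x ^ j) (Icc 1 a : Finset ℕ) := by
    intro i _ j _ hij
    have : i ≤ j := by
      by_contra hc
      have := pow_le_pow_right₀ hx (not_le.1 hc).le
      exact absurd hij (not_lt.2 this)
    change (i : ℝ) ≤ j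
    exact_mod_cast this
  have h2 := h.sum_mul_sum_le_card_mul_sum
  have hs : ∑ j ∈ Icc 1 a, (j : ℝ) = a * (a + 1) / 2 := by
    clear h h2 ha
    induction a with
    | zero => simp
    | succ k ih =>
      rw [Finset.sum_Icc_succ_top (by omega), ih]
      push_cast; ring
  rw [hs] at h2
  simp only [Nat.card_Icc, Nat.add_sub_cancel] at h2
  have ha' : (0 : ℝ) < a := by exact_mod_cast ha
  change (a : ℝ) * (a + 1) / 2 * lo a x ≤ a * lt a x at h2
  have h3 : (a : ℝ) * (lo a x * ((a + 1) / 2)) ≤ a * lt a x := by linarith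
  exact le_of_mul_le_mul_left h3 ha'

lemma lt_le {a : ℕ} {x : ℝ} (hx : 0 < x) : lt a x ≤ a * lo a x := by
  unfold lt lo
  rw [Finset.mul_sum]
  apply Finset.sum_le_sum
  intro j hj
  rw [mem_Icc] at hj
  have : (j : ℝ) ≤ a := by exact_mod_cast hj.2
  have := pow_pos hx j
  gcongr

lemma be_le {a : ℕ} {x : ℝ} (ha : 1 ≤ a) (hx : 1 ≤ x) : be a x ≤ 2 / (a + 1) := by
  unfold be
  have h := lt_ge (a := a) hx
  have h1 := lt_pos ha (by linarith : 0 < x)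
  rw [div_le_div_iff₀ h1 (by positivity)]
  linarith

lemma be_nonneg {a : ℕ} {x : ℝ} (ha : 1 ≤ a) (hx : 0 < x) : 0 ≤ be a x := 
  div_nonneg (lo_pos ha hx).le (lt_pos ha hx).le

lemma y_bound {a : ℕ} {x : ℝ} (ha : 1 ≤ a) (hx : 1 ≤ x) (t τ : ℝ) (j : ℕ) (hj : j ∈ Icc 1 a) :
    |t + j * (τ - t * be a x)| ≤ |t| + a * |τ| := by
  rw [mem_Icc] at hj
  have hb := be_le ha hx
  have hb0 := be_nonneg ha (by linarith : 0 < x)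
  have hja : (j : ℝ) ≤ a := by exact_mod_cast hj.2
  have ha' : (1 : ℝ) ≤ a := by exact_mod_cast ha
  have h1 : (j : ℝ) * be a x ≤ 2 := by
    calc (j : ℝ) * be a x ≤ a * (2 / (a + 1)) := by gcongr
      _ ≤ 2 := by
        rw [mul_div_assoc', div_le_iff₀ (by linarith)]; linarith
  have h0 : 0 ≤ (j : ℝ) * be a x := by positivity
  have h2 : |1 - j * be a x| ≤ 1 := by rw [abs_le]; constructor <;> linarith
  calc |t + j * (τ - t * be a x)| = |t * (1 - j * be a x) + j * τ| := by congr 1; ring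
    _ ≤ |t * (1 - j * be a x)| + |j * τ| := abs_add_le _ _
    _ = |t| * |1 - j * be a x| + j * |τ| := by rw [abs_mul, abs_mul]; simp
    _ ≤ |t| * 1 + a * |τ| := by gcongr
    _ = _ := by ring

/-- Gaussian domination in the inner region -/
lemma Ef_inner {a : ℕ} {x : ℝ} (ha : 1 ≤ a) (hx : 1 ≤ x) (t τ : ℝ) (h : |t| + a * |τ| ≤ Real.pi) :
    ‖Ef a x t (τ - t * be a x)‖ ≤
      Real.exp (-(2 / Real.pi ^ 2 * (t ^ 2 * vv a x + τ ^ 2 * lt a x))) := by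
  rw [Ef_norm, ← quad_id ha (by linarith : 0 < x), Finset.mul_sum]
  apply Real.exp_le_exp.2
  apply neg_le_neg
  apply Finset.sum_le_sum
  intro j hj
  have h1 := y_bound ha hx t τ j hj
  have h2 := Real.cos_le_one_sub_mul_cos_sq (h1.trans h)
  have : 0 ≤ x ^ j / j := by positivity
  calc _ = x ^ j / j * (2 / Real.pi ^ 2 * (t + j * (τ - t * be a x)) ^ 2) := by ring
    _ ≤ _ := by
      gcongr
      linarith

/-- third order estimate -/
lemma Ef_taylor {a : ℕ} {x : ℝ} (ha : 1 ≤ a) (hx : 1 ≤ x) (t τ : ℝ) (h : |t| + a * |τ| ≤ 1) :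
    ∃ ε : ℂ, ‖ε‖ ≤ (|t| + a * |τ|) * (t ^ 2 * vv a x + τ ^ 2 * lt a x) * Real.exp 1 ∧
      Ef a x t (τ - t * be a x) =
        Complex.exp (((-(t ^ 2 * vv a x + τ ^ 2 * lt a x) / 2 : ℝ) : ℂ) + ε) := by
  set y : ℕ → ℝ := fun j => t + j * (τ - t * be a x) with hy
  refine ⟨∑ j ∈ Icc 1 a, ((x ^ j / j : ℝ) : ℂ) *
    (Complex.exp ((y j : ℂ) * I) - 1 - (y j : ℂ) * I + (y j : ℂ) ^ 2 / 2), ?_, ?_⟩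
  · rw [← quad_id ha (by linarith : 0 < x), Finset.mul_sum, Finset.sum_mul]
    refine (norm_sum_le _ _).trans ?_
    apply Finset.sum_le_sum
    intro j hj
    have hyb : |y j| ≤ |t| + a * |τ| := y_bound ha hx t τ j hj
    have hp : 0 ≤ x ^ j / j := by positivity
    rw [norm_mul, Complex.norm_real, Real.norm_of_nonneg hp]
    have h3 := Complex.norm_exp_sub_sum_le_norm_mul_exp ((y j : ℂ) * I) 3
    have h4 : ∑ m ∈ Finset.range 3, ((y j : ℂ) * I) ^ m / (m.factorial : ℂ) = 
        1 + (y j : ℂ) * I - (y j : ℂ) ^ 2 / 2 := by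
      simp [Finset.sum_range_succ, Nat.factorial, mul_pow]
      ring
    rw [h4] at h3
    have h5 : ‖(y j : ℂ) * I‖ = |y j| := by simp
    rw [h5] at h3
    have h6 : Complex.exp ((y j : ℂ) * I) - 1 - (y j : ℂ) * I + (y j : ℂ) ^ 2 / 2 =
        Complex.exp ((y j : ℂ) * I) - (1 + (y j : ℂ) * I - (y j : ℂ) ^ 2 / 2) := by ring
    rw [h6]
    calc _ ≤ x ^ j / j * (|y j| ^ 3 * Real.exp |y j|) := by gcongr
      _ ≤ x ^ j / j * (((|t| + a * |τ|) * |y j| ^ 2) * Real.exp 1) := by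
        gcongr
        · rw [pow_succ']; gcongr
        · linarith
      _ = _ := by rw [sq_abs]; ring
  · unfold Ef
    congr 1
    rw [← quad_id ha (by linarith : 0 < x), ← Finset.sum_neg_distrib, Finset.sum_div]
    push_cast
    rw [← Finset.sum_add_distrib]
    apply Finset.sum_congr rfl
    intro j _
    simp only [hy]
    push_cast
    ring

end CLTproof

namespace CLTproof
open Finset Complex MeasureTheory intervalIntegral

lemma sq_le_help {p q : ℝ} (h : p ^ 2 ≤ q ^ 2) (hq : 0 ≤ q) : p ≤ q :=
  (le_abs_self p).trans (abs_le_of_sq_le_sq h hq)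

lemma geom_id (a : ℕ) (z : ℂ) : (∑ j ∈ Icc 1 a, z ^ j) * (z - 1) = z * (z ^ a - 1) := by
  induction a with
  | zero => simp
  | succ k ih =>
    rw [Finset.sum_Icc_succ_top (by omega), add_mul, ih]
    ring

lemma lo_id (a : ℕ) (x : ℝ) : lo a x * (x - 1) = x * (x ^ a - 1) := by
  unfold lo
  induction a with
  | zero => simp
  | succ k ih =>
    rw [Finset.sum_Icc_succ_top (by omega), add_mul, ih]
    ring

lemma outer_sum {a : ℕ} {x : ℝ} (ha : 4 ≤ a) (hx : 1 < x) (t θ : ℝ) (h1 : |θ| ≤ Real.pi)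
    (h2 : 2.8 ≤ a * |θ|) :
    lo a x / a * (1 - a * (x - 1) / Real.sqrt ((a * (x - 1)) ^ 2 + 3 * x)) - 4 ≤
      ∑ j ∈ Icc 1 a, x ^ j / j * (1 - Real.cos (t + j * θ)) := by
  have ha' : (4 : ℝ) ≤ a := by exact_mod_cast ha
  have hx0 : 0 < x := by linarith
  set D := Real.sqrt ((a * (x - 1)) ^ 2 + 3 * x) with hD
  have hDpos : 0 < D := Real.sqrt_pos.2 (by positivity)
  have hD2 : D ^ 2 = (a * (x - 1)) ^ 2 + 3 * x := Real.sq_sqrt (by positivity)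
  set Z : ℂ := x * Complex.exp (θ * I) with hZ
  set S : ℂ := ∑ j ∈ Icc 1 a, Z ^ j with hS
  have hZn : ‖Z‖ = x := by
    rw [hZ, norm_mul, Complex.norm_exp_ofReal_mul_I, Complex.norm_real, Real.norm_of_nonneg hx0.le,
      mul_one]
  have hZ1 : ‖Z - 1‖ ^ 2 = (x - 1) ^ 2 + 2 * x * (1 - Real.cos θ) := by
    rw [← Complex.normSq_eq_norm_sq, Complex.normSq_apply]
    have e1 : (Z - 1).re = x * Real.cos θ - 1 := by
      rw [hZ, Complex.sub_re, Complex.re_ofReal_mul, Complex.exp_ofReal_mul_I_re]; simp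
    have e2 : (Z - 1).im = x * Real.sin θ := by
      rw [hZ, Complex.sub_im, Complex.im_ofReal_mul, Complex.exp_ofReal_mul_I_im]; simp
    rw [e1, e2]
    nlinarith [Real.sin_sq_add_cos_sq θ]
  have hpi : Real.pi ^ 2 ≤ 10 := by nlinarith [Real.pi_lt_d2, Real.pi_pos]
  have hcos : 3 / 2 / (a : ℝ) ^ 2 ≤ 1 - Real.cos θ := by
    have := Real.cos_le_one_sub_mul_cos_sq h1
    have h3 : 3 / 2 / (a : ℝ) ^ 2 ≤ 2 / Real.pi ^ 2 * θ ^ 2 := by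
      have h4 : (7.84 : ℝ) ≤ (a : ℝ) ^ 2 * θ ^ 2 := by
        have : (2.8 : ℝ) ^ 2 ≤ (a * |θ|) ^ 2 := by gcongr
        rw [mul_pow, sq_abs] at this
        norm_num at this ⊢
        linarith
      rw [div_le_iff₀ (by positivity)]
      have h5 : (2 : ℝ) / 10 ≤ 2 / Real.pi ^ 2 := by gcongr
      calc (3 : ℝ) / 2 ≤ 2 / 10 * 7.84 := by norm_num
        _ ≤ 2 / Real.pi ^ 2 * ((a : ℝ) ^ 2 * θ ^ 2) := by gcongr
        _ = _ := by ring
    linarith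
  have hZ2 : D ≤ a * ‖Z - 1‖ := by
    apply sq_le_help _ (by positivity)
    rw [hD2, mul_pow (a : ℝ) ‖Z - 1‖, hZ1]
    rw [div_le_iff₀ (by positivity)] at hcos
    nlinarith
  have hS1 : ‖S‖ * ‖Z - 1‖ ≤ x * (x ^ a + 1) := by
    rw [← norm_mul, hS, geom_id, norm_mul, hZn]
    gcongr
    refine (norm_sub_le _ _).trans ?_
    rw [norm_pow, hZn]; simp
  have hlo := lo_id a x
  have hS2 : ‖S‖ * D ≤ a * (lo a x * (x - 1) + 2 * x) := by
    calc ‖S‖ * D ≤ ‖S‖ * (a * ‖Z - 1‖) := by gcongr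
      _ = a * (‖S‖ * ‖Z - 1‖) := by ring
      _ ≤ a * (x * (x ^ a + 1)) := by gcongr
      _ = _ := by rw [hlo]; ring
  have hS3 : ∑ j ∈ Icc 1 a, x ^ j * Real.cos (t + j * θ) ≤ ‖S‖ := by
    have : ∑ j ∈ Icc 1 a, x ^ j * Real.cos (t + j * θ) = (Complex.exp (t * I) * S).re := by
      rw [hS, Finset.mul_sum, Complex.re_sum]
      apply Finset.sum_congr rfl
      intro j _
      rw [hZ, mul_pow, ← Complex.exp_nat_mul, mul_left_comm, ← Complex.exp_add]
      rw [show (t : ℂ) * I + j * (θ * I) = ((t + j * θ : ℝ) : ℂ) * I by push_cast; ring]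
      rw [← Complex.ofReal_pow, Complex.re_ofReal_mul, Complex.exp_ofReal_mul_I_re]
    rw [this]
    refine (Complex.re_le_norm _).trans ?_
    rw [norm_mul, Complex.norm_exp_ofReal_mul_I, one_mul]
  have h2x : 2 * x ≤ 4 * D := by
    apply sq_le_help _ (by positivity)
    rw [mul_pow 4 D, hD2]
    have : (4 * (x - 1)) ^ 2 ≤ (a * (x - 1)) ^ 2 := by
      have : 0 ≤ x - 1 := by linarith
      gcongr
    nlinarith [sq_nonneg (x - 1), sq_nonneg (63 * x - 58)]
  have hfirst : (lo a x - ‖S‖) / a ≤ ∑ j ∈ Icc 1 a, x ^ j / j * (1 - Real.cos (t + j * θ)) := by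
    calc (lo a x - ‖S‖) / a ≤ (lo a x - ∑ j ∈ Icc 1 a, x ^ j * Real.cos (t + j * θ)) / a := by gcongr
      _ = ∑ j ∈ Icc 1 a, x ^ j / a * (1 - Real.cos (t + j * θ)) := by
        unfold lo
        rw [← Finset.sum_sub_distrib, Finset.sum_div]
        apply Finset.sum_congr rfl
        intro j _
        ring
      _ ≤ _ := by
        apply Finset.sum_le_sum
        intro j hj
        rw [mem_Icc] at hj
        have : 0 ≤ 1 - Real.cos (t + j * θ) := by linarith [Real.cos_le_one (t + j * θ)]
        have hj0 : (0 : ℝ) < j := by exact_mod_cast hj.1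
        have hja : (j : ℝ) ≤ a := by exact_mod_cast hj.2
        gcongr
  refine le_trans ?_ hfirst
  have hSd : ‖S‖ / a ≤ (lo a x * (x - 1) + 2 * x) / D := by
    rw [div_le_div_iff₀ (by linarith) hDpos]
    linarith
  have h4 : 2 * x / D ≤ 4 := by rw [div_le_iff₀ hDpos]; exact h2x
  rw [sub_div]
  rw [add_div] at hSd
  have e : lo a x / a * (1 - a * (x - 1) / D) = lo a x / a - lo a x * (x - 1) / D := by
    field_simp
  rw [e]
  linarith

lemma kappa_bd {L X κ : ℝ} (hL : 0 ≤ L) (hX : 0 < X) (h0 : 0 ≤ κ) (h1 : κ ≤ 1) (h : κ * L ^ 2 ≤ X) :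
    κ / 4 ≤ 1 - L / Real.sqrt (L ^ 2 + X) := by
  have hD : 0 < Real.sqrt (L ^ 2 + X) := Real.sqrt_pos.2 (by positivity)
  have : L / Real.sqrt (L ^ 2 + X) ≤ 1 - κ / 4 := by
    rw [div_le_iff₀ hD]
    have h14 : 0 ≤ 1 - κ / 4 := by linarith
    apply sq_le_help _ (mul_nonneg h14 hD.le)
    rw [mul_pow, Real.sq_sqrt (by positivity)]
    calc L ^ 2 ≤ (1 - κ / 4) ^ 2 * (1 + κ) * L ^ 2 := by
          have : 1 ≤ (1 - κ / 4) ^ 2 * (1 + κ) := by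
            nlinarith [mul_nonneg h0 (sub_nonneg.2 h1), mul_nonneg (mul_nonneg h0 h0) h0, sq_nonneg κ]
          nlinarith [sq_nonneg L]
      _ = (1 - κ / 4) ^ 2 * (L ^ 2 + κ * L ^ 2) := by ring
      _ ≤ _ := by gcongr
  linarith

lemma Ef_outer {a : ℕ} {x κ N : ℝ} (ha : 4 ≤ a) (hx : 1 < x) (h0 : 0 ≤ κ) (hκ1 : κ ≤ 1)
    (hκ : κ * (a * (x - 1)) ^ 2 ≤ 3 * x) (hκ2 : 6 * Real.log N ≤ lo a x / a * κ)
    (t θ : ℝ) (h1 : |θ| ≤ Real.pi) (h2 : 2.8 ≤ a * |θ|) :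
    ‖Ef a x t θ‖ ≤ Real.exp (4 - 3 / 2 * Real.log N) := by
  rw [Ef_norm]
  apply Real.exp_le_exp.2
  have h3 := outer_sum ha hx t θ h1 h2
  have h4 := kappa_bd (L := a * (x - 1)) (X := 3 * x) (κ := κ)
    (mul_nonneg (by positivity) (by linarith)) (by linarith) h0 hκ1 hκ
  have h5 : 0 ≤ lo a x / a := div_nonneg (lo_pos (by omega) (by linarith)).le (by positivity)
  have h6 := mul_le_mul_of_nonneg_left h4 h5
  linarith

end CLTproof

namespace CLTproof
open Finset Filter

lemma L_le {a : ℕ} {x y : ℝ} (ha : 1 ≤ a) (hx : 1 < x) (hx2 : x < 2) (hy : lo a x = y * a) 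
    (hy7 : Real.exp 7 ≤ y) : a * (x - 1) ≤ 4 * Real.log y := by
  by_contra hc
  push Not at hc
  set L := a * (x - 1) with hL
  have hy0 : 0 < y := (Real.exp_pos 7).trans_le hy7
  have hly : 7 ≤ Real.log y := (Real.le_log_iff_exp_le hy0).2 hy7
  have hL28 : 28 < L := by linarith
  have h1 : L / 2 ≤ Real.log (x ^ a) := by
    rw [Real.log_pow]
    have := Real.one_sub_inv_le_log_of_pos (by linarith : 0 < x)
    have h2 : (x - 1) / 2 ≤ 1 - x⁻¹ := by
      rw [show 1 - x⁻¹ = (x - 1) / x by field_simp]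
      apply div_le_div_of_nonneg_left <;> linarith
    calc L / 2 = a * ((x - 1) / 2) := by rw [hL]; ring
      _ ≤ _ := by gcongr; linarith
  have hid := lo_id a x
  have hxa : x ^ a ≤ 1 + y * L := by
    have h3 : x * (x ^ a - 1) = y * L := by rw [← hid, hy, hL]; ring
    have h4 : 1 ≤ x ^ a := one_le_pow₀ hx.le
    nlinarith
  set E := Real.exp (L / 4) with hE
  have hEE : E ^ 2 ≤ 1 + y * L := by
    refine le_trans ?_ hxa
    rw [hE, ← Real.exp_nat_mul]
    rw [Real.le_log_iff_exp_le (by positivity)] at h1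
    rw [show ((2 : ℕ) : ℝ) * (L / 4) = L / 2 by push_cast; ring]
    exact h1
  have hyE : y < E := by
    rw [hE, ← Real.log_lt_iff_lt_exp hy0]; linarith
  have hq := Real.quadratic_le_exp_of_nonneg (x := L / 4) (by linarith)
  have hE1 : L + 1 < E := by
    rw [← hE] at hq; nlinarith
  nlinarith

lemma key_single {a : ℕ} {n : ℕ} {x : ℝ} (ha : 4 ≤ a) (hx : 1 < x) (hlo : lo a x = n)
    (hl : 1 ≤ Real.log (Real.log n))
    (hc : 128 * (Real.log n * Real.log (Real.log n) ^ 2) ≤ n / a)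
    (hy7 : Real.exp 7 ≤ (n : ℝ) / a)
    (hyl : 1024 * Real.log ((n : ℝ) / a) ^ 4 ≤ n / a)
    (hnl : 65536 * Real.log n ^ 16 ≤ n) (hn : 2 ≤ n) :
    ∃ κ : ℝ, 0 ≤ κ ∧ κ ≤ 1 ∧ κ * (a * (x - 1)) ^ 2 ≤ 3 * x ∧ 6 * Real.log n ≤ lo a x / a * κ := by
  have ha' : (4 : ℝ) ≤ a := by exact_mod_cast ha
  have hn' : (2 : ℝ) ≤ n := by exact_mod_cast hn
  have hl0 : 0 < Real.log n := Real.log_pos (by linarith)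
  set l := Real.log n with hldef
  set y := (n : ℝ) / a with hy
  have hya : (n : ℝ) = y * a := by rw [hy]; field_simp
  have hy0 : 0 < y := by positivity
  rw [hlo]
  change ∃ κ : ℝ, 0 ≤ κ ∧ κ ≤ 1 ∧ κ * (a * (x - 1)) ^ 2 ≤ 3 * x ∧ 6 * l ≤ y * κ
  rcases le_or_gt 2 x with hx2 | hx2
  · have hxa : x ^ a ≤ n := by
      rw [← hlo]; unfold lo
      exact Finset.single_le_sum (f := fun j => x ^ j) (fun j _ => by positivity) (by simp; omega)
    have hal : (a : ℝ) ≤ 2 * l := by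
      have h1 : (2 : ℝ) ^ a ≤ n := (pow_le_pow_left₀ (by norm_num) hx2 a).trans hxa
      have h2 := Real.log_le_log (by positivity) h1
      rw [Real.log_pow] at h2
      have := Real.log_two_gt_d9
      nlinarith
    have hx4 : x ^ 4 ≤ n := (pow_le_pow_right₀ hx.le ha).trans hxa
    refine ⟨3 / (a ^ 2 * x), by positivity, ?_, ?_, ?_⟩
    · rw [div_le_one (by positivity)]; nlinarith
    · rw [div_mul_eq_mul_div, div_le_iff₀ (by positivity)]
      have : (x - 1) ^ 2 ≤ x ^ 2 := by nlinarith
      calc 3 * (a * (x - 1)) ^ 2 = 3 * a ^ 2 * (x - 1) ^ 2 := by ring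
        _ ≤ 3 * a ^ 2 * x ^ 2 := by gcongr
        _ = _ := by ring
    · have hmain : 16 * l ^ 4 * x ≤ n := by
        have h4 : (16 * l ^ 4 * x) ^ 4 ≤ (n : ℝ) ^ 4 := by
          calc (16 * l ^ 4 * x) ^ 4 = (65536 * l ^ 16) * x ^ 4 := by ring
            _ ≤ (n : ℝ) * n := by gcongr
            _ = (n : ℝ) ^ 2 := by ring
            _ ≤ (n : ℝ) ^ 4 := pow_le_pow_right₀ (by linarith) (by norm_num)
        exact le_of_pow_le_pow_left₀ (by norm_num) (by positivity) h4
      have h3 : 2 * l * a ^ 3 * x ≤ n := by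
        calc 2 * l * a ^ 3 * x ≤ 2 * l * (2 * l) ^ 3 * x := by gcongr
          _ = 16 * l ^ 4 * x := by ring
          _ ≤ n := hmain
      rw [hy, div_mul_div_comm, le_div_iff₀ (by positivity)]
      nlinarith
  · have hL := L_le (by omega) hx hx2 (hlo.trans hya) hy7
    set L := a * (x - 1) with hLdef
    have hL0 : 0 < L := mul_pos (by linarith) (by linarith)
    have hkey : 32 * l * Real.log y ^ 2 ≤ y := by
      rcases le_or_gt y (l ^ 2) with hyl2 | hyl2
      · have h1 : Real.log y ≤ 2 * Real.log l := by
          have := Real.log_le_log hy0 hyl2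
          rwa [Real.log_pow] at this
        have h0 : 0 ≤ Real.log y := by linarith
        calc 32 * l * Real.log y ^ 2 ≤ 32 * l * (2 * Real.log l) ^ 2 := by gcongr
          _ = 128 * (l * Real.log l ^ 2) := by ring
          _ ≤ y := hc
      · apply sq_le_help _ hy0.le
        calc (32 * l * Real.log y ^ 2) ^ 2 = l ^ 2 * (1024 * Real.log y ^ 4) := by ring
          _ ≤ y * y := by gcongr
          _ = y ^ 2 := by ring
    have h2 : 2 * l * L ^ 2 ≤ y := by
      calc 2 * l * L ^ 2 ≤ 2 * l * (4 * Real.log y) ^ 2 := by gcongr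
        _ = 32 * l * Real.log y ^ 2 := by ring
        _ ≤ y := hkey
    have h6 : 6 * l ≤ y := by
      have : 1 ≤ Real.log l ^ 2 := one_le_pow₀ hl
      nlinarith
    refine ⟨min 1 (3 / L ^ 2), by positivity, min_le_left _ _, ?_, ?_⟩
    · calc min 1 (3 / L ^ 2) * L ^ 2 ≤ 3 / L ^ 2 * L ^ 2 := by gcongr; exact min_le_right _ _
        _ = 3 := by field_simp
        _ ≤ 3 * x := by linarith
    · rcases min_choice 1 (3 / L ^ 2) with h | h
      · rw [h]; linarith
      · rw [h, mul_div_assoc', le_div_iff₀ (by positivity)]; linarith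

section seq
variable (α : ℕ → ℕ) (x : ℕ → ℝ)

lemma ev_ratio (hlimsup : ∃ c : ℝ, c < 1 / (12 * Real.pi ^ 2 * Real.exp 1) ∧
      ∀ᶠ n : ℕ in atTop,
        (α n : ℝ) / n * Real.log n * (Real.log (Real.log n)) ^ 2 ≤ c) (hα1 : ∀ n, 1 ≤ α n) :
    ∀ᶠ n : ℕ in atTop, 128 * (Real.log n * Real.log (Real.log n) ^ 2) ≤ n / α n := by
  obtain ⟨c, hc, h⟩ := hlimsup
  have hc' : c ≤ 1 / 128 := by
    refine hc.le.trans ?_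
    have h1 := Real.pi_gt_three
    have h2 := Real.add_one_le_exp 1
    apply one_div_le_one_div_of_le (by norm_num)
    nlinarith [mul_self_nonneg (Real.pi - 3), mul_nonneg (sq_nonneg Real.pi) (by linarith : 0 ≤ Real.exp 1 - 2)]
  filter_upwards [h, eventually_ge_atTop 1] with n hn hn1
  have ha : (0 : ℝ) < α n := by exact_mod_cast hα1 n
  have hn' : (0 : ℝ) < n := by exact_mod_cast hn1
  rw [le_div_iff₀ ha]
  have h3 := hn.trans hc'
  have h4 : (α n : ℝ) / n * Real.log n * (Real.log (Real.log n)) ^ 2 * n ≤ 1 / 128 * n := by gcongr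
  have h5 : (α n : ℝ) / n * Real.log n * (Real.log (Real.log n)) ^ 2 * n =
    α n * Real.log n * (Real.log (Real.log n)) ^ 2 := by field_simp
  rw [h5] at h4
  linarith

lemma loglog_ge : ∀ᶠ n : ℕ in atTop, 1 ≤ Real.log (Real.log n) :=
  ((Real.tendsto_log_atTop.comp Real.tendsto_log_atTop).comp
    tendsto_natCast_atTop_atTop).eventually_ge_atTop 1

lemma log_atTop : Tendsto (fun n : ℕ => Real.log n) atTop atTop :=
  Real.tendsto_log_atTop.comp tendsto_natCast_atTop_atTop

lemma ratio_atTop (h : ∀ᶠ n : ℕ in atTop, 128 * (Real.log n * Real.log (Real.log n) ^ 2) ≤ n / α n) :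
    Tendsto (fun n : ℕ => (n : ℝ) / α n) atTop atTop := by
  apply tendsto_atTop_mono' _ _ log_atTop
  filter_upwards [h, loglog_ge, log_atTop.eventually_ge_atTop 0] with n h1 h2 h3
  have : 1 ≤ Real.log (Real.log n) ^ 2 := one_le_pow₀ h2
  nlinarith

lemma x_gt_one (h : Tendsto (fun n : ℕ => (n : ℝ) / α n) atTop atTop) (hα1 : ∀ n, 1 ≤ α n)
    (hx : ∀ n, 1 ≤ n → 0 < x n ∧ lo (α n) (x n) = n) :
    ∀ᶠ n : ℕ in atTop, 1 < x n := by
  filter_upwards [h.eventually_gt_atTop 1, eventually_ge_atTop 1] with n h1 h2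
  by_contra hc
  push Not at hc
  obtain ⟨h3, h4⟩ := hx n h2
  have ha : (0 : ℝ) < α n := by exact_mod_cast hα1 n
  rw [lt_div_iff₀ ha] at h1
  have : lo (α n) (x n) ≤ α n := by
    unfold lo
    calc ∑ j ∈ Icc 1 (α n), x n ^ j ≤ ∑ j ∈ Icc 1 (α n), (1 : ℝ) := by
          apply Finset.sum_le_sum
          intro j _
          exact pow_le_one₀ h3.le hc
      _ = α n := by simp
  linarith

lemma key_seq (h : ∀ᶠ n : ℕ in atTop, 128 * (Real.log n * Real.log (Real.log n) ^ 2) ≤ n / α n)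
    (hα1 : ∀ n, 1 ≤ α n) (hliminf : ∀ᶠ n in atTop, 4 ≤ α n)
    (hx : ∀ n, 1 ≤ n → 0 < x n ∧ lo (α n) (x n) = n) :
    ∀ᶠ n : ℕ in atTop, ∃ κ : ℝ, 0 ≤ κ ∧ κ ≤ 1 ∧ κ * (α n * (x n - 1)) ^ 2 ≤ 3 * x n ∧
      6 * Real.log n ≤ lo (α n) (x n) / α n * κ := by
  have hr := ratio_atTop α h
  have e1 : ∀ᶠ y : ℝ in atTop, 1024 * Real.log y ^ 4 ≤ y := by
    have := (Real.isLittleO_pow_log_id_atTop (n := 4)).bound (show (0 : ℝ) < 1 / 1024 by norm_num)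
    filter_upwards [this, eventually_ge_atTop 1] with y h1 h2
    have h3 : 0 ≤ Real.log y := Real.log_nonneg h2
    simp only [id, norm_pow, Real.norm_of_nonneg h3, Real.norm_of_nonneg (zero_le_one.trans h2)] at h1
    linarith
  have e2 : ∀ᶠ y : ℝ in atTop, 65536 * Real.log y ^ 16 ≤ y := by
    have := (Real.isLittleO_pow_log_id_atTop (n := 16)).bound (show (0 : ℝ) < 1 / 65536 by norm_num)
    filter_upwards [this, eventually_ge_atTop 1] with y h1 h2
    have h3 : 0 ≤ Real.log y := Real.log_nonneg h2
    simp only [id, norm_pow, Real.norm_of_nonneg h3, Real.norm_of_nonneg (zero_le_one.trans h2)] at h1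
    linarith
  filter_upwards [h, hliminf, x_gt_one α x hr hα1 hx, loglog_ge, hr.eventually_ge_atTop (Real.exp 7),
    hr.eventually e1, (tendsto_natCast_atTop_atTop (R := ℝ)).eventually e2, eventually_ge_atTop 2]
    with n h1 h2 h3 h4 h5 h6 h7 h8
  exact key_single h2 h3 (hx n (by omega)).2 h4 h1 h5 h6 h7 h8

lemma vv_ge {a : ℕ} {x : ℝ} (ha : 4 ≤ a) (hx : 1 ≤ x) :
    x / 4 ≤ vv a x ∧ Real.log (a / 4) / 4 ≤ vv a x := by
  have hx0 : 0 < x := by linarith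
  have ha' : (4 : ℝ) ≤ a := by exact_mod_cast ha
  have hb := be_le (a := a) (by omega) hx
  have h1 : ∑ j ∈ Icc 1 (a / 4), x ^ j / j / 4 ≤ vv a x := by
    rw [vv_eq (by omega) hx0]
    refine le_trans ?_ (Finset.sum_le_sum_of_subset_of_nonneg (s := Icc 1 (a / 4)) ?_ ?_)
    · apply Finset.sum_le_sum
      intro j hj
      rw [mem_Icc] at hj
      have hj4 : 4 * (j : ℝ) ≤ a := by
        have : 4 * j ≤ a := by omega
        exact_mod_cast this
      have hp : 0 ≤ x ^ j / j := by positivity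
      have h2 : j * be a x ≤ 1 / 2 := by
        calc j * be a x ≤ j * (2 / (a + 1)) := by gcongr
          _ ≤ 1 / 2 := by
            rw [mul_div_assoc', div_le_iff₀ (by linarith)]; linarith
      have h3 : 1 / 4 ≤ (1 - j * be a x) ^ 2 := by nlinarith
      calc x ^ j / j / 4 = x ^ j / j * (1 / 4) := by ring
        _ ≤ _ := by gcongr
    · apply Finset.Icc_subset_Icc le_rfl; omega
    · intro j _ _
      positivity
  constructor
  · refine le_trans ?_ h1
    have := Finset.single_le_sum (s := Icc 1 (a / 4)) (f := fun j : ℕ => x ^ j / j / 4)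
      (fun j _ => by positivity) (show 1 ∈ Icc 1 (a / 4) by simp; omega)
    simpa using this
  · refine le_trans ?_ h1
    have h2 : Real.log (a / 4) ≤ ((harmonic (a / 4) : ℚ) : ℝ) := by
      refine le_trans ?_ (log_add_one_le_harmonic (a / 4))
      apply Real.log_le_log (by linarith)
      have : a ≤ 4 * (a / 4 + 1) := by omega
      have : (a : ℝ) ≤ 4 * (((a / 4 : ℕ) : ℝ) + 1) := by exact_mod_cast this
      push_cast
      linarith
    rw [harmonic_eq_sum_Icc] at h2
    push_cast at h2
    calc Real.log (a / 4) / 4 ≤ (∑ j ∈ Icc 1 (a / 4), ((j : ℝ))⁻¹) / 4 := by gcongr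
      _ = ∑ j ∈ Icc 1 (a / 4), ((j : ℝ))⁻¹ / 4 := by rw [Finset.sum_div]
      _ ≤ _ := by
        apply Finset.sum_le_sum
        intro j _
        have : 1 ≤ x ^ j := one_le_pow₀ hx
        rw [inv_eq_one_div]
        gcongr

lemma vv_atTop (hr : Tendsto (fun n : ℕ => (n : ℝ) / α n) atTop atTop)
    (hα1 : ∀ n, 1 ≤ α n) (hliminf : ∀ᶠ n in atTop, 4 ≤ α n)
    (hx : ∀ n, 1 ≤ n → 0 < x n ∧ lo (α n) (x n) = n) :
    Tendsto (fun n => vv (α n) (x n)) atTop atTop := by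
  rw [tendsto_atTop]
  intro M0
  set M := max (4 * M0) 1 with hM
  obtain ⟨K, hK⟩ := exists_nat_gt (4 * Real.exp M)
  filter_upwards [hliminf, x_gt_one α x hr hα1 hx, eventually_ge_atTop 1,
    (tendsto_natCast_atTop_atTop (R := ℝ)).eventually_gt_atTop (K * M ^ K)] with n h1 h2 h3 h4
  have hM1 : 4 * M0 ≤ M := le_max_left _ _
  have hM2 : 1 ≤ M := le_max_right _ _
  obtain ⟨v1, v2⟩ := vv_ge h1 h2.le
  by_cases hxM : M ≤ x n
  · linarith
  push Not at hxM
  by_cases haM : M ≤ Real.log (α n / 4)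
  · linarith
  push Not at haM
  exfalso
  have ha0 : (0 : ℝ) < α n / 4 := by
    have : (0 : ℝ) < α n := by exact_mod_cast hα1 n
    positivity
  rw [Real.log_lt_iff_lt_exp ha0] at haM
  have haK : (α n : ℝ) ≤ K := by linarith
  have haK' : α n ≤ K := by exact_mod_cast haK
  have : (n : ℝ) ≤ K * M ^ K := by
    rw [← (hx n h3).2]
    unfold lo
    calc ∑ j ∈ Icc 1 (α n), x n ^ j ≤ ∑ j ∈ Icc 1 (α n), M ^ K := by
          apply Finset.sum_le_sum
          intro j hj
          rw [mem_Icc] at hj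
          calc x n ^ j ≤ M ^ j := by gcongr
            _ ≤ M ^ K := pow_le_pow_right₀ hM2 (by omega)
      _ = α n * M ^ K := by simp
      _ ≤ K * M ^ K := by gcongr
  linarith

end seq
end CLTproof

namespace CLTproof
open Finset Filter Complex MeasureTheory intervalIntegral Topology

lemma gauss_int (s : ℝ) : ∫ u : ℝ, Complex.exp (((-(s ^ 2 + u ^ 2) / 2 : ℝ) : ℂ)) =
    ((Real.sqrt (2 * Real.pi) * Real.exp (-s ^ 2 / 2) : ℝ) : ℂ) := by
  have h1 : ∀ u : ℝ, Complex.exp (((-(s ^ 2 + u ^ 2) / 2 : ℝ) : ℂ)) =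
      ((Real.exp (-s ^ 2 / 2) * Real.exp (-(1 / 2) * u ^ 2) : ℝ) : ℂ) := by
    intro u
    rw [← Complex.ofReal_exp, ← Real.exp_add]
    congr 2; ring
  simp_rw [h1]
  rw [integral_complex_ofReal, MeasureTheory.integral_const_mul, integral_gaussian]
  congr 1
  rw [mul_comm]
  congr 2
  ring

section seq
variable (α : ℕ → ℕ) (x : ℕ → ℝ)

lemma lam_ratio (hr : Tendsto (fun n : ℕ => (n : ℝ) / α n) atTop atTop)
    (hα1 : ∀ n, 1 ≤ α n)
    (hx : ∀ n, 1 ≤ n → 0 < x n ∧ lo (α n) (x n) = n) :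
    Tendsto (fun n => Real.sqrt (lt (α n) (x n)) / α n) atTop atTop := by
  have h1 : Tendsto (fun n : ℕ => Real.sqrt ((n : ℝ) / α n / 2)) atTop atTop :=
    Real.tendsto_sqrt_atTop.comp (hr.atTop_div_const (by norm_num))
  apply tendsto_atTop_mono' _ _ h1
  filter_upwards [x_gt_one α x hr hα1 hx, eventually_ge_atTop 1] with n h2 h3
  have ha : (0 : ℝ) < α n := by exact_mod_cast hα1 n
  apply Real.sqrt_le_iff.2
  refine ⟨by positivity, ?_⟩
  rw [div_pow, Real.sq_sqrt (lt_pos (hα1 n) (by linarith)).le]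
  have h4 := lt_ge (a := α n) h2.le
  rw [(hx n h3).2] at h4
  rw [div_div, div_le_div_iff₀ (by positivity) (by positivity)]
  have hn0 : (0 : ℝ) ≤ n := by positivity
  nlinarith [mul_pos ha ha, mul_nonneg hn0 ha.le]

lemma inner_lim (hr : Tendsto (fun n : ℕ => (n : ℝ) / α n) atTop atTop)
    (hα1 : ∀ n, 1 ≤ α n) (hliminf : ∀ᶠ n in atTop, 4 ≤ α n)
    (hx : ∀ n, 1 ≤ n → 0 < x n ∧ lo (α n) (x n) = n) (s : ℝ) :
    Tendsto (fun n => ∫ u in (-(3 * (Real.sqrt (lt (α n) (x n)) / α n)))..(3 * (Real.sqrt (lt (α n) (x n)) / α n)),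
      Ef (α n) (x n) (s / Real.sqrt (vv (α n) (x n)))
        (u / Real.sqrt (lt (α n) (x n)) - s / Real.sqrt (vv (α n) (x n)) * be (α n) (x n)))
      atTop (𝓝 ((Real.sqrt (2 * Real.pi) * Real.exp (-s ^ 2 / 2) : ℝ) : ℂ)) := by
  have hv := vv_atTop α x hr hα1 hliminf hx
  have hR := lam_ratio α x hr hα1 hx
  have hx1 := x_gt_one α x hr hα1 hx
  have ht : Tendsto (fun n => |s| / Real.sqrt (vv (α n) (x n))) atTop (𝓝 0) :=
    (Real.tendsto_sqrt_atTop.comp hv).const_div_atTop _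
  have ha0 : ∀ n, (0 : ℝ) < α n := fun n => by exact_mod_cast hα1 n
  set R := fun n => Real.sqrt (lt (α n) (x n)) / α n with hRdef
  set G : ℕ → ℝ → ℂ := fun n u => Ef (α n) (x n) (s / Real.sqrt (vv (α n) (x n)))
        (u / Real.sqrt (lt (α n) (x n)) - s / Real.sqrt (vv (α n) (x n)) * be (α n) (x n)) with hG
  have hGc : ∀ n, Continuous (G n) := by
    intro n
    have := Ef_cont (α n) (x n) (s / Real.sqrt (vv (α n) (x n)))
    exact this.comp (by fun_prop)
  rw [← gauss_int]
  -- common facts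
  have hfacts : ∀ᶠ n in atTop, 0 < Real.sqrt (lt (α n) (x n)) ∧ 0 < R n ∧
      (∀ u : ℝ, α n * |u / Real.sqrt (lt (α n) (x n))| = |u| / R n) ∧
      (∀ u : ℝ, (s / Real.sqrt (vv (α n) (x n))) ^ 2 * vv (α n) (x n) +
        (u / Real.sqrt (lt (α n) (x n))) ^ 2 * lt (α n) (x n) = s ^ 2 + u ^ 2) ∧
      |s / Real.sqrt (vv (α n) (x n))| = |s| / Real.sqrt (vv (α n) (x n)) := by
    filter_upwards [hx1, hv.eventually_gt_atTop 0] with n h1 h2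
    have hl := lt_pos (hα1 n) (by linarith : 0 < x n)
    have hls := Real.sqrt_pos.2 hl
    refine ⟨hls, div_pos hls (ha0 n), ?_, ?_, ?_⟩
    · intro u
      rw [abs_div, abs_of_pos hls]
      simp only [hRdef]
      have := (ha0 n).ne'
      field_simp
    · intro u
      rw [div_pow, div_pow, Real.sq_sqrt hl.le, Real.sq_sqrt h2.le]
      field_simp
    · rw [abs_div, abs_of_pos (Real.sqrt_pos.2 h2)]
  have hconv : (fun n => ∫ u in (-(3 * R n))..(3 * R n), G n u) =ᶠ[atTop]
      (fun n => ∫ u, (Set.Ioc (-(3 * R n)) (3 * R n)).indicator (G n) u) := by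
    filter_upwards [hR.eventually_ge_atTop 0] with n hn
    rw [MeasureTheory.integral_indicator measurableSet_Ioc, intervalIntegral.integral_of_le (by linarith)]
  rw [tendsto_congr' hconv]
  apply MeasureTheory.tendsto_integral_filter_of_dominated_convergence
    (fun u => Real.exp (-(2 / Real.pi ^ 2) * u ^ 2))
  · exact Eventually.of_forall fun n =>
      ((hGc n).aestronglyMeasurable).indicator measurableSet_Ioc
  · filter_upwards [hx1, hfacts, ht.eventually_le_const (show (0 : ℝ) < 1 / 10 by norm_num)]
      with n h1 ⟨f1, f2, f3, f4, f5⟩ h2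
    refine Eventually.of_forall fun u => ?_
    by_cases hu : u ∈ Set.Ioc (-(3 * R n)) (3 * R n)
    · rw [Set.indicator_of_mem hu]
      have hu' : |u| ≤ 3 * R n := abs_le.2 ⟨hu.1.le, hu.2⟩
      refine (Ef_inner (hα1 n) h1.le _ _ ?_).trans ?_
      · rw [f3, f5]
        have : |u| / R n ≤ 3 := by rw [div_le_iff₀ f2]; exact hu'
        have := Real.pi_gt_d2
        linarith
      · rw [f4]
        apply Real.exp_le_exp.2
        have : 0 ≤ 2 / Real.pi ^ 2 * s ^ 2 := by positivity
        linarith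
    · rw [Set.indicator_of_notMem hu, norm_zero]
      positivity
  · exact integrable_exp_neg_mul_sq (by positivity)
  · refine Eventually.of_forall fun u => ?_
    have hz : Tendsto (fun n => |s| / Real.sqrt (vv (α n) (x n)) + |u| / R n) atTop (𝓝 0) := by
      simpa using ht.add (hR.const_div_atTop |u|)
    -- extract error
    have hex : ∀ᶠ n in atTop, ∃ ε : ℂ, ‖ε‖ ≤ (|s| / Real.sqrt (vv (α n) (x n)) + |u| / R n) *
        (s ^ 2 + u ^ 2) * Real.exp 1 ∧
        (Set.Ioc (-(3 * R n)) (3 * R n)).indicator (G n) u =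
          Complex.exp (((-(s ^ 2 + u ^ 2) / 2 : ℝ) : ℂ) + ε) := by
      filter_upwards [hx1, hfacts, hz.eventually_le_const (show (0 : ℝ) < 1 by norm_num),
        hR.eventually_gt_atTop |u|] with n h1 ⟨f1, f2, f3, f4, f5⟩ h2 h3
      have hu : u ∈ Set.Ioc (-(3 * R n)) (3 * R n) := by
        have := abs_lt.1 h3
        constructor <;> linarith
      rw [Set.indicator_of_mem hu]
      have := Ef_taylor (hα1 n) h1.le (s / Real.sqrt (vv (α n) (x n)))
        (u / Real.sqrt (lt (α n) (x n))) (by rw [f3, f5]; exact h2)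
      rw [f3, f4, f5] at this
      exact this
    have hex' : ∃ ε : ℕ → ℂ, ∀ᶠ n in atTop, ‖ε n‖ ≤ (|s| / Real.sqrt (vv (α n) (x n)) + |u| / R n) *
        (s ^ 2 + u ^ 2) * Real.exp 1 ∧
        (Set.Ioc (-(3 * R n)) (3 * R n)).indicator (G n) u =
          Complex.exp (((-(s ^ 2 + u ^ 2) / 2 : ℝ) : ℂ) + ε n) := by
      rw [eventually_atTop] at hex
      obtain ⟨N, hN⟩ := hex
      choose! ε hε using hN
      exact ⟨ε, eventually_atTop.2 ⟨N, hε⟩⟩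
    obtain ⟨ε, hε⟩ := hex'
    have hε0 : Tendsto ε atTop (𝓝 0) := by
      apply squeeze_zero_norm' (hε.mono fun n h => h.1)
      simpa using (hz.mul_const (s ^ 2 + u ^ 2)).mul_const (Real.exp 1)
    rw [tendsto_congr' (hε.mono fun n h => h.2)]
    have := ((tendsto_const_nhds (x := (((-(s ^ 2 + u ^ 2) / 2 : ℝ) : ℂ)))).add hε0).cexp
    simpa using this

lemma main_lim (hr : Tendsto (fun n : ℕ => (n : ℝ) / α n) atTop atTop)
    (hα1 : ∀ n, 1 ≤ α n) (hliminf : ∀ᶠ n in atTop, 4 ≤ α n)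
    (hx : ∀ n, 1 ≤ n → 0 < x n ∧ lo (α n) (x n) = n)
    (hκ : ∀ᶠ n : ℕ in atTop, ∃ κ : ℝ, 0 ≤ κ ∧ κ ≤ 1 ∧ κ * (α n * (x n - 1)) ^ 2 ≤ 3 * x n ∧
      6 * Real.log n ≤ lo (α n) (x n) / α n * κ) (s : ℝ) :
    Tendsto (fun n => (Real.sqrt (lt (α n) (x n)) : ℂ) *
      Iint (α n) (x n) (s / Real.sqrt (vv (α n) (x n)))) atTop
      (𝓝 ((Real.sqrt (2 * Real.pi) * Real.exp (-s ^ 2 / 2) : ℝ) : ℂ)) := by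
  have hv := vv_atTop α x hr hα1 hliminf hx
  have hx1 := x_gt_one α x hr hα1 hx
  have ht : Tendsto (fun n => |s| / Real.sqrt (vv (α n) (x n))) atTop (𝓝 0) :=
    (Real.tendsto_sqrt_atTop.comp hv).const_div_atTop _
  have hin := inner_lim α x hr hα1 hliminf hx s
  have ha0 : ∀ n, (0 : ℝ) < α n := fun n => by exact_mod_cast hα1 n
  refine tendsto_of_tendsto_of_dist hin ?_
  have hb : Tendsto (fun n : ℕ => 4 * Real.pi * Real.exp 4 / Real.sqrt n) atTop (𝓝 0) :=
    (Real.tendsto_sqrt_atTop.comp tendsto_natCast_atTop_atTop).const_div_atTop _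
  refine squeeze_zero' (Eventually.of_forall fun _ => dist_nonneg) ?_ hb
  filter_upwards [hx1, hv.eventually_gt_atTop 0, hliminf, hκ, hr.eventually_ge_atTop 1,
    ht.eventually_le_const (show (0 : ℝ) < 1 / 10 by norm_num), eventually_ge_atTop 1]
    with n h1 h2 h3 ⟨κ, k0, k1, k2, k3⟩ h4 h5 h6
  have hx0 : 0 < x n := by linarith
  have hl := lt_pos (hα1 n) hx0
  have hls := Real.sqrt_pos.2 hl
  have hn0 : (0 : ℝ) < n := by exact_mod_cast h6
  set t := s / Real.sqrt (vv (α n) (x n)) with htdef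
  have ht' : |t| ≤ 1 / 10 := by
    rw [htdef, abs_div, abs_of_pos (Real.sqrt_pos.2 h2)]; exact h5
  set b := be (α n) (x n) with hbdef
  have hb0 : 0 ≤ b := be_nonneg (hα1 n) hx0
  have hb1 : b ≤ 2 / α n := (be_le (hα1 n) h1.le).trans (by have := ha0 n; gcongr; linarith)
  have htb : |t * b| ≤ 0.2 / α n := by
    rw [abs_mul, abs_of_nonneg hb0]
    calc |t| * b ≤ 1 / 10 * (2 / α n) := by gcongr
      _ = _ := by ring
  have h4a : (4 : ℝ) ≤ α n := by exact_mod_cast h3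
  have hsmall : 3.2 / (α n : ℝ) ≤ 0.8 := by
    rw [div_le_iff₀ (ha0 n)]; linarith
  have h34 : 3.2 / (α n : ℝ) = 3 / α n + 0.2 / α n := by ring
  have hpi := Real.pi_gt_three
  rw [intervalIntegral.integral_comp_div_sub _ hls.ne']
  set A := -(3 * (Real.sqrt (lt (α n) (x n)) / α n)) / Real.sqrt (lt (α n) (x n)) - t * b with hA
  set B := (3 * (Real.sqrt (lt (α n) (x n)) / α n)) / Real.sqrt (lt (α n) (x n)) - t * b with hB
  have hA' : A = -(3 / α n) - t * b := by
    rw [hA]; have := (ha0 n).ne'; field_simp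
  have hB' : B = 3 / α n - t * b := by
    rw [hB]; have := (ha0 n).ne'; field_simp
  have htb2 := abs_le.1 htb
  have hAp : -Real.pi ≤ A := by rw [hA']; linarith
  have hBp : B ≤ Real.pi := by rw [hB']; linarith
  have hintg : ∀ p q : ℝ, IntervalIntegrable (fun θ => Ef (α n) (x n) t θ) volume p q :=
    fun p q => (Ef_cont _ _ _).intervalIntegrable _ _
  have hsplit : Iint (α n) (x n) t = (∫ θ in (-Real.pi)..A, Ef (α n) (x n) t θ) +
      (∫ θ in A..B, Ef (α n) (x n) t θ) + ∫ θ in B..Real.pi, Ef (α n) (x n) t θ := by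
    unfold Iint
    rw [integral_add_adjacent_intervals (hintg _ _) (hintg _ _),
      integral_add_adjacent_intervals (hintg _ _) (hintg _ _)]
  have h28 : 2.8 / (α n : ℝ) = 3 / α n - 0.2 / α n := by ring
  have h30 : 0 < 3 / (α n : ℝ) := div_pos (by norm_num) (ha0 n)
  have hbound : ∀ θ : ℝ, |θ| ≤ Real.pi → 2.8 / (α n : ℝ) ≤ |θ| →
      ‖Ef (α n) (x n) t θ‖ ≤ Real.exp (4 - 3 / 2 * Real.log n) := by
    intro θ q1 q2
    rw [div_le_iff₀ (ha0 n)] at q2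
    exact Ef_outer h3 h1 k0 k1 k2 k3 t θ q1 (by linarith)
  have ho1 : ‖∫ θ in (-Real.pi)..A, Ef (α n) (x n) t θ‖ ≤
      Real.exp (4 - 3 / 2 * Real.log n) * (2 * Real.pi) := by
    refine (intervalIntegral.norm_integral_le_of_norm_le_const
      (C := Real.exp (4 - 3 / 2 * Real.log n)) ?_).trans ?_
    · intro θ hθ
      rw [Set.uIoc_of_le hAp] at hθ
      have hθ2 := hθ.2
      rw [hA'] at hθ2
      have hneg : θ < 0 := by
        have : 0 < 2.8 / (α n : ℝ) := div_pos (by norm_num) (ha0 n)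
        linarith
      apply hbound
      · rw [abs_of_neg hneg]; linarith [hθ.1]
      · rw [abs_of_neg hneg]; linarith
    · gcongr
      rw [abs_le]; constructor <;> linarith
  have ho2 : ‖∫ θ in B..Real.pi, Ef (α n) (x n) t θ‖ ≤
      Real.exp (4 - 3 / 2 * Real.log n) * (2 * Real.pi) := by
    refine (intervalIntegral.norm_integral_le_of_norm_le_const
      (C := Real.exp (4 - 3 / 2 * Real.log n)) ?_).trans ?_
    · intro θ hθ
      rw [Set.uIoc_of_le hBp] at hθ
      have hθ1 := hθ.1
      rw [hB'] at hθ1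
      have hpos : 0 < θ := by
        have : 0 < 2.8 / (α n : ℝ) := div_pos (by norm_num) (ha0 n)
        linarith
      apply hbound
      · rw [abs_of_pos hpos]; exact hθ.2
      · rw [abs_of_pos hpos]; linarith
    · gcongr
      rw [abs_le]; constructor <;> linarith
  have hLn : Real.sqrt (lt (α n) (x n)) ≤ n := by
    apply Real.sqrt_le_iff.2
    refine ⟨hn0.le, ?_⟩
    have := lt_le (a := α n) hx0
    rw [(hx n h6).2] at this
    rw [le_div_iff₀ (ha0 n)] at h4
    nlinarith
  have hexp : Real.exp (4 - 3 / 2 * Real.log n) = Real.exp 4 / (n * Real.sqrt n) := by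
    rw [Real.exp_sub]
    congr 1
    rw [show 3 / 2 * Real.log n = Real.log n + Real.log n / 2 by ring, Real.exp_add, Real.exp_log hn0,
      ← Real.log_sqrt hn0.le, Real.exp_log (Real.sqrt_pos.2 hn0)]
  rw [hsplit, dist_comm, dist_eq_norm, Complex.real_smul]
  rw [show (Real.sqrt (lt (α n) (x n)) : ℂ) * ((∫ θ in (-Real.pi)..A, Ef (α n) (x n) t θ) +
      (∫ θ in A..B, Ef (α n) (x n) t θ) + ∫ θ in B..Real.pi, Ef (α n) (x n) t θ) -
      (Real.sqrt (lt (α n) (x n)) : ℂ) * (∫ θ in A..B, Ef (α n) (x n) t θ) =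
      (Real.sqrt (lt (α n) (x n)) : ℂ) * ((∫ θ in (-Real.pi)..A, Ef (α n) (x n) t θ) +
        ∫ θ in B..Real.pi, Ef (α n) (x n) t θ) by ring]
  rw [norm_mul, Complex.norm_real, Real.norm_of_nonneg hls.le]
  calc Real.sqrt (lt (α n) (x n)) * ‖(∫ θ in (-Real.pi)..A, Ef (α n) (x n) t θ) +
        ∫ θ in B..Real.pi, Ef (α n) (x n) t θ‖
      ≤ n * (Real.exp (4 - 3 / 2 * Real.log n) * (2 * Real.pi) +
          Real.exp (4 - 3 / 2 * Real.log n) * (2 * Real.pi)) := by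
        gcongr
        exact (norm_add_le _ _).trans (add_le_add ho1 ho2)
    _ = 4 * Real.pi * Real.exp 4 / Real.sqrt n := by
        rw [hexp]
        have := Real.sqrt_pos.2 hn0
        field_simp
        ring

end seq
end CLTproof

namespace CLTproof
open Finset Filter Complex MeasureTheory Topology

lemma levy {ι : ℕ → Type} (S : ∀ n, Finset (ι n)) (hS : ∀ n, (S n).Nonempty)
    (Y : ∀ n, ι n → ℝ)
    (hc : ∀ s : ℝ, Tendsto (fun n => (∑ σ ∈ S n, Complex.exp (((s * Y n σ : ℝ) : ℂ) * I)) /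
      ((S n).card : ℂ)) atTop (𝓝 ((Real.exp (-s ^ 2 / 2) : ℝ) : ℂ))) (z : ℝ)
    [∀ n, DecidablePred (fun σ => Y n σ ≤ z)] :
    Tendsto (fun n => (((S n).filter (fun σ => Y n σ ≤ z)).card : ℝ) / ((S n).card : ℝ)) atTop
      (𝓝 ((Real.sqrt (2 * Real.pi))⁻¹ * ∫ t in Set.Iic z, Real.exp (-t ^ 2 / 2))) := by
  have hcard : ∀ n, ((S n).card : ENNReal) ≠ 0 := fun n => by
    exact_mod_cast (hS n).card_pos.ne'
  set M : ∀ n, Measure ℝ := fun n =>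
    ((S n).card : ENNReal)⁻¹ • ∑ σ ∈ S n, Measure.dirac (Y n σ) with hM
  have hP : ∀ n, IsProbabilityMeasure (M n) := by
    intro n
    constructor
    simp only [hM, Measure.smul_apply, Measure.finsetSum_apply, measure_univ, smul_eq_mul,
      sum_const, nsmul_eq_mul, mul_one]
    exact ENNReal.inv_mul_cancel (hcard n) (ENNReal.natCast_ne_top _)
  let μ : ℕ → ProbabilityMeasure ℝ := fun n => ⟨M n, hP n⟩
  let γ : ProbabilityMeasure ℝ := ⟨ProbabilityTheory.gaussianReal 0 1, inferInstance⟩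
  have hlim : Tendsto μ atTop (𝓝 γ) := by
    rw [ProbabilityMeasure.tendsto_iff_tendsto_charFun]
    intro s
    have e1 : charFun (γ : Measure ℝ) s = ((Real.exp (-s ^ 2 / 2) : ℝ) : ℂ) := by
      change charFun (ProbabilityTheory.gaussianReal 0 1) s = _
      rw [ProbabilityTheory.charFun_gaussianReal]
      push_cast
      congr 1
      simp; ring
    rw [e1]
    refine (hc s).congr fun n => ?_
    change _ = charFun (M n) s
    rw [charFun_apply_real, hM]
    simp only
    rw [integral_smul_measure, integral_finsetSum_measure]
    · simp only [integral_dirac, ENNReal.toReal_inv, ENNReal.toReal_natCast]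
      rw [Complex.real_smul, div_eq_inv_mul]
      push_cast
      rfl
    · intro i _
      exact integrable_dirac (by simp)
  have hfr : (γ : Measure ℝ) (frontier (Set.Iic z)) = 0 := by
    change ProbabilityTheory.gaussianReal 0 1 _ = 0
    have := ProbabilityTheory.nullSingletonClass_gaussianReal (μ := 0) (v := 1) one_ne_zero
    rw [frontier_Iic]
    exact measure_singleton z
  have h1 := ProbabilityMeasure.tendsto_measure_of_null_frontier_of_tendsto' hlim hfr
  have h2 := (ENNReal.tendsto_toReal (measure_ne_top _ _)).comp h1
  have e2 : ((γ : Measure ℝ) (Set.Iic z)).toReal =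
      (Real.sqrt (2 * Real.pi))⁻¹ * ∫ t in Set.Iic z, Real.exp (-t ^ 2 / 2) := by
    change (ProbabilityTheory.gaussianReal 0 1 _).toReal = _
    rw [ProbabilityTheory.gaussianReal_apply_eq_integral _ one_ne_zero, ENNReal.toReal_ofReal
      (integral_nonneg fun x => ProbabilityTheory.gaussianPDFReal_nonneg _ _ _)]
    simp only [ProbabilityTheory.gaussianPDFReal_def]
    rw [integral_const_mul]
    simp
  rw [e2] at h2
  refine h2.congr fun n => ?_
  change (M n (Set.Iic z)).toReal = _
  simp only [hM, Measure.smul_apply, Measure.finsetSum_apply, smul_eq_mul]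
  rw [ENNReal.toReal_mul, ENNReal.toReal_inv, ENNReal.toReal_natCast, div_eq_inv_mul]
  congr 1
  rw [Finset.card_filter]
  rw [ENNReal.toReal_sum (fun i _ => measure_ne_top _ _)]
  push_cast
  refine Finset.sum_congr rfl fun σ _ => ?_
  rw [Measure.dirac_apply' _ measurableSet_Iic]
  by_cases h : Y n σ ≤ z <;> simp [h]

lemma lt_id (a : ℕ) (x : ℝ) : lt a x * (x - 1) = a * x ^ (a + 1) - lo a x := by
  unfold lt lo
  induction a with
  | zero => simp
  | succ a ih =>
    rw [Finset.sum_Icc_succ_top (by omega), Finset.sum_Icc_succ_top (by omega), add_mul, ih]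
    push_cast
    ring

lemma v_id {n a : ℕ} {x : ℝ} (ha : 1 ≤ a) (hn : 1 ≤ n) (hx : 1 < x) (h : lo a x = n) :
    lz a x + (n : ℝ) * ((x - 1) * x / (1 - (a : ℝ) * (x - 1) - (a : ℝ) * x / n)) / x = vv a x := by
  have hn0 : (0 : ℝ) < n := by exact_mod_cast hn
  have hl := lt_pos ha (by linarith : 0 < x)
  have h1 := lt_id a x
  have h2 := lo_id a x
  rw [h] at h1 h2
  have hx1 : x - 1 ≠ 0 := by linarith
  have h3 : 1 - (a : ℝ) * (x - 1) - (a : ℝ) * x / n = -(lt a x * (x - 1)) / n := by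
    rw [h1]
    field_simp
    rw [pow_succ]
    linear_combination (-(a : ℝ)) * h2
  rw [h3]
  unfold vv
  rw [h]
  have : x ≠ 0 := by linarith
  field_simp
  ring

lemma S_nonempty (n a : ℕ) : (Snalpha n a).Nonempty :=
  ⟨1, by simp [Snalpha]⟩

lemma char_lim (α : ℕ → ℕ) (x : ℕ → ℝ) (hα1 : ∀ n, 1 ≤ α n)
    (hx : ∀ n, 1 ≤ n → 0 < x n ∧ lo (α n) (x n) = n)
    (hI : ∀ s : ℝ, Tendsto (fun n => (Real.sqrt (lt (α n) (x n)) : ℂ) *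
      Iint (α n) (x n) (s / Real.sqrt (vv (α n) (x n)))) atTop
      (𝓝 ((Real.sqrt (2 * Real.pi) * Real.exp (-s ^ 2 / 2) : ℝ) : ℂ))) (s : ℝ) :
    Tendsto (fun n => (∑ σ ∈ Snalpha n (α n), Complex.exp (((s * (((numCycles σ : ℝ) - lz (α n) (x n)) /
      Real.sqrt (vv (α n) (x n))) : ℝ) : ℂ) * I)) /
      ((Snalpha n (α n)).card : ℂ)) atTop (𝓝 ((Real.exp (-s ^ 2 / 2) : ℝ) : ℂ)) := by
  have h2pi : Real.sqrt (2 * Real.pi) ≠ 0 := (Real.sqrt_pos.2 (by positivity)).ne'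
  have h := (hI s).div (hI 0) (by simpa using h2pi)
  have e : ((Real.sqrt (2 * Real.pi) * Real.exp (-s ^ 2 / 2) : ℝ) : ℂ) /
      ((Real.sqrt (2 * Real.pi) * Real.exp (-0 ^ 2 / 2) : ℝ) : ℂ) =
      ((Real.exp (-s ^ 2 / 2) : ℝ) : ℂ) := by
    rw [← Complex.ofReal_div]
    congr 1
    simp
    field_simp
  rw [e] at h
  refine h.congr' ?_
  filter_upwards [eventually_ge_atTop 1] with n hn
  obtain ⟨h0, h1⟩ := hx n hn
  have p1 := perm_charfun n (α n) (hα1 n) (x n) (s / Real.sqrt (vv (α n) (x n))) h0 h1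
  have p0 := perm_charfun n (α n) (hα1 n) (x n) 0 h0 h1
  have hK : ((n.factorial * Real.exp (lz (α n) (x n)) / (2 * Real.pi * x n ^ n) : ℝ) : ℂ) ≠ 0 := by
    rw [Complex.ofReal_ne_zero]
    have : (0 : ℝ) < n.factorial := by exact_mod_cast n.factorial_pos
    positivity
  have hl : (Real.sqrt (lt (α n) (x n)) : ℂ) ≠ 0 := by
    rw [Complex.ofReal_ne_zero]
    exact (Real.sqrt_pos.2 (lt_pos (hα1 n) h0)).ne'
  have p0' := Eq.trans (a := ((Snalpha n (α n)).card : ℂ)) (by simp) p0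
  have e3 := Eq.trans (a := ∑ σ ∈ Snalpha n (α n), Complex.exp (((s * (((numCycles σ : ℝ) -
      lz (α n) (x n)) / Real.sqrt (vv (α n) (x n))) : ℝ) : ℂ) * I)) (by
    refine Finset.sum_congr rfl fun σ _ => ?_
    congr 3
    ring) p1
  simp only [Pi.div_apply, zero_div]
  rw [e3, p0', mul_div_mul_left _ _ hK, mul_div_mul_left _ _ hl]

end CLTproof

open scoped Classical in
open Filter Real in
/-- central limit theorem for the number of cycles of random
permutations without long cycles.  Assume `liminf α(n) ≥ 4` (i.e. eventually
`α(n) ≥ 4`) and `limsup (α(n)/n)·log n·(log log n)² < 1/(12π²e)` (i.e. the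
sequence is eventually bounded by some constant strictly below `1/(12π²e)`).
Let `x n` be the positive solution of `∑_{j=1}^{α(n)} x^j = n` (the saddle point
`x_{n,α}(1)`), and let `m n`, `v n` be defined as in the paper, where the
derivative `x'_{n,α}(1)` is given by its explicit formula.  Then for every real
`z`, the proportion of permutations `σ ∈ S_{n,α}` with
`C(σ) − m n ≤ z √(v n)` converges to `Φ(z) = (2π)^{-1/2} ∫_{-∞}^z e^{-t²/2} dt`. -/
theorem stmt_0 (α : ℕ → ℕ) (hα1 : ∀ n, 1 ≤ α n)
    (hliminf : ∀ᶠ n in atTop, 4 ≤ α n)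
    (hlimsup : ∃ c : ℝ, c < 1 / (12 * π ^ 2 * Real.exp 1) ∧
      ∀ᶠ n in atTop,
        (α n : ℝ) / n * Real.log n * (Real.log (Real.log n)) ^ 2 ≤ c)
    (x : ℕ → ℝ)
    (hx : ∀ n, 1 ≤ n → 0 < x n ∧ ∑ j ∈ Finset.Icc 1 (α n), x n ^ j = (n : ℝ))
    (m v : ℕ → ℝ)
    (hm : ∀ n, m n = ∑ j ∈ Finset.Icc 1 (α n), x n ^ j / j)
    (hv : ∀ n, v n = m n + (n : ℝ) *
      ((x n - 1) * x n / (1 - (α n : ℝ) * (x n - 1) - (α n : ℝ) * x n / n)) / x n)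
    (z : ℝ) :
    Tendsto (fun n =>
        (((Snalpha n (α n)).filter
            (fun σ => (numCycles σ : ℝ) - m n ≤ z * Real.sqrt (v n))).card : ℝ)
          / ((Snalpha n (α n)).card : ℝ))
      atTop
      (nhds ((Real.sqrt (2 * π))⁻¹ * ∫ t in Set.Iic z, Real.exp (-t ^ 2 / 2))) := by
  have hx' : ∀ n, 1 ≤ n → 0 < x n ∧ CLTproof.lo (α n) (x n) = n := hx
  have hq := CLTproof.ev_ratio α hlimsup hα1
  have hr := CLTproof.ratio_atTop α hq
  have hκ := CLTproof.key_seq α x hq hα1 hliminf hx'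
  have hvv := CLTproof.vv_atTop α x hr hα1 hliminf hx'
  have hI := CLTproof.main_lim α x hr hα1 hliminf hx' hκ
  have hx1 := CLTproof.x_gt_one α x hr hα1 hx'
  have hL := CLTproof.levy (fun n => Snalpha n (α n)) (fun n => CLTproof.S_nonempty n (α n))
    (fun n σ => ((numCycles σ : ℝ) - CLTproof.lz (α n) (x n)) /
      Real.sqrt (CLTproof.vv (α n) (x n)))
    (CLTproof.char_lim α x hα1 hx' hI) z
  refine hL.congr' ?_
  filter_upwards [hx1, hvv.eventually_gt_atTop 0, eventually_ge_atTop 1] with n h1 h2 h3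
  have hmn : m n = CLTproof.lz (α n) (x n) := hm n
  have hvn : v n = CLTproof.vv (α n) (x n) := by
    rw [hv n, hmn]
    exact CLTproof.v_id (hα1 n) h3 h1 (hx' n h3).2
  rw [hmn, hvn]
  congr 3
  refine Finset.filter_congr fun σ _ => ?_
  rw [div_le_iff₀ (Real.sqrt_pos.2 h2)]
end

section
/- Suppose α : ℕ → ℕ is such that there exist α₀, α₁ ∈ (0,1) with liminf_{n→∞} n^{−α₀}·α(n) = ∞ and limsup_{n→∞} n^{−α₁}·α(n) = 0. Then for every N ∈ ℕ, as n → ∞, m_{n,α} = (n/α(n))·∑_{k=0}^{N} k!/ξ(n/α(n))^k + o( (n/α(n))·ξ(n/α(n))^{−N} ); i.e. m_{n,α} has the asymptotic expansion (n/α(n))·∑_{k=0}^{∞} k!/ξ(n/α(n))^k. -/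
lemma aux_abel (x : ℝ) (f : ℝ → ℝ) (a : ℕ) :
    (x - 1) * ∑ j ∈ Finset.Icc 1 a, x ^ j * f j
      = ∑ j ∈ Finset.Icc 1 a, x ^ j * (f ((j : ℝ) - 1) - f j) + x ^ (a + 1) * f a - x * f 0 := by
  induction a with
  | zero => simp
  | succ a ih =>
    rw [Finset.sum_Icc_succ_top (by omega), Finset.sum_Icc_succ_top (by omega), mul_add, ih]
    have : ((a + 1 : ℕ) : ℝ) - 1 = a := by push_cast; ring
    rw [this]
    ring

lemma aux_pow (k : ℕ) : ∃ C : ℝ, 0 ≤ C ∧ ∀ t h : ℝ, 0 ≤ t → t ≤ 1 → 0 ≤ h → h ≤ 1 →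
    |(t + h) ^ (k + 1) - t ^ (k + 1) - (k + 1) * h * t ^ k| ≤ C * h ^ 2 := by
  induction k with
  | zero => exact ⟨0, le_rfl, fun t h _ _ _ _ => by simp⟩
  | succ k ih =>
    obtain ⟨C, hC, H⟩ := ih
    refine ⟨2 * C + (k + 1), by positivity, fun t h ht ht1 hh hh1 => ?_⟩
    have e : (t + h) ^ (k + 1 + 1) - t ^ (k + 1 + 1) - ((k + 1 : ℕ) + 1) * h * t ^ (k + 1)
      = (t + h) * ((t + h) ^ (k + 1) - t ^ (k + 1) - (k + 1) * h * t ^ k)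
        + (k + 1) * h ^ 2 * t ^ k := by push_cast; ring
    rw [e]
    refine (abs_add_le _ _).trans ?_
    rw [abs_mul, abs_of_nonneg (by positivity : 0 ≤ t + h),
      abs_of_nonneg (by positivity : 0 ≤ (k + 1 : ℝ) * h ^ 2 * t ^ k)]
    have h1 := H t h ht ht1 hh hh1
    have h2 : (t + h) * |(t + h) ^ (k + 1) - t ^ (k + 1) - (k + 1) * h * t ^ k|
      ≤ 2 * (C * h ^ 2) := mul_le_mul (by linarith) h1 (abs_nonneg _) (by norm_num)
    have h3 : (k + 1 : ℝ) * h ^ 2 * t ^ k ≤ (k + 1 : ℝ) * h ^ 2 * 1 :=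
      mul_le_mul_of_nonneg_left (pow_le_one₀ ht ht1) (by positivity)
    linarith

lemma aux_M (k : ℕ) : ∃ C : ℝ, 0 ≤ C ∧ ∀ (a : ℕ) (n x q : ℝ), 1 ≤ a → 0 < n → 0 < x → x ≤ 3 →
    ∑ j ∈ Finset.Icc 1 a, x ^ j = n → 1 ≤ (a : ℝ) * (x - 1) → 1 / (a : ℝ) ≤ q → a / n ≤ q →
    |(∑ j ∈ Finset.Icc 1 a, x ^ j * (1 - (j : ℝ) / a) ^ k) / n
      - k.factorial / ((a : ℝ) * (x - 1)) ^ k| ≤ C * q := by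
  induction k with
  | zero =>
    refine ⟨0, le_rfl, fun a n x q ha hn hx hx3 hs hμ hq hq2 => ?_⟩
    simp [hs, hn.ne']
  | succ k ih =>
    obtain ⟨C, hC, H⟩ := ih
    obtain ⟨D, hD, K⟩ := aux_pow k
    refine ⟨(k + 1) * C + D + 3, by positivity, fun a n x q ha hn hx hx3 hs hμ hq hq2 => ?_⟩
    have h1 := H a n x q ha hn hx hx3 hs hμ hq hq2
    have ha0 : (0 : ℝ) < a := by exact_mod_cast ha
    have ha1 : (1 : ℝ) ≤ a := by exact_mod_cast ha
    set μ := (a : ℝ) * (x - 1) with hμd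
    set p := ∑ j ∈ Finset.Icc 1 a, x ^ j * (1 - (j : ℝ) / a) ^ k with hp
    set p' := ∑ j ∈ Finset.Icc 1 a, x ^ j * (1 - (j : ℝ) / a) ^ (k + 1) with hp'
    have hab := aux_abel x (fun y => (1 - y / a) ^ (k + 1)) a
    simp only [div_self ha0.ne', sub_self, zero_div, sub_zero, one_pow, mul_one] at hab
    rw [zero_pow (by omega), mul_zero, add_zero, ← hp'] at hab
    have hE : |∑ j ∈ Finset.Icc 1 a, x ^ j *
        ((1 - ((j : ℝ) - 1) / a) ^ (k + 1) - (1 - (j : ℝ) / a) ^ (k + 1)) - (k + 1) / a * p|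
        ≤ D * (1 / a) ^ 2 * n := by
      rw [hp, Finset.mul_sum, ← Finset.sum_sub_distrib, ← hs, Finset.mul_sum]
      refine (Finset.abs_sum_le_sum_abs _ _).trans (Finset.sum_le_sum fun j hj => ?_)
      rw [Finset.mem_Icc] at hj
      have hj1 : (j : ℝ) / a ≤ 1 := by
        rw [div_le_one ha0]; exact_mod_cast hj.2
      have := K (1 - (j : ℝ) / a) (1 / a) (by linarith) (by linarith [show 0 ≤ (j : ℝ) / a by positivity])
        (by positivity) (by rw [div_le_one ha0]; exact ha1)
      have e : x ^ j * ((1 - ((j : ℝ) - 1) / a) ^ (k + 1) - (1 - (j : ℝ) / a) ^ (k + 1))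
        - (k + 1) / a * (x ^ j * (1 - (j : ℝ) / a) ^ k)
        = x ^ j * ((1 - (j : ℝ) / a + 1 / a) ^ (k + 1) - (1 - (j : ℝ) / a) ^ (k + 1)
          - (k + 1) * (1 / a) * (1 - (j : ℝ) / a) ^ k) := by
        rw [show 1 - ((j : ℝ) - 1) / a = 1 - (j : ℝ) / a + 1 / a by ring]; ring
      rw [e, abs_mul, abs_of_pos (pow_pos hx j), mul_comm]
      exact mul_le_mul_of_nonneg_right this (pow_pos hx j).le
    rw [← sub_add_cancel (∑ j ∈ Finset.Icc 1 a, x ^ j *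
        ((1 - ((j : ℝ) - 1) / a) ^ (k + 1) - (1 - (j : ℝ) / a) ^ (k + 1))) ((k + 1) / a * p)] at hab
    set E := ∑ j ∈ Finset.Icc 1 a, x ^ j *
        ((1 - ((j : ℝ) - 1) / a) ^ (k + 1) - (1 - (j : ℝ) / a) ^ (k + 1)) - (k + 1) / a * p with hEd
    have hμ0 : 0 < μ := by linarith
    have key : μ * (p' / n - (k + 1).factorial / μ ^ (k + 1))
        = (k + 1) * (p / n - k.factorial / μ ^ k) + a / n * E - x * (a / n) := by
      have : μ * p' = (k + 1) * p + a * E - a * x := by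
        rw [hμd, mul_assoc, hab]; field_simp; ring
      rw [mul_sub, ← mul_div_assoc, this, Nat.factorial_succ, pow_succ]
      push_cast
      field_simp
      ring
    have b1 : |a / n * E| ≤ D * q := by
      rw [abs_mul, abs_of_pos (by positivity)]
      calc a / n * |E| ≤ a / n * (D * (1 / a) ^ 2 * n) := by gcongr
        _ = D * (1 / a) := by field_simp
        _ ≤ D * q := by gcongr
    have b2 : |x * (a / n)| ≤ 3 * q := by
      rw [abs_of_pos (by positivity)]
      gcongr
    have b3 : |(k + 1) * (p / n - k.factorial / μ ^ k)| ≤ (k + 1) * (C * q) := by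
      rw [abs_mul, abs_of_pos (by positivity : (0 : ℝ) < k + 1)]
      gcongr
    have b4 : |μ * (p' / n - (k + 1).factorial / μ ^ (k + 1))| ≤ ((k + 1) * C + D + 3) * q := by
      rw [key]
      refine (abs_sub _ _).trans ?_
      have := abs_add_le ((k + 1) * (p / n - k.factorial / μ ^ k)) (a / n * E)
      linarith
    rw [abs_mul, abs_of_pos hμ0] at b4
    refine le_trans ?_ b4
    exact le_mul_of_one_le_left (abs_nonneg _) hμ

/-- closeness of `μ` and `ξ` -/
lemma aux_mu (a : ℕ) (x u ξ : ℝ) (ha : 1 ≤ a) (hx : 1 < x) (hu : 0 < u)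
    (hxa : x * (x ^ a - 1) = u * (a * (x - 1))) (hμ : 2 ≤ (a : ℝ) * (x - 1))
    (hξ2 : 2 ≤ ξ) (hξ : Real.exp ξ = 1 + u * ξ) :
    |(a : ℝ) * (x - 1) - ξ| ≤ 4 * ((a : ℝ) * (x - 1)) ^ 2 / a := by
  have ha0 : (0 : ℝ) < a := by exact_mod_cast ha
  set μ := (a : ℝ) * (x - 1) with hμd
  have hμ0 : 0 < μ := by linarith
  have hx0 : 0 < x := by linarith
  have hxμ : x = 1 + μ / a := by rw [hμd]; field_simp; ring
  have hl1 : Real.log x ≤ μ / a := by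
    have := Real.log_le_sub_one_of_pos hx0; linarith
  have hl2 : (μ / a) - (μ / a) ^ 2 ≤ Real.log x := by
    have := Real.one_sub_inv_le_log_of_pos hx0
    refine le_trans ?_ this
    rw [hxμ]
    have h0 : 0 < μ / a := by positivity
    rw [le_sub_iff_add_le, ← le_sub_iff_add_le', inv_eq_one_div, div_le_iff₀ (by positivity)]
    nlinarith [pow_pos h0 3]
  have hx1 : x ^ a = 1 + u * μ / x := by field_simp; linarith
  have hla : a * Real.log x = Real.log (1 + u * μ / x) := by
    rw [← hx1, Real.log_pow]
  have hlξ : ξ = Real.log (1 + u * ξ) := by rw [← hξ, Real.log_exp]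
  -- log (1+uμ/x) vs log (1+uμ)
  have hA : Real.log (1 + u * μ / x) ≤ Real.log (1 + u * μ) := by
    apply Real.log_le_log (by positivity)
    have : u * μ / x ≤ u * μ := div_le_self (by positivity) hx.le
    linarith
  have hB : Real.log (1 + u * μ) ≤ Real.log (1 + u * μ / x) + Real.log x := by
    rw [← Real.log_mul (by positivity) (by positivity)]
    apply Real.log_le_log (by positivity)
    field_simp
    linarith
  have hgen : ∀ s t : ℝ, 2 ≤ s → s ≤ t →
      Real.log (1 + u * t) - Real.log (1 + u * s) ≤ (t - s) / 2 := by
    intro s t hs hst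
    have hs0 : 0 < s := by linarith
    have ht0 : 0 < t := by linarith
    rw [← Real.log_div (by positivity) (by positivity)]
    refine (Real.log_le_sub_one_of_pos (by positivity)).trans ?_
    have : (1 + u * t) / (1 + u * s) - 1 = u * (t - s) / (1 + u * s) := by field_simp; ring
    rw [this, div_le_div_iff₀ (by positivity) (by norm_num)]
    nlinarith [mul_nonneg hu.le (sub_nonneg.2 hst), mul_nonneg (mul_nonneg hu.le (sub_nonneg.2 hst)) (sub_nonneg.2 hs)]
  have h3 : a * Real.log x ≤ μ := by
    calc a * Real.log x ≤ a * (μ / a) := by gcongr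
      _ = μ := by field_simp
  have h4 : μ - μ ^ 2 / a ≤ a * Real.log x := by
    calc μ - μ ^ 2 / a = a * ((μ / a) - (μ / a) ^ 2) := by field_simp
      _ ≤ _ := by gcongr
  have h5 : μ / a ≤ μ ^ 2 / a := by gcongr; nlinarith
  have e : 4 * μ ^ 2 / a = 4 * (μ ^ 2 / a) := by ring
  have h6 : 0 ≤ μ ^ 2 / a := by positivity
  rw [e, abs_le]
  rcases le_total μ ξ with h | h
  · have := hgen μ ξ hμ h
    constructor <;> linarith
  · have := hgen ξ μ hξ2 h
    constructor <;> linarith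

lemma aux_inv (k : ℕ) (s t : ℝ) (hs : 1 ≤ s) (ht : 1 ≤ t) :
    |1 / s ^ k - 1 / t ^ k| ≤ k * |s - t| := by
  induction k with
  | zero => simp
  | succ k ih =>
    have hs0 : 0 < s := by linarith
    have ht0 : 0 < t := by linarith
    have e : 1 / s ^ (k + 1) - 1 / t ^ (k + 1)
        = (1 / s) * (1 / s ^ k - 1 / t ^ k) + (1 / (s * t * t ^ k)) * (t - s) := by
      rw [pow_succ, pow_succ]; field_simp; ring
    have h1 : 1 / s ≤ 1 := by rw [div_le_one hs0]; exact hs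
    have h2 : 1 / (s * t * t ^ k) ≤ 1 := by
      rw [div_le_one (by positivity)]
      exact one_le_mul_of_one_le_of_one_le (one_le_mul_of_one_le_of_one_le hs ht) (one_le_pow₀ ht)
    rw [e]
    refine (abs_add_le _ _).trans ?_
    rw [abs_mul, abs_mul, abs_of_pos (by positivity : 0 < 1 / s),
      abs_of_pos (by positivity : 0 < 1 / (s * t * t ^ k)), abs_sub_comm t s]
    have := mul_le_mul_of_nonneg_right h1 (abs_nonneg (1 / s ^ k - 1 / t ^ k))
    have := mul_le_mul_of_nonneg_right h2 (abs_nonneg (s - t))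
    push_cast
    linarith

lemma aux_Mxi (k : ℕ) : ∃ C : ℝ, 0 ≤ C ∧ ∀ (a : ℕ) (n x q ξ l : ℝ), 1 ≤ a → 0 < n → 1 < x → x ≤ 3 →
    ∑ j ∈ Finset.Icc 1 a, x ^ j = n → 2 ≤ (a : ℝ) * (x - 1) → 1 / (a : ℝ) ≤ q → a / n ≤ q →
    1 ≤ l → (a : ℝ) * (x - 1) ≤ 2 * l → |(a : ℝ) * (x - 1) - ξ| ≤ 4 * ((a : ℝ) * (x - 1)) ^ 2 / a →
    2 ≤ ξ →
    |(∑ j ∈ Finset.Icc 1 a, x ^ j * (1 - (j : ℝ) / a) ^ k) / n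
      - k.factorial / ξ ^ k| ≤ C * (q * l ^ 2) := by
  obtain ⟨C, hC, H⟩ := aux_M k
  refine ⟨C + k.factorial * (k * 16), by positivity, ?_⟩
  intro a n x q ξ l ha hn hx hx3 hs hμ hq hq2 hl hμl hd hξ
  have h1 := H a n x q ha hn (by linarith) hx3 hs (by linarith) hq hq2
  have h2 := aux_inv k ((a : ℝ) * (x - 1)) ξ (by linarith) (by linarith)
  have ha0 : (0 : ℝ) < a := by exact_mod_cast ha
  set μ := (a : ℝ) * (x - 1) with hμd
  set M := (∑ j ∈ Finset.Icc 1 a, x ^ j * (1 - (j : ℝ) / a) ^ k) / n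
  have hq0 : 0 ≤ q := le_trans (by positivity) hq
  have h3 : |μ - ξ| ≤ 16 * (q * l ^ 2) := by
    refine hd.trans ?_
    calc 4 * μ ^ 2 / a = 4 * μ ^ 2 * (1 / a) := by ring
      _ ≤ 4 * (2 * l) ^ 2 * q := by gcongr
      _ = _ := by ring
  have e : M - k.factorial / ξ ^ k = (M - k.factorial / μ ^ k)
      + k.factorial * (1 / μ ^ k - 1 / ξ ^ k) := by ring
  rw [e]
  refine (abs_add_le _ _).trans ?_
  rw [abs_mul, abs_of_pos (by positivity : (0 : ℝ) < k.factorial)]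
  have h4 : q ≤ q * l ^ 2 := le_mul_of_one_le_right hq0 (one_le_pow₀ hl)
  have h5 : C * q ≤ C * (q * l ^ 2) := by gcongr
  have h6 : (k.factorial : ℝ) * |1 / μ ^ k - 1 / ξ ^ k| ≤ k.factorial * (k * (16 * (q * l ^ 2))) := by
    gcongr
    exact h2.trans (by gcongr)
  linarith

set_option maxHeartbeats 1000000 in
lemma aux_core (N : ℕ) : ∃ C : ℝ, 0 ≤ C ∧ ∀ (a : ℕ) (n x q ξ l u : ℝ), 1 ≤ a → 0 < n → 1 < x → x ≤ 3 →
    u = n / a → q ≤ 1 →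
    ∑ j ∈ Finset.Icc 1 a, x ^ j = n → 2 ≤ (a : ℝ) * (x - 1) → 1 / (a : ℝ) ≤ q → a / n ≤ q ^ 2 →
    1 ≤ l → (a : ℝ) * (x - 1) ≤ 2 * l → Real.exp ξ = 1 + u * ξ →
    2 ≤ ξ → ∑ j ∈ Finset.Icc 1 a, 1 / (j : ℝ) ≤ 1 + l →
    |∑ j ∈ Finset.Icc 1 a, x ^ j / j - u * ∑ k ∈ Finset.range (N + 1), (k.factorial : ℝ) / ξ ^ k|
      ≤ u * (C * (q * l ^ 2) + 2 * ((N + 1).factorial / ξ ^ (N + 1))) := by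
  choose C hC H using aux_Mxi
  refine ⟨∑ k ∈ Finset.range (N + 1), C k + 2 * C (N + 1) + 6,
    add_nonneg (add_nonneg (Finset.sum_nonneg fun k _ => hC k) (by linarith [hC (N + 1)])) (by norm_num), ?_⟩
  intro a n x q ξ l u ha hn hx hx3 hu hq1 hs hμ hq hq2 hl hμl hξe hξ hH
  have ha0 : (0 : ℝ) < a := by exact_mod_cast ha
  have hq0 : 0 < q := lt_of_lt_of_le (by positivity) hq
  have hu0 : 0 < u := by rw [hu]; positivity
  have hx0 : 0 < x := by linarith
  have hq2' : a / n ≤ q := hq2.trans (by nlinarith)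
  have hgeo : x * (x ^ a - 1) = u * (a * (x - 1)) := by
    have := aux_abel x (fun _ => 1) a
    simp only [mul_one, sub_self, mul_zero, Finset.sum_const_zero, hs] at this
    rw [hu]
    have e : n / a * (a * (x - 1)) = (x - 1) * n := by field_simp
    rw [e, this]; ring
  have hd := aux_mu a x u ξ ha hx hu0 hgeo hμ hξ hξe
  have HM := fun k => H k a n x q ξ l ha hn hx hx3 hs hμ hq hq2' hl hμl hd hξ
  set μ := (a : ℝ) * (x - 1) with hμd
  set M : ℕ → ℝ := fun k => (∑ j ∈ Finset.Icc 1 a, x ^ j * (1 - (j : ℝ) / a) ^ k) / n with hM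
  have HM' : ∀ k, |M k - k.factorial / ξ ^ k| ≤ C k * (q * l ^ 2) := HM
  clear_value M
  have hpn : ∀ k, (1 / (a : ℝ)) * ∑ j ∈ Finset.Icc 1 a, x ^ j * (1 - (j : ℝ) / a) ^ k = u * M k := by
    intro k; rw [hM, hu]; field_simp
  -- decomposition
  have hdec : ∑ j ∈ Finset.Icc 1 a, x ^ j / j = u * ∑ k ∈ Finset.range (N + 1), M k
      + ∑ j ∈ Finset.Icc 1 a, x ^ j * (1 - (j : ℝ) / a) ^ (N + 1) / j := by
    rw [Finset.mul_sum]
    simp_rw [← hpn]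
    rw [← Finset.mul_sum, Finset.sum_comm, Finset.mul_sum, ← Finset.sum_add_distrib]
    refine Finset.sum_congr rfl fun j hj => ?_
    rw [Finset.mem_Icc] at hj
    have hj0 : (0 : ℝ) < j := by exact_mod_cast hj.1
    rw [← Finset.mul_sum]
    have := mul_neg_geom_sum (1 - (j : ℝ) / a) (N + 1)
    rw [sub_sub_cancel] at this
    have h2 : ∑ i ∈ Finset.range (N + 1), (1 - (j : ℝ) / a) ^ i
      = (1 - (1 - (j : ℝ) / a) ^ (N + 1)) * (a / j) := by
      rw [← this]; field_simp
    rw [h2]; field_simp; ring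
  set R := ∑ j ∈ Finset.Icc 1 a, x ^ j * (1 - (j : ℝ) / a) ^ (N + 1) / j with hR
  set B := u * q * (1 + μ) with hB
  have hB0 : 0 < B := by positivity
  have huq : 1 ≤ u * q ^ 2 := by
    have : a / n = 1 / u := by rw [hu]; field_simp
    rw [this, div_le_iff₀ hu0] at hq2; linarith
  have hu1 : 1 ≤ u := huq.trans (mul_le_of_le_one_right hu0.le (pow_le_one₀ hq0.le hq1))
  have hxB : x ^ a ≤ B ^ 2 := by
    have h1 : x ^ a ≤ 1 + u * μ := by
      have : 1 ≤ x ^ a := one_le_pow₀ hx.le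
      nlinarith
    have h2 : 1 + u * μ ≤ u * (1 + μ) ^ 2 := by nlinarith
    have h3 : u * (1 + μ) ^ 2 ≤ (u * q ^ 2) * (u * (1 + μ) ^ 2) :=
      le_mul_of_one_le_left (by positivity) huq
    calc x ^ a ≤ (u * q ^ 2) * (u * (1 + μ) ^ 2) := h1.trans (h2.trans h3)
      _ = B ^ 2 := by rw [hB]; ring
  have hR0 : 0 ≤ R := by
    refine Finset.sum_nonneg fun j hj => ?_
    rw [Finset.mem_Icc] at hj
    have : (j : ℝ) / a ≤ 1 := by rw [div_le_one ha0]; exact_mod_cast hj.2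
    have : 0 ≤ 1 - (j : ℝ) / a := by linarith
    positivity
  have hR1 : R ≤ 2 * (u * M (N + 1)) + B * (1 + l) := by
    calc R ≤ ∑ j ∈ Finset.Icc 1 a, (2 * ((1 / a) * (x ^ j * (1 - (j : ℝ) / a) ^ (N + 1)))
            + B * (1 / j)) := by
          refine Finset.sum_le_sum fun j hj => ?_
          rw [Finset.mem_Icc] at hj
          have hj0 : (0 : ℝ) < j := by exact_mod_cast hj.1
          have h1 : (j : ℝ) / a ≤ 1 := by rw [div_le_one ha0]; exact_mod_cast hj.2
          have h2 : 0 ≤ 1 - (j : ℝ) / a := by linarith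
          have h3 : 1 - (j : ℝ) / a ≤ 1 := by
            have : 0 ≤ (j : ℝ) / a := by positivity
            linarith
          rcases le_total a (2 * j) with h | h
          · have h' : (a : ℝ) ≤ 2 * j := by exact_mod_cast h
            have h4 : 1 / (j : ℝ) ≤ 2 * (1 / a) := by
              rw [← mul_div_assoc, div_le_div_iff₀ hj0 ha0]; linarith
            have h5 : 0 ≤ x ^ j * (1 - (j : ℝ) / a) ^ (N + 1) := by positivity
            have h6 := mul_le_mul_of_nonneg_left h4 h5
            have h7 : 0 ≤ B * (1 / j) := by positivity
            rw [div_eq_mul_one_div]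
            linarith
          · have h4 : x ^ j ≤ B := by
              refine (pow_le_pow_iff_left₀ (pow_pos hx0 j).le hB0.le (two_ne_zero)).1 ?_
              rw [← pow_mul]
              exact (pow_le_pow_right₀ hx.le (by omega)).trans hxB
            have h5 : x ^ j * (1 - (j : ℝ) / a) ^ (N + 1) ≤ B := by
              calc _ ≤ x ^ j * 1 := by gcongr; exact pow_le_one₀ h2 h3
                _ ≤ B := by linarith
            have h6 : x ^ j * (1 - (j : ℝ) / a) ^ (N + 1) / j ≤ B * (1 / j) := by
              rw [div_eq_mul_one_div]; gcongr
            have h7 : 0 ≤ 2 * ((1 / a) * (x ^ j * (1 - (j : ℝ) / a) ^ (N + 1))) := by positivity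
            linarith
      _ = 2 * (u * M (N + 1)) + B * ∑ j ∈ Finset.Icc 1 a, 1 / (j : ℝ) := by
          rw [Finset.sum_add_distrib, ← Finset.mul_sum, ← Finset.mul_sum, ← Finset.mul_sum, hpn]
      _ ≤ _ := by gcongr
  have hBl : B * (1 + l) ≤ u * (6 * (q * l ^ 2)) := by
    have : (1 + μ) * (1 + l) ≤ 6 * l ^ 2 := by nlinarith
    calc B * (1 + l) = u * q * ((1 + μ) * (1 + l)) := by rw [hB]; ring
      _ ≤ u * q * (6 * l ^ 2) := by gcongr
      _ = _ := by ring
  have hMN : M (N + 1) ≤ (N + 1).factorial / ξ ^ (N + 1) + C (N + 1) * (q * l ^ 2) := by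
    have := (abs_le.1 (HM' (N + 1))).2
    linarith
  have hR2 : R ≤ u * (2 * ((N + 1).factorial / ξ ^ (N + 1)) + (2 * C (N + 1) + 6) * (q * l ^ 2)) := by
    have := mul_le_mul_of_nonneg_left hMN hu0.le
    linarith
  have hS : |u * ∑ k ∈ Finset.range (N + 1), M k
      - u * ∑ k ∈ Finset.range (N + 1), (k.factorial : ℝ) / ξ ^ k|
      ≤ u * ((∑ k ∈ Finset.range (N + 1), C k) * (q * l ^ 2)) := by
    rw [← mul_sub, abs_mul, abs_of_pos hu0, ← Finset.sum_sub_distrib, Finset.sum_mul]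
    refine mul_le_mul_of_nonneg_left ?_ hu0.le
    exact (Finset.abs_sum_le_sum_abs _ _).trans (Finset.sum_le_sum fun k _ => HM' k)
  rw [hdec]
  have := abs_add_le (u * ∑ k ∈ Finset.range (N + 1), M k
      - u * ∑ k ∈ Finset.range (N + 1), (k.factorial : ℝ) / ξ ^ k) R
  rw [abs_of_nonneg hR0] at this
  rw [add_sub_right_comm]
  linarith

lemma aux_xi (u ξ : ℝ) (hu : 1 < u) (h0 : ξ ≠ 0) (h : Real.exp ξ = 1 + u * ξ) :
    Real.log u ≤ ξ ∧ ξ ≤ 2 * Real.log (3 * u) := by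
  have hpos : 0 < ξ := by
    by_contra hc
    have hneg : ξ < 0 := lt_of_le_of_ne (not_lt.1 hc) h0
    have := Real.add_one_le_exp ξ
    nlinarith
  constructor
  · rw [Real.log_le_iff_le_exp (by linarith)]
    have h1 := Real.add_one_le_exp (-ξ)
    have h2 : Real.exp (-ξ) * Real.exp ξ = 1 := by rw [← Real.exp_add]; simp
    have h3 : (-ξ + 1) * Real.exp ξ ≤ 1 := by
      exact (mul_le_mul_of_nonneg_right h1 (Real.exp_pos _).le).trans h2.le
    have : u * ξ ≤ Real.exp ξ * ξ := by nlinarith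
    exact le_of_mul_le_mul_right this hpos
  · have h1 := Real.add_one_le_exp (ξ / 2)
    have h2 : Real.exp ξ = Real.exp (ξ / 2) * Real.exp (ξ / 2) := by
      rw [← Real.exp_add]; ring_nf
    have h3 : Real.exp (ξ / 2) * Real.exp (ξ / 2) ≤ 3 * u * Real.exp (ξ / 2) := by
      rw [← h2, h]; nlinarith
    have h4 := le_of_mul_le_mul_right h3 (Real.exp_pos _)
    have := (Real.le_log_iff_exp_le (by positivity)).2 h4
    linarith

lemma aux_x (a : ℕ) (n x : ℝ) (ha : 1 ≤ a) (han : a < n) (hx : 0 < x)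
    (hs : ∑ j ∈ Finset.Icc 1 a, x ^ j = n) (hl : Real.log n * (1 / a) ≤ 1) :
    1 < x ∧ x ≤ 3 ∧ Real.log (n / a) ≤ a * (x - 1) ∧ a * (x - 1) ≤ 2 * Real.log n := by
  have ha0 : (0 : ℝ) < a := by exact_mod_cast ha
  have hn0 : 0 < n := ha0.trans han
  have hx1 : 1 < x := by
    by_contra hc
    have : ∑ j ∈ Finset.Icc 1 a, x ^ j ≤ ∑ j ∈ Finset.Icc 1 a, (1 : ℝ) :=
      Finset.sum_le_sum fun j _ => pow_le_one₀ hx.le (not_lt.1 hc)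
    simp at this
    linarith
  have h1 : x ^ a ≤ n := by
    rw [← hs]
    exact Finset.single_le_sum (f := fun j => x ^ j) (fun j _ => (pow_pos hx j).le)
      (Finset.mem_Icc.2 ⟨ha, le_rfl⟩)
  have h2 : n / a ≤ x ^ a := by
    rw [div_le_iff₀ ha0, ← hs]
    have : ∑ j ∈ Finset.Icc 1 a, x ^ j ≤ ∑ j ∈ Finset.Icc 1 a, x ^ a :=
      Finset.sum_le_sum fun j hj => pow_le_pow_right₀ hx1.le (Finset.mem_Icc.1 hj).2
    simp at this
    linarith
  have h3 : a * Real.log x ≤ Real.log n := by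
    rw [← Real.log_pow]; exact Real.log_le_log (by positivity) h1
  have h4 : Real.log (n / a) ≤ a * Real.log x := by
    rw [← Real.log_pow]; exact Real.log_le_log (by positivity) h2
  have hlx0 : 0 ≤ Real.log x := Real.log_nonneg hx1.le
  have h5 : Real.log x ≤ 1 := by
    refine le_trans ?_ hl
    rw [mul_one_div, le_div_iff₀ ha0]; linarith
  have h6 := Real.abs_exp_sub_one_le (x := Real.log x) (by rw [abs_of_nonneg hlx0]; exact h5)
  rw [Real.exp_log hx, abs_of_nonneg hlx0, abs_of_nonneg (by linarith)] at h6
  have h7 := Real.log_le_sub_one_of_pos hx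
  refine ⟨hx1, by linarith, ?_, ?_⟩
  · exact h4.trans (by gcongr)
  · calc a * (x - 1) ≤ a * (2 * Real.log x) := by gcongr
      _ ≤ _ := by linarith

lemma aux_harm (a : ℕ) (n : ℝ) (ha : 1 ≤ a) (han : a ≤ n) :
    ∑ j ∈ Finset.Icc 1 a, 1 / (j : ℝ) ≤ 1 + Real.log n := by
  have h := harmonic_le_one_add_log a
  rw [harmonic_eq_sum_Icc] at h
  push_cast at h
  have ha0 : (0 : ℝ) < a := by exact_mod_cast ha
  have := Real.log_le_log ha0 han
  simp only [one_div]
  linarith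

open Filter Asymptotics in
/-- asymptotic expansion of the mean cycle number.  Assume there
are `α₀, α₁ ∈ (0,1)` with `n^{−α₀} α(n) → ∞` (i.e. the liminf is `∞`) and
`n^{−α₁} α(n) → 0` (i.e. the limsup of this nonnegative sequence is `0`).
Let `x n = x_{n,α}(1)` be the positive solution of `∑_{j=1}^{α(n)} x^j = n`,
`m n = ∑_{j=1}^{α(n)} x(n)^j / j`, and let `ξ u` be the nonzero solution of
`exp ξ = 1 + u ξ` (for `u > 1`).  Then for every `N`,
`m n = (n/α(n)) ∑_{k=0}^{N} k! / ξ(n/α(n))^k + o((n/α(n)) ξ(n/α(n))^{−N})`. -/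
theorem stmt_1 (α : ℕ → ℕ) (hα1 : ∀ n, 1 ≤ α n)
    (α₀ α₁ : ℝ) (h₀ : α₀ ∈ Set.Ioo (0 : ℝ) 1) (h₁ : α₁ ∈ Set.Ioo (0 : ℝ) 1)
    (hlo : Tendsto (fun n : ℕ => (n : ℝ) ^ (-α₀) * α n) atTop atTop)
    (hhi : Tendsto (fun n : ℕ => (n : ℝ) ^ (-α₁) * α n) atTop (nhds 0))
    (x : ℕ → ℝ)
    (hx : ∀ n, 1 ≤ n → 0 < x n ∧ ∑ j ∈ Finset.Icc 1 (α n), x n ^ j = (n : ℝ))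
    (m : ℕ → ℝ) (hm : ∀ n, m n = ∑ j ∈ Finset.Icc 1 (α n), x n ^ j / j)
    (ξ : ℝ → ℝ) (hξ : ∀ u : ℝ, 1 < u → ξ u ≠ 0 ∧ Real.exp (ξ u) = 1 + u * ξ u)
    (N : ℕ) :
    (fun n : ℕ => m n - (n : ℝ) / α n *
        ∑ k ∈ Finset.range (N + 1), (k.factorial : ℝ) / ξ ((n : ℝ) / α n) ^ k)
      =o[atTop] fun n : ℕ => (n : ℝ) / α n / ξ ((n : ℝ) / α n) ^ N := by
  obtain ⟨C, hC, H⟩ := aux_core N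
  set δ := min α₀ ((1 - α₁) / 2) with hδd
  have hδ : 0 < δ := lt_min h₀.1 (by linarith [h₁.2])
  have hδ0 : δ ≤ α₀ := min_le_left _ _
  have hδ1 : 2 * δ ≤ 1 - α₁ := by linarith [min_le_right α₀ ((1 - α₁) / 2)]
  have hcast : Tendsto (fun n : ℕ => (n : ℝ)) atTop atTop := tendsto_natCast_atTop_atTop
  have hlog : Tendsto (fun n : ℕ => Real.log n) atTop atTop := Real.tendsto_log_atTop.comp hcast
  have hql : ∀ M : ℕ, Tendsto (fun n : ℕ => (n : ℝ) ^ (-δ) * Real.log n ^ M) atTop (nhds 0) := by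
    intro M
    have h := (isLittleO_log_rpow_rpow_atTop (M : ℝ) hδ).tendsto_div_nhds_zero.comp hcast
    refine h.congr' ?_
    filter_upwards [eventually_ge_atTop 1] with n hn
    have hn0 : (0 : ℝ) < n := by exact_mod_cast hn
    simp only [Function.comp]
    rw [Real.rpow_neg hn0.le, Real.rpow_natCast]
    ring
  have hg : Tendsto (fun n : ℕ => C * 6 ^ N * ((n : ℝ) ^ (-δ) * Real.log n ^ (N + 2))
      + ((N + 1).factorial : ℝ) / δ * (Real.log n)⁻¹) atTop (nhds 0) := by
    have := ((hql (N + 2)).const_mul (C * 6 ^ N)).add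
      ((hlog.inv_tendsto_atTop).const_mul (((N + 1).factorial : ℝ) / δ))
    simpa using this
  rw [isLittleO_iff]
  intro ε hε
  filter_upwards [hg.eventually (ge_mem_nhds hε), hlo.eventually_ge_atTop 1,
    hhi.eventually (ge_mem_nhds one_pos), (hql 0).eventually (gt_mem_nhds one_pos),
    (hql 1).eventually (gt_mem_nhds one_pos), hlog.eventually_ge_atTop 1,
    hlog.eventually_ge_atTop (1 / δ), eventually_ge_atTop 1] with n e1 e2 e3 e4 e5 e6 e7 hn
  have hn0 : (0 : ℝ) < n := by exact_mod_cast hn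
  have hn1 : (1 : ℝ) ≤ n := by exact_mod_cast hn
  have ha := hα1 n
  have ha0 : (0 : ℝ) < α n := by exact_mod_cast ha
  set q := (n : ℝ) ^ (-δ) with hq
  set l := Real.log n with hl
  have hq0 : 0 < q := Real.rpow_pos_of_pos hn0 _
  rw [pow_zero, mul_one] at e4
  rw [pow_one] at e5
  have hqa : 1 / (α n : ℝ) ≤ q := by
    rw [div_le_iff₀ ha0]
    refine e2.trans ?_
    gcongr
    rw [hq]
    exact Real.rpow_le_rpow_of_exponent_le hn1 (by linarith)
  have hqn : (α n : ℝ) / n ≤ q ^ 2 := by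
    have hle : (α n : ℝ) ≤ (n : ℝ) ^ α₁ := by
      rw [Real.rpow_neg hn0.le, inv_mul_le_iff₀ (Real.rpow_pos_of_pos hn0 _)] at e3
      linarith
    calc (α n : ℝ) / n ≤ (n : ℝ) ^ α₁ / n := by gcongr
      _ = (n : ℝ) ^ (α₁ - 1) := by rw [Real.rpow_sub_one hn0.ne']
      _ ≤ (n : ℝ) ^ (-δ * 2) := Real.rpow_le_rpow_of_exponent_le hn1 (by linarith)
      _ = q ^ 2 := by rw [hq, Real.rpow_mul hn0.le]; norm_cast
  have hlt1 : (α n : ℝ) / n < 1 := lt_of_le_of_lt hqn (by nlinarith)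
  have han : (α n : ℝ) < n := by rwa [div_lt_one hn0] at hlt1
  obtain ⟨hx0, hxs⟩ := hx n hn
  have hl0 : 0 < l := by linarith
  obtain ⟨hx1, hx3, hμ1, hμ2⟩ := aux_x (α n) n (x n) ha han hx0 hxs (by
    calc l * (1 / (α n : ℝ)) ≤ l * q := by gcongr
      _ ≤ 1 := by linarith)
  have hu1 : 1 < (n : ℝ) / α n := by rwa [one_lt_div ha0]
  obtain ⟨hξ0, hξe⟩ := hξ _ hu1
  obtain ⟨hξ1, hξ2⟩ := aux_xi _ _ hu1 hξ0 hξe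
  have hlu : 2 * δ * l ≤ Real.log ((n : ℝ) / α n) := by
    have h1 := Real.log_le_log (by positivity) hqn
    rw [Real.log_pow, hq, Real.log_rpow hn0, ← inv_div, Real.log_inv] at h1
    push_cast at h1
    linarith
  have hδl : 1 ≤ δ * l := by
    rw [div_le_iff₀ hδ] at e7; linarith
  set u := (n : ℝ) / α n with hu
  set X := ξ u with hX
  have hX2 : 2 ≤ X := by linarith
  have hX6 : X ≤ 6 * l := by
    have h1 : u ≤ n := div_le_self hn0.le (by exact_mod_cast ha)
    have h2 : Real.log (3 * u) ≤ Real.log (3 * n) := Real.log_le_log (by positivity) (by linarith)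
    rw [Real.log_mul (by norm_num) hn0.ne'] at h2
    have h3 := Real.log_le_sub_one_of_pos (show (0 : ℝ) < 3 by norm_num)
    linarith
  have fin := H (α n) n (x n) q X l u ha hn0 hx1 hx3 hu e4.le hxs (by linarith) hqa hqn e6 hμ2 hξe hX2
    (aux_harm _ _ ha han.le)
  have hX0 : 0 < X := by linarith
  rw [hm n, Real.norm_eq_abs, Real.norm_eq_abs]
  have hu0 : 0 < u := by linarith
  rw [abs_of_pos (show 0 < u / X ^ N by positivity)]
  refine fin.trans ?_
  have hA : C * (q * l ^ 2) * X ^ N ≤ C * 6 ^ N * (q * l ^ (N + 2)) := by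
    calc C * (q * l ^ 2) * X ^ N ≤ C * (q * l ^ 2) * (6 * l) ^ N := by gcongr
      _ = _ := by rw [mul_pow]; ring
  have hB : 2 * (((N + 1).factorial : ℝ) / X) ≤ ((N + 1).factorial : ℝ) / δ * l⁻¹ := by
    calc 2 * (((N + 1).factorial : ℝ) / X) ≤ 2 * (((N + 1).factorial : ℝ) / (2 * δ * l)) := by
          gcongr
          linarith
      _ = _ := by field_simp
  calc u * (C * (q * l ^ 2) + 2 * ((N + 1).factorial / X ^ (N + 1)))
      = (C * (q * l ^ 2) * X ^ N + 2 * (((N + 1).factorial : ℝ) / X)) * (u / X ^ N) := by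
        rw [pow_succ]; field_simp; ring
    _ ≤ ε * (u / X ^ N) := by
        gcongr
        linarith
end

section
/- Suppose α : ℕ → ℕ is such that there exist α₀, α₁ ∈ (0,1) with liminf_{n→∞} n^{−α₀}·α(n) = ∞ and limsup_{n→∞} n^{−α₁}·α(n) = 0. Then for every integer N ≥ 2, as n → ∞, v_{n,α} = (n/α(n))·∑_{k=2}^{N} (k!−1)/ξ(n/α(n))^k + o( (n/α(n))·ξ(n/α(n))^{−N} ); i.e. v_{n,α} has the asymptotic expansion (n/α(n))·∑_{k=2}^{∞} (k!−1)/ξ(n/α(n))^k. -/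
open Filter Topology

/-- faster decay than any power of `L` -/
def Negl (L f : ℕ → ℝ) : Prop := ∀ M : ℕ, Tendsto (fun n => f n * L n ^ M) atTop (𝓝 0)

lemma Negl.add {L f g : ℕ → ℝ} (hf : Negl L f) (hg : Negl L g) : Negl L (fun n => f n + g n) := by
  intro M
  simpa [add_mul] using (hf M).add (hg M)

lemma Negl.mulL {L f : ℕ → ℝ} (hf : Negl L f) (k : ℕ) : Negl L (fun n => f n * L n ^ k) := by
  intro M
  simpa [pow_add, mul_assoc] using hf (k + M)

lemma Negl.const_mul {L f : ℕ → ℝ} (hf : Negl L f) (c : ℝ) : Negl L (fun n => c * f n) := by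
  intro M
  simpa [mul_assoc] using (hf M).const_mul c

lemma Negl.mono {L f g : ℕ → ℝ} (hg : Negl L g) (h : ∀ᶠ n in atTop, |f n| ≤ g n) :
    Negl L f := by
  intro M
  have h2 := (hg M).abs
  rw [abs_zero] at h2
  refine squeeze_zero_norm' ?_ h2
  filter_upwards [h] with n hn
  rw [Real.norm_eq_abs, abs_mul, abs_mul]
  exact mul_le_mul_of_nonneg_right (hn.trans (le_abs_self _)) (abs_nonneg _)

lemma Negl.tendsto {L f : ℕ → ℝ} (hf : Negl L f) : Tendsto f atTop (𝓝 0) := by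
  simpa using hf 0

lemma negl_exp {L : ℕ → ℝ} (hL : Tendsto L atTop atTop) {c : ℝ} (hc : 0 < c) :
    Negl L (fun n => Real.exp (-c * L n)) := by
  intro M
  have := (tendsto_rpow_mul_exp_neg_mul_atTop_nhds_zero (M : ℝ) c hc).comp hL
  refine this.congr (fun n => ?_)
  simp [mul_comm]

/-- the geometric sum -/
lemma geom_aux (a : ℕ) (x : ℝ) :
    (∑ j ∈ Finset.Icc 1 a, x ^ j) * (x - 1) = x * (x ^ a - 1) := by
  induction a with
  | zero => simp
  | succ k ih =>
    rw [Finset.sum_Icc_succ_top (by omega), add_mul, ih]; ring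

lemma one_lt_x {a : ℕ} {x n : ℝ} (hx : 0 < x) (hs : ∑ j ∈ Finset.Icc 1 a, x ^ j = n)
    (hn : (a : ℝ) < n) : 1 < x := by
  by_contra h
  push Not at h
  have : ∑ j ∈ Finset.Icc 1 a, x ^ j ≤ ∑ j ∈ Finset.Icc 1 a, (1 : ℝ) :=
    Finset.sum_le_sum fun j _ => pow_le_one₀ hx.le h
  simp at this
  linarith

lemma xi_facts {u ξ : ℝ} (hu : 1 < u) (h0 : ξ ≠ 0) (h : Real.exp ξ = 1 + u * ξ) :
    0 < ξ ∧ u ≤ Real.exp ξ ∧ Real.exp (ξ / 2) ≤ 2 * u + 1 := by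
  have hpos : 0 < ξ := by
    rcases lt_or_gt_of_ne h0 with h1 | h1
    · have := Real.add_one_lt_exp h0
      nlinarith
    · exact h1
  refine ⟨hpos, ?_, ?_⟩
  · have h1 : 1 - ξ ≤ Real.exp (-ξ) := by linarith [Real.add_one_le_exp (-ξ)]
    have h2 : Real.exp (-ξ) * Real.exp ξ = 1 := by rw [← Real.exp_add]; simp
    have h3 := Real.exp_pos ξ
    have h4 : (1 - ξ) * Real.exp ξ ≤ 1 := by
      exact (mul_le_mul_of_nonneg_right h1 h3.le).trans h2.le
    have : u * ξ ≤ Real.exp ξ * ξ := by linarith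
    exact le_of_mul_le_mul_right this hpos
  · have h1 : Real.exp ξ = Real.exp (ξ / 2) * Real.exp (ξ / 2) := by rw [← Real.exp_add]; ring_nf
    have h2 := Real.add_one_le_exp (ξ / 2)
    have h3 := Real.exp_pos (ξ / 2)
    have : Real.exp (ξ / 2) * Real.exp (ξ / 2) ≤ (2 * u + 1) * Real.exp (ξ / 2) := by
      rw [← h1, h]; nlinarith
    exact le_of_mul_le_mul_right this h3

lemma s_le_xi {u ξ y a : ℝ} (ha : 0 < a) (hξ : 1 ≤ ξ) (hu : 1 < u)
    (h : Real.exp ξ = 1 + u * ξ) 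
    (hxe : Real.exp y * (Real.exp (a * y) - 1) = u * a * (Real.exp y - 1)) :
    a * y ≤ ξ := by
  by_contra hlt
  push Not at hlt
  set s := a * y with hs
  have hX := Real.exp_pos y
  have h1 : Real.exp y - 1 ≤ y * Real.exp y := by
    have h1 : 1 - y ≤ Real.exp (-y) := by linarith [Real.add_one_le_exp (-y)]
    have h2 : Real.exp (-y) * Real.exp y = 1 := by rw [← Real.exp_add]; simp
    nlinarith
  have h2 : Real.exp s - 1 ≤ u * s := by
    have : (Real.exp s - 1) * Real.exp y ≤ u * s * Real.exp y := by
      have : u * a * (Real.exp y - 1) ≤ u * a * (y * Real.exp y) :=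
        mul_le_mul_of_nonneg_left h1 (by positivity)
      calc _ = u * a * (Real.exp y - 1) := by rw [← hxe]; ring
        _ ≤ _ := this
        _ = _ := by rw [hs]; ring
    exact le_of_mul_le_mul_right this hX
  have h3 : Real.exp s = Real.exp ξ * Real.exp (s - ξ) := by rw [← Real.exp_add]; ring_nf
  have h4 := Real.add_one_le_exp (s - ξ)
  have h5 : Real.exp ξ * (s - ξ + 1) ≤ Real.exp s := by
    rw [h3]; exact mul_le_mul_of_nonneg_left h4 (Real.exp_pos _).le
  rw [h] at h5
  have hd : 0 < s - ξ := by linarith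
  nlinarith [mul_pos hd (by linarith : 0 < u), mul_nonneg (mul_nonneg hd.le (by linarith : 0 ≤ u)) (by linarith : 0 ≤ ξ - 1)]

lemma t_close {u ξ y a : ℝ} (ha : 0 < a) (hξ : 1 ≤ ξ) (hu : 2 * Real.exp 4 ≤ u)
    (h : Real.exp ξ = 1 + u * ξ) (hy : 0 < y)
    (hxe : Real.exp y * (Real.exp (a * y) - 1) = u * a * (Real.exp y - 1))
    (hsm : ξ ≤ a / 2) :
    |a * (Real.exp y - 1) - ξ| ≤ 3 * (ξ ^ 2 / a) ∧ Real.exp y ≤ 2 ∧ Real.exp y - 1 ≤ 2 * (ξ / a) := by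
  have hu1 : 1 < u := by linarith [Real.add_one_le_exp (4:ℝ)]
  have hs := s_le_xi ha hξ hu1 h hxe
  set X := Real.exp y with hX
  have hX0 : 0 < X := Real.exp_pos y
  have hX1 : 1 + y ≤ X := by linarith [Real.add_one_le_exp y]
  have hyle : y ≤ ξ / a := by rw [le_div_iff₀ ha]; linarith
  have hy2 : y ≤ 1 / 2 := by
    refine hyle.trans ?_
    rw [div_le_iff₀ ha]; linarith
  have h1 : X - 1 ≤ y * X := by
    have h1 : 1 - y ≤ Real.exp (-y) := by linarith [Real.add_one_le_exp (-y)]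
    have h2 : Real.exp (-y) * X = 1 := by rw [← Real.exp_add]; simp
    nlinarith
  have hX2 : X ≤ 2 := by nlinarith
  set s := a * y with hsdef
  have hs0 : 0 < s := by positivity
  set E := Real.exp s with hE
  have hE0 : 0 < E := Real.exp_pos s
  have hEs : E - 1 ≤ s * E := by
    have h1 : 1 - s ≤ Real.exp (-s) := by linarith [Real.add_one_le_exp (-s)]
    have h2 : Real.exp (-s) * E = 1 := by rw [← Real.exp_add]; simp
    nlinarith
  have hus : u * s ≤ X * (E - 1) := by
    rw [hxe]
    have : u * a * y ≤ u * a * (X - 1) := mul_le_mul_of_nonneg_left (by linarith) (by positivity)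
    calc u * s = u * a * y := by rw [hsdef]; ring
      _ ≤ _ := this
  have hE1 : 0 ≤ E - 1 := by
    have := Real.add_one_le_exp s; linarith
  have hu2 : u ≤ 2 * E := by
    have : u * s ≤ 2 * E * s := by
      calc u * s ≤ X * (E - 1) := hus
        _ ≤ 2 * (E - 1) := mul_le_mul_of_nonneg_right hX2 hE1
        _ ≤ 2 * (s * E) := by linarith
        _ = _ := by ring
    exact le_of_mul_le_mul_right this hs0
  have hs4 : 4 ≤ s := by
    have : Real.exp 4 ≤ Real.exp s := by linarith
    exact Real.exp_le_exp.mp this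
  have hE2u : 2 * u ≤ E := by nlinarith
  set d := ξ - s with hd
  have hd0 : 0 ≤ d := by linarith
  have h3 : Real.exp ξ = E * Real.exp d := by rw [hE, ← Real.exp_add]; rw [hd]; ring_nf
  have h5 : E * (d + 1) ≤ Real.exp ξ := by
    rw [h3]; exact mul_le_mul_of_nonneg_left (Real.add_one_le_exp d) hE0.le
  -- (E - 1) ≥ us/X ≥ us (1 - y)
  have h6 : u * s * (1 - y) ≤ E - 1 := by
    have h7 : u * s * (1 - y) * X ≤ (E - 1) * X := by
      have : (1 - y) * X ≤ 1 := by linarith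
      have h8 : u * s * ((1 - y) * X) ≤ u * s * 1 := mul_le_mul_of_nonneg_left this (by positivity)
      linarith
    exact le_of_mul_le_mul_right h7 hX0
  have h9 : d * (2 * u) ≤ d * E := mul_le_mul_of_nonneg_left hE2u hd0
  have h10 : u * d ≤ u * (s * y) := by
    have : u * ξ = u * d + u * s := by rw [hd]; ring
    nlinarith
  have hdle : d ≤ s * y := le_of_mul_le_mul_left h10 (by linarith)
  have hsy : s * y ≤ ξ ^ 2 / a := by
    calc s * y ≤ ξ * (ξ / a) := mul_le_mul hs hyle hy.le (by linarith)
      _ = _ := by ring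
  have ht1 : s ≤ a * (X - 1) := mul_le_mul_of_nonneg_left (by linarith) ha.le
  have ht2 : a * (X - 1) ≤ s + 2 * (s * y) := by
    have h11 : X - 1 ≤ y + 2 * (y * y) := by nlinarith
    calc a * (X - 1) ≤ a * (y + 2 * (y * y)) := mul_le_mul_of_nonneg_left h11 ha.le
      _ = _ := by rw [hsdef]; ring
  have hp : 0 ≤ ξ ^ 2 / a := by positivity
  refine ⟨?_, hX2, ?_⟩
  · rw [abs_le]; constructor <;> linarith
  · nlinarith

/-- `1 / (j (j+1) ... (j+k))` -/
noncomputable def ff (k : ℕ) (j : ℕ) : ℝ := (∏ i ∈ Finset.range (k + 1), ((j : ℝ) + i))⁻¹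

lemma ff_diff (k j : ℕ) (hj : 1 ≤ j) : ff k j - ff k (j + 1) = (k + 1) * ff (k + 1) j := by
  have hj' : (0 : ℝ) < j := by exact_mod_cast hj
  unfold ff
  set P := ∏ i ∈ Finset.range k, ((j : ℝ) + 1 + i) with hP
  have hP0 : 0 < P := Finset.prod_pos fun i _ => by positivity
  have e1 : ∏ i ∈ Finset.range (k + 1), ((j : ℝ) + i) = j * P := by
    rw [Finset.prod_range_succ']; simp only [hP, Nat.cast_add, Nat.cast_one, Nat.cast_zero, add_zero]
    rw [mul_comm]; congr 1; apply Finset.prod_congr rfl; intros; ring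
  have e2 : ∏ i ∈ Finset.range (k + 1), (((j + 1 : ℕ) : ℝ) + i) = P * (j + 1 + k) := by
    rw [Finset.prod_range_succ]; push_cast; rfl
  have e3 : ∏ i ∈ Finset.range (k + 1 + 1), ((j : ℝ) + i) = j * P * (j + 1 + k) := by
    rw [Finset.prod_range_succ, e1]; push_cast; ring
  rw [e1, e2, e3]
  have : (j : ℝ) + 1 + k ≠ 0 := by positivity
  field_simp
  ring

lemma ff_nonneg (k j : ℕ) : 0 ≤ ff k j := by
  unfold ff; exact inv_nonneg.mpr (Finset.prod_nonneg fun i _ => by positivity)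

lemma ff_le (k j : ℕ) (c : ℝ) (hc : 0 < c) (hj : c ≤ j) : ff k j ≤ (c ^ (k + 1))⁻¹ := by
  unfold ff
  apply inv_anti₀ (by positivity)
  have : ∏ i ∈ Finset.range (k + 1), c ≤ ∏ i ∈ Finset.range (k + 1), ((j : ℝ) + i) :=
    Finset.prod_le_prod (fun _ _ => hc.le) fun i _ => by
      have : (0 : ℝ) ≤ i := by positivity
      linarith
  simpa using this

lemma ff_top (k a : ℕ) (ha : 1 ≤ a) :
    |(a : ℝ) ^ (k + 1) * ff k (a + 1) - 1| ≤ (k + 1) ^ 2 / a := by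
  have ha' : (0 : ℝ) < a := by exact_mod_cast ha
  have hup : (a : ℝ) ^ (k + 1) * ff k (a + 1) ≤ 1 := by
    have := ff_le k (a + 1) a ha' (by push_cast; linarith)
    calc _ ≤ (a : ℝ) ^ (k + 1) * ((a : ℝ) ^ (k + 1))⁻¹ := by gcongr
      _ = 1 := mul_inv_cancel₀ (by positivity)
  have hlow : 1 - ((k : ℝ) + 1) ^ 2 / a ≤ (a : ℝ) ^ (k + 1) * ff k (a + 1) := by
    have h1 : (((a : ℝ) + k + 1) ^ (k + 1))⁻¹ ≤ ff k (a + 1) := by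
      unfold ff
      apply inv_anti₀ (Finset.prod_pos fun i _ => by positivity)
      have : ∏ i ∈ Finset.range (k + 1), (((a + 1 : ℕ) : ℝ) + i)
          ≤ ∏ i ∈ Finset.range (k + 1), ((a : ℝ) + k + 1) :=
        Finset.prod_le_prod (fun _ _ => by positivity) fun i hi => by
          have : (i : ℝ) ≤ k := by
            have := Finset.mem_range.mp hi
            exact_mod_cast (by omega : i ≤ k)
          push_cast; linarith
      simpa using this
    have hz : (-2 : ℝ) ≤ -(((k : ℝ) + 1) / (a + k + 1)) := by
      have : ((k : ℝ) + 1) / (a + k + 1) ≤ 1 := by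
        rw [div_le_one (by positivity)]; linarith
      linarith
    have h2 := one_add_mul_le_pow hz (k + 1)
    have h3 : 1 + -(((k : ℝ) + 1) / (a + k + 1)) = a / (a + k + 1) := by
      have : (a : ℝ) + k + 1 ≠ 0 := by positivity
      field_simp; ring
    rw [h3, div_pow] at h2
    have h4 : ((k : ℝ) + 1) / (a + k + 1) ≤ (k + 1) / a := by
      gcongr; linarith [(Nat.cast_nonneg k : (0:ℝ) ≤ k)]
    have h5 : ((k : ℝ) + 1) ^ 2 / a = (k + 1) * ((k + 1) / a) := by ring
    have h6 : ((k : ℝ) + 1) * (((k : ℝ) + 1) / (a + k + 1)) ≤ (k + 1) * ((k + 1) / a) := by gcongr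
    push_cast at h2
    calc 1 - ((k : ℝ) + 1) ^ 2 / a ≤ (a : ℝ) ^ (k + 1) / (a + k + 1) ^ (k + 1) := by
          rw [h5]; linarith
      _ ≤ _ := by rw [div_eq_mul_inv]; gcongr
  have hp : (0 : ℝ) ≤ (k + 1) ^ 2 / a := by positivity
  rw [abs_le]; constructor <;> linarith

/-- truncated sums -/
noncomputable def RR (a : ℕ) (x : ℝ) (k : ℕ) : ℝ := ∑ j ∈ Finset.Ico (a / 2 + 1) (a + 1), x ^ j * ff k j

lemma RR_rec (a : ℕ) (x : ℝ) (k : ℕ) :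
    RR a x k * (x - 1) = x ^ (a + 1) * ff k (a + 1) - x ^ (a / 2 + 1) * ff k (a / 2 + 1)
      + x * (k + 1) * RR a x (k + 1) := by
  unfold RR
  have key : ∀ b c : ℕ, 1 ≤ b → b ≤ c →
      (∑ j ∈ Finset.Ico b c, x ^ j * ff k j) * (x - 1) = x ^ c * ff k c - x ^ b * ff k b
      + x * (k + 1) * ∑ j ∈ Finset.Ico b c, x ^ j * ff (k + 1) j := by
    intro b c hb hbc
    induction c, hbc using Nat.le_induction with
    | base => simp
    | succ c hc ih =>
      rw [Finset.sum_Ico_succ_top hc, Finset.sum_Ico_succ_top hc, add_mul, ih]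
      have := ff_diff k c (by omega)
      have e : ff k (c + 1) = ff k c - (k + 1) * ff (k + 1) c := by linarith
      rw [e]; ring
  exact key _ _ (by omega) (by omega)

lemma half_le (a j : ℕ) (h : a / 2 + 1 ≤ j) : (a : ℝ) / 2 ≤ j := by
  have : a ≤ 2 * j := by omega
  have : (a : ℝ) ≤ 2 * j := by exact_mod_cast this
  linarith

lemma RR_bound {a : ℕ} (ha : 1 ≤ a) {x n : ℝ} (hx : 0 < x)
    (hs : ∑ j ∈ Finset.Icc 1 a, x ^ j = n) (k : ℕ) :
    0 ≤ RR a x k ∧ RR a x k ≤ n * (((a : ℝ) / 2) ^ (k + 1))⁻¹ := by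
  have ha' : (0 : ℝ) < a := by exact_mod_cast ha
  unfold RR
  constructor
  · exact Finset.sum_nonneg fun j _ => mul_nonneg (by positivity) (ff_nonneg _ _)
  · calc _ ≤ ∑ j ∈ Finset.Ico (a / 2 + 1) (a + 1), x ^ j * (((a : ℝ) / 2) ^ (k + 1))⁻¹ := by
          apply Finset.sum_le_sum
          intro j hj
          have := ff_le k j (a / 2) (by positivity) (half_le a j (Finset.mem_Ico.mp hj).1)
          gcongr
      _ = (∑ j ∈ Finset.Ico (a / 2 + 1) (a + 1), x ^ j) * (((a : ℝ) / 2) ^ (k + 1))⁻¹ := by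
          rw [Finset.sum_mul]
      _ ≤ _ := by
          rw [← hs]
          gcongr
          intro j hj
          simp only [Finset.mem_Ico, Finset.mem_Icc] at *
          omega

lemma m_split (a : ℕ) (x : ℝ) :
    ∑ j ∈ Finset.Icc 1 a, x ^ j / j = ∑ j ∈ Finset.Icc 1 (a / 2), x ^ j / j + RR a x 0 := by
  have h1 : ∀ c : ℕ, Finset.Icc 1 c = Finset.Ico 1 (c + 1) := by
    intro c; ext; simp [Nat.lt_succ_iff]
  rw [h1, h1, RR, ← Finset.sum_Ico_consecutive _ (by omega : 1 ≤ a / 2 + 1) (by omega : a / 2 + 1 ≤ a + 1)]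
  simp [ff, div_eq_mul_inv]

lemma m_low {a : ℕ} (ha : 1 ≤ a) {x : ℝ} (hx : 1 ≤ x) :
    0 ≤ ∑ j ∈ Finset.Icc 1 (a / 2), x ^ j / j ∧
    ∑ j ∈ Finset.Icc 1 (a / 2), x ^ j / j ≤ x ^ (a / 2) * (1 + Real.log a) := by
  constructor
  · exact Finset.sum_nonneg fun j _ => by positivity
  · calc _ ≤ ∑ j ∈ Finset.Icc 1 (a / 2), x ^ (a / 2) * (j : ℝ)⁻¹ := by
          apply Finset.sum_le_sum
          intro j hj
          rw [div_eq_mul_inv]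
          have := pow_le_pow_right₀ hx (Finset.mem_Icc.mp hj).2
          gcongr
      _ = x ^ (a / 2) * ∑ j ∈ Finset.Icc 1 (a / 2), (j : ℝ)⁻¹ := by rw [Finset.mul_sum]
      _ ≤ x ^ (a / 2) * ∑ j ∈ Finset.Icc 1 a, (j : ℝ)⁻¹ := by
          gcongr
          exact Nat.div_le_self a 2
      _ ≤ _ := by
          gcongr
          have := harmonic_le_one_add_log a
          rw [harmonic_eq_sum_Icc] at this
          push_cast at this
          exact this

set_option maxHeartbeats 2000000 in
lemma rec_bound {a : ℕ} (ha : 1 ≤ a) {x n u L : ℝ} (hn : 0 < n) (hu : u = n / a)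
    (hx1 : 1 < x) (hx2 : x ≤ 2) (hxL : x - 1 ≤ 2 * (L / a)) (hL : 1 ≤ L)
    (ht : |(a : ℝ) * (x - 1) - L| ≤ 3 * (L ^ 2 / a))
    (hb : x ^ (a / 2) ≤ Real.exp (L / 2))
    (hs : ∑ j ∈ Finset.Icc 1 a, x ^ j = n) (k : ℕ) :
    |(a : ℝ) ^ k * RR a x k / u - 1 - (k + 1) / L * ((a : ℝ) ^ (k + 1) * RR a x (k + 1) / u)|
      ≤ (3 * (2 ^ (k + 1) + 1) + 4 * ((k : ℝ) + 1) ^ 2 + 2 + 2 * 2 ^ (k + 1)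
          + 2 * (k + 1) * 2 ^ (k + 2)) * (L ^ 2 / a + Real.exp (L / 2) / u) := by
  have ha' : (1 : ℝ) ≤ a := by exact_mod_cast ha
  have ha0 : (0 : ℝ) < a := by linarith
  have hu0 : 0 < u := by rw [hu]; positivity
  have hrb : ∀ k, 0 ≤ (a : ℝ) ^ k * RR a x k / u ∧ (a : ℝ) ^ k * RR a x k / u ≤ 2 ^ (k + 1) := by
    intro k
    obtain ⟨h1, h2⟩ := RR_bound ha (by linarith) hs k
    refine ⟨by positivity, ?_⟩
    rw [div_le_iff₀ hu0]
    calc _ ≤ (a : ℝ) ^ k * (n * (((a : ℝ) / 2) ^ (k + 1))⁻¹) := by gcongr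
      _ = _ := by rw [hu, div_pow]; field_simp; ring
  have hgeo := geom_aux a x
  rw [hs] at hgeo
  have hrec := RR_rec a x k
  obtain ⟨r0, r1⟩ := hrb k
  obtain ⟨q0, q1⟩ := hrb (k + 1)
  have hA := ff_top k a ha
  have hA1 : (a : ℝ) ^ (k + 1) * ff k (a + 1) ≤ 1 := by
    have := ff_le k (a + 1) a ha0 (by push_cast; linarith)
    calc _ ≤ (a : ℝ) ^ (k + 1) * ((a : ℝ) ^ (k + 1))⁻¹ := by gcongr
      _ = 1 := mul_inv_cancel₀ (by positivity)
  have hA0 : 0 ≤ (a : ℝ) ^ (k + 1) * ff k (a + 1) := mul_nonneg (by positivity) (ff_nonneg _ _)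
  have hB1 : (a : ℝ) ^ (k + 1) * ff k (a / 2 + 1) ≤ 2 ^ (k + 1) := by
    have := ff_le k (a / 2 + 1) (a / 2) (by positivity) (half_le a _ le_rfl)
    calc _ ≤ (a : ℝ) ^ (k + 1) * (((a : ℝ) / 2) ^ (k + 1))⁻¹ := by gcongr
      _ = _ := by rw [div_pow]; field_simp
  have hB0 : 0 ≤ (a : ℝ) ^ (k + 1) * ff k (a / 2 + 1) := mul_nonneg (by positivity) (ff_nonneg _ _)
  set A := (a : ℝ) ^ (k + 1) * ff k (a + 1) with hAdef
  set B := (a : ℝ) ^ (k + 1) * ff k (a / 2 + 1) with hBdef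
  set r := (a : ℝ) ^ k * RR a x k / u with hr
  set q := (a : ℝ) ^ (k + 1) * RR a x (k + 1) / u with hq
  set t := (a : ℝ) * (x - 1) with htdef
  set y := x ^ (a / 2) with hy
  have hy0 : 0 < y := by positivity
  have hpow : x ^ (a + 1) / u = t + x / u := by
    have : x ^ (a + 1) = n * (x - 1) + x := by rw [hgeo]; ring
    rw [this, add_div, htdef, hu]; field_simp
  have hmain : t * r = (t + x / u) * A - x * y / u * B + x * (k + 1) * q := by
    have h1 : t * r = (a : ℝ) ^ (k + 1) / u * (RR a x k * (x - 1)) := by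
      rw [htdef, hr]; ring
    rw [h1, hrec, ← hpow, hAdef, hBdef, hq, hy]; ring
  set G := L ^ 2 / (a : ℝ) + Real.exp (L / 2) / u with hG
  have hLL : L ≤ L ^ 2 := by nlinarith
  have hp1 : 0 ≤ L ^ 2 / (a : ℝ) := by positivity
  have hp2 : 0 ≤ Real.exp (L / 2) / u := by positivity
  have hG0 : 0 ≤ G := by positivity
  have b1 : |(L - t) * r| ≤ 3 * 2 ^ (k + 1) * G := by
    rw [abs_mul, abs_sub_comm, abs_of_nonneg r0]
    calc _ ≤ (3 * (L ^ 2 / a)) * 2 ^ (k + 1) := by gcongr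
      _ ≤ 3 * G * 2 ^ (k + 1) := by gcongr; linarith
      _ = _ := by ring
  have b2 : |t * (A - 1)| ≤ 4 * ((k : ℝ) + 1) ^ 2 * G := by
    have : |t| ≤ 4 * L ^ 2 := by
      have h1 : L ^ 2 / (a : ℝ) ≤ L ^ 2 := div_le_self (by positivity) ha'
      have h2 : L ≤ L ^ 2 := by nlinarith
      rw [abs_le] at ht ⊢
      constructor <;> linarith
    rw [abs_mul]
    calc _ ≤ (4 * L ^ 2) * (((k : ℝ) + 1) ^ 2 / a) := by gcongr
      _ = 4 * ((k : ℝ) + 1) ^ 2 * (L ^ 2 / a) := by ring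
      _ ≤ _ := by gcongr; linarith
  have b3 : |x / u * A| ≤ 2 * G := by
    rw [abs_of_nonneg (by positivity)]
    calc _ ≤ 2 / u * 1 := by gcongr
      _ = 2 * (1 / u) := by ring
      _ ≤ 2 * (Real.exp (L / 2) / u) := by gcongr; exact Real.one_le_exp (by linarith)
      _ ≤ _ := by linarith
  have b4 : |t - L| ≤ 3 * G := by linarith
  have b5 : |x * y / u * B| ≤ 2 * 2 ^ (k + 1) * G := by
    rw [abs_of_nonneg (by positivity)]
    calc _ ≤ 2 * Real.exp (L / 2) / u * 2 ^ (k + 1) := by gcongr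
      _ = 2 * 2 ^ (k + 1) * (Real.exp (L / 2) / u) := by ring
      _ ≤ _ := by gcongr; linarith
  have b6 : |(x - 1) * (k + 1) * q| ≤ 2 * (k + 1) * 2 ^ (k + 2) * G := by
    have hx0 : 0 ≤ x - 1 := by linarith
    rw [abs_of_nonneg (by positivity)]
    calc _ ≤ (2 * (L / a)) * (k + 1) * 2 ^ (k + 1 + 1) := by gcongr
      _ = 2 * (k + 1) * 2 ^ (k + 2) * (L / a) := by ring
      _ ≤ 2 * (k + 1) * 2 ^ (k + 2) * (L ^ 2 / a) := by gcongr
      _ ≤ _ := by gcongr; linarith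
  have hL0 : 0 < L := by linarith
  have e : r - 1 - (k + 1) / L * q = ((L - t) * r + t * (A - 1) + x / u * A + (t - L)
      - x * y / u * B + (x - 1) * (k + 1) * q) / L := by
    rw [eq_div_iff hL0.ne']
    have : (r - 1 - (k + 1) / L * q) * L = L * r - L - (k + 1) * q := by field_simp
    rw [this]; linarith
  rw [e, abs_div, abs_of_pos hL0]
  refine (div_le_self (abs_nonneg _) hL).trans ?_
  rw [abs_le] at b1 b2 b3 b4 b5 b6 ⊢
  constructor <;> linarith

lemma expansion {L : ℕ → ℝ} (hL : Tendsto L atTop atTop) (r : ℕ → ℕ → ℝ)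
    (hb : ∀ k, ∃ C, ∀ᶠ n in atTop, |r k n| ≤ C)
    (hr : ∀ k : ℕ, Negl L (fun n => r k n - 1 - ((k : ℝ) + 1) / L n * r (k + 1) n)) (N : ℕ) :
    Tendsto (fun n => (r 0 n - ∑ k ∈ Finset.range (N + 1), (k.factorial : ℝ) / L n ^ k) * L n ^ N)
      atTop (𝓝 0) := by
  have hL1 : ∀ᶠ n in atTop, 1 ≤ L n := hL.eventually_ge_atTop 1
  have key : ∀ K : ℕ, Negl L (fun n => r 0 n - ∑ k ∈ Finset.range K, (k.factorial : ℝ) / L n ^ k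
      - (K.factorial : ℝ) / L n ^ K * r K n) := by
    intro K
    induction K with
    | zero => simp [Negl]
    | succ K ih =>
      have h2 : Negl L (fun n => (K.factorial : ℝ) / L n ^ K *
          (r K n - 1 - ((K : ℝ) + 1) / L n * r (K + 1) n)) := by
        intro M
        have := ((hr K M).abs).const_mul (K.factorial : ℝ)
        rw [abs_zero, mul_zero] at this
        refine squeeze_zero_norm' ?_ this
        filter_upwards [hL1] with n hn
        rw [Real.norm_eq_abs, mul_assoc, abs_mul]
        gcongr
        rw [abs_of_nonneg (by positivity)]
        exact div_le_self (by positivity) (one_le_pow₀ hn)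
      intro M
      refine ((ih.add h2) M).congr' ?_
      filter_upwards [hL1] with n hn
      have h0 : L n ≠ 0 := by positivity
      congr 1
      rw [Finset.sum_range_succ, Nat.factorial_succ]
      push_cast
      field_simp
      ring
  have h1 := key (N + 1) N
  obtain ⟨C, hC⟩ := hb (N + 1)
  have h2 : Tendsto (fun n => ((N + 1).factorial : ℝ) * r (N + 1) n / L n) atTop (𝓝 0) := by
    have : Tendsto (fun n => ((N + 1).factorial : ℝ) * C / L n) atTop (𝓝 0) :=
      tendsto_const_nhds.div_atTop hL
    refine squeeze_zero_norm' ?_ this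
    filter_upwards [hL1, hC] with n hn hc
    rw [Real.norm_eq_abs, abs_div, abs_mul, abs_of_pos (by linarith : 0 < L n),
      abs_of_nonneg (by positivity : (0 : ℝ) ≤ ((N + 1).factorial : ℝ))]
    gcongr
  have h3 := h1.add h2
  rw [add_zero] at h3
  refine h3.congr' ?_
  filter_upwards [hL1] with n hn
  have h0 : L n ≠ 0 := by positivity
  field_simp
  ring

lemma geo_expansion {L : ℕ → ℝ} (hL : Tendsto L atTop atTop) (t e : ℕ → ℝ)
    (ht : Negl L (fun n => t n - L n)) (he : Negl L e) (N : ℕ) :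
    Tendsto (fun n => (t n / (t n - 1 + e n) - ∑ k ∈ Finset.range (N + 1), 1 / L n ^ k) * L n ^ N)
      atTop (𝓝 0) := by
  have hL3 : ∀ᶠ n in atTop, 4 ≤ L n := hL.eventually_ge_atTop 4
  have ht1 : ∀ᶠ n in atTop, |t n - L n| < 1 := by
    have := ht.tendsto.abs; rw [abs_zero] at this
    exact this.eventually_lt_const one_pos
  have he1 : ∀ᶠ n in atTop, |e n| < 1 := by
    have := he.tendsto.abs; rw [abs_zero] at this
    exact this.eventually_lt_const one_pos
  have h1 : Tendsto (fun n => (L n / (L n - 1) - ∑ k ∈ Finset.range (N + 1), 1 / L n ^ k) * L n ^ N)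
      atTop (𝓝 0) := by
    have : Tendsto (fun n => 1 / (L n - 1)) atTop (𝓝 0) :=
      tendsto_const_nhds.div_atTop (tendsto_atTop_add_const_right _ (-1) hL)
    refine this.congr' ?_
    filter_upwards [hL3] with n hn
    have h0 : L n ≠ 0 := by positivity
    have h1 : L n - 1 ≠ 0 := by linarith
    have : ∑ k ∈ Finset.range (N + 1), 1 / L n ^ k = L n / (L n - 1) - 1 / ((L n - 1) * L n ^ N) := by
      clear ht1 he1
      induction N with
      | zero => simp; field_simp
      | succ N ih => rw [Finset.sum_range_succ, ih]; field_simp; ring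
    rw [this]; field_simp; ring
  have h2 : Negl L (fun n => t n / (t n - 1 + e n) - L n / (L n - 1)) := by
    have hneg : Negl L (fun n => |t n - L n| + |e n| * L n ^ 1) := by
      apply Negl.add
      · intro M
        have := (ht M).abs; rw [abs_zero] at this
        refine this.congr' ?_
        filter_upwards [hL3] with n hn
        rw [abs_mul, abs_of_nonneg (by positivity : 0 ≤ L n ^ M)]
      · apply Negl.mulL
        intro M
        have := (he M).abs; rw [abs_zero] at this
        refine this.congr' ?_
        filter_upwards [hL3] with n hn
        rw [abs_mul, abs_of_nonneg (by positivity : 0 ≤ L n ^ M)]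
    refine hneg.mono ?_
    filter_upwards [hL3, ht1, he1] with n h3 h4 h5
    rw [abs_lt] at h4 h5
    have d1 : 1 ≤ t n - 1 + e n := by linarith
    have d2 : 1 ≤ L n - 1 := by linarith
    have e1 : t n / (t n - 1 + e n) - L n / (L n - 1)
        = (-(t n - L n) + -(e n * L n)) / ((t n - 1 + e n) * (L n - 1)) := by
      have d3 : t n - 1 + e n ≠ 0 := by linarith
      have d4 : L n - 1 ≠ 0 := by linarith
      field_simp
      ring
    have hd : 1 ≤ (t n - 1 + e n) * (L n - 1) := one_le_mul_of_one_le_of_one_le d1 d2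
    rw [e1, abs_div, abs_of_pos (by linarith : 0 < (t n - 1 + e n) * (L n - 1))]
    refine (div_le_self (abs_nonneg _) hd).trans ((abs_add_le _ _).trans ?_)
    rw [abs_neg, abs_neg, abs_mul, abs_of_pos (by linarith : 0 < L n), pow_one]
  have h3 := (h2 N).add h1
  rw [add_zero] at h3
  refine h3.congr (fun n => ?_)
  ring

open Filter Asymptotics in
/-- asymptotic expansion of the variance.  Assume there are
`α₀, α₁ ∈ (0,1)` with `n^{−α₀} α(n) → ∞` (i.e. the liminf is `∞`) and
`n^{−α₁} α(n) → 0` (i.e. the limsup of this nonnegative sequence is `0`).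
Let `x n = x_{n,α}(1)` be the positive solution of `∑_{j=1}^{α(n)} x^j = n`,
`m n = ∑_{j=1}^{α(n)} x(n)^j / j`,
`v n = m n + n x'_{n,α}(1) / x n` with `x'_{n,α}(1)` given by its explicit
formula, and let `ξ u` be the nonzero solution of `exp ξ = 1 + u ξ` (for `u > 1`).
Then for every `N ≥ 2`,
`v n = (n/α(n)) ∑_{k=2}^{N} (k!−1)/ξ(n/α(n))^k + o((n/α(n)) ξ(n/α(n))^{−N})`. -/
theorem stmt_2 (α : ℕ → ℕ) (hα1 : ∀ n, 1 ≤ α n)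
    (α₀ α₁ : ℝ) (h₀ : α₀ ∈ Set.Ioo (0 : ℝ) 1) (h₁ : α₁ ∈ Set.Ioo (0 : ℝ) 1)
    (hlo : Tendsto (fun n : ℕ => (n : ℝ) ^ (-α₀) * α n) atTop atTop)
    (hhi : Tendsto (fun n : ℕ => (n : ℝ) ^ (-α₁) * α n) atTop (nhds 0))
    (x : ℕ → ℝ)
    (hx : ∀ n, 1 ≤ n → 0 < x n ∧ ∑ j ∈ Finset.Icc 1 (α n), x n ^ j = (n : ℝ))
    (m v : ℕ → ℝ) (hm : ∀ n, m n = ∑ j ∈ Finset.Icc 1 (α n), x n ^ j / j)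
    (hv : ∀ n, v n = m n + (n : ℝ) *
      ((x n - 1) * x n / (1 - (α n : ℝ) * (x n - 1) - (α n : ℝ) * x n / n)) / x n)
    (ξ : ℝ → ℝ) (hξ : ∀ u : ℝ, 1 < u → ξ u ≠ 0 ∧ Real.exp (ξ u) = 1 + u * ξ u)
    (N : ℕ) (hN : 2 ≤ N) :
    (fun n : ℕ => v n - (n : ℝ) / α n *
        ∑ k ∈ Finset.Icc 2 N, ((k.factorial : ℝ) - 1) / ξ ((n : ℝ) / α n) ^ k)
      =o[atTop] fun n : ℕ => (n : ℝ) / α n / ξ ((n : ℝ) / α n) ^ N := by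
  classical
  obtain ⟨h00, h01⟩ := h₀
  obtain ⟨h10, h11⟩ := h₁
  have hapos : ∀ n, (1 : ℝ) ≤ α n := fun n => by exact_mod_cast hα1 n
  set u : ℕ → ℝ := fun n => (n : ℝ) / α n with hu
  set L : ℕ → ℝ := fun n => ξ (u n) with hLdef
  have hn1 : ∀ᶠ n : ℕ in atTop, 1 ≤ n := eventually_ge_atTop 1
  -- lower bound on u
  have hulow : ∀ᶠ n : ℕ in atTop, (n : ℝ) ^ (1 - α₁) ≤ u n := by
    filter_upwards [hn1, hhi.eventually_lt_const one_pos] with n hn h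
    have hn0 : (0 : ℝ) < n := by exact_mod_cast hn
    have ha := hapos n
    rw [hu]
    simp only
    rw [le_div_iff₀ (by linarith), sub_eq_add_neg, Real.rpow_add hn0, Real.rpow_one, mul_assoc]
    exact mul_le_of_le_one_right hn0.le h.le
  have halow : ∀ᶠ n : ℕ in atTop, (n : ℝ) ^ α₀ ≤ α n := by
    filter_upwards [hn1, hlo.eventually_ge_atTop 1] with n hn h
    have hn0 : (0 : ℝ) < n := by exact_mod_cast hn
    rw [Real.rpow_neg hn0.le, inv_mul_eq_div, le_div_iff₀ (by positivity), one_mul] at h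
    exact h
  have huT : Tendsto u atTop atTop := by
    refine tendsto_atTop_mono' _ hulow ?_
    exact (tendsto_rpow_atTop (by linarith)).comp tendsto_natCast_atTop_atTop
  have hu1 : ∀ᶠ n in atTop, 1 < u n := huT.eventually_gt_atTop 1
  have hLT : Tendsto L atTop atTop := by
    refine tendsto_atTop_mono' _ ?_ (Real.tendsto_log_atTop.comp huT)
    filter_upwards [hu1] with n hn
    obtain ⟨h1, h2⟩ := hξ (u n) hn
    have := (xi_facts hn h1 h2).2.1
    exact (Real.log_le_iff_le_exp (by linarith)).mpr this
  have hL1 : ∀ᶠ n in atTop, 1 ≤ L n := hLT.eventually_ge_atTop 1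
  have hna : Negl L (fun n => 1 / (α n : ℝ)) := by
    refine ((negl_exp hLT (by linarith : 0 < α₀ / 2)).const_mul ((3 : ℝ) ^ α₀)).mono ?_
    filter_upwards [hn1, hu1, halow] with n hn hun ha
    obtain ⟨h1, h2⟩ := hξ (u n) hun
    have h3 := (xi_facts hun h1 h2).2.2
    have hn0 : (1 : ℝ) ≤ n := by exact_mod_cast hn
    have hun' : u n ≤ n := div_le_self (by linarith) (hapos n)
    have h4 : Real.exp (L n / 2) ≤ 3 * n := by
      have : Real.exp (L n / 2) ≤ 2 * u n + 1 := h3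
      linarith
    have h5 : Real.exp (L n / 2) ^ α₀ ≤ (3 * n) ^ α₀ :=
      Real.rpow_le_rpow (Real.exp_pos _).le h4 h00.le
    rw [Real.mul_rpow (by norm_num) (by linarith), ← Real.exp_mul] at h5
    have hap := hapos n
    rw [abs_of_nonneg (by positivity), div_le_iff₀ (by linarith)]
    have h6 : Real.exp (L n / 2 * α₀) ≤ 3 ^ α₀ * α n := h5.trans (by gcongr)
    have h7 : Real.exp (-(α₀ / 2) * L n) * Real.exp (L n / 2 * α₀) = 1 := by
      rw [← Real.exp_add]; ring_nf; simp
    have := mul_le_mul_of_nonneg_left h6 (Real.exp_pos (-(α₀ / 2) * L n)).le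
    rw [h7] at this
    linarith
  have hne : Negl L (fun n => Real.exp (L n / 2) / u n) := by
    refine (((negl_exp hLT (by norm_num : (0 : ℝ) < 1 / 2)).mulL 1).const_mul 2).mono ?_
    filter_upwards [hu1, hL1] with n hun hL
    obtain ⟨h1, h2⟩ := hξ (u n) hun
    have h2' : Real.exp (L n) = 1 + u n * L n := h2
    rw [abs_of_nonneg (by positivity), div_le_iff₀ (by linarith)]
    have h3 : Real.exp (L n) = Real.exp (L n / 2) * Real.exp (L n / 2) := by
      rw [← Real.exp_add]; ring_nf
    have h4 : Real.exp (-(1 / 2) * L n) * Real.exp (L n / 2) = 1 := by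
      rw [← Real.exp_add]; ring_nf; simp
    have h5 : Real.exp (L n) ≤ 2 * (u n * L n) := by
      have : 1 ≤ u n * L n := one_le_mul_of_one_le_of_one_le hun.le hL
      linarith
    have h6 := mul_le_mul_of_nonneg_left h5 (Real.exp_pos (-(1 / 2) * L n)).le
    rw [h3, ← mul_assoc, h4, one_mul] at h6
    linarith
  have hG : Negl L (fun n => L n ^ 2 / (α n : ℝ) + Real.exp (L n / 2) / u n) := by
    refine Negl.add ?_ hne
    intro M
    refine ((hna.mulL 2) M).congr (fun n => ?_)
    ring
  -- pointwise package
  have hpack : ∀ᶠ n : ℕ in atTop, 1 < x n ∧ x n ≤ 2 ∧ x n - 1 ≤ 2 * (L n / α n) ∧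
      |(α n : ℝ) * (x n - 1) - L n| ≤ 3 * (L n ^ 2 / α n) ∧
      x n ^ (α n / 2) ≤ Real.exp (L n / 2) := by
    have hs : ∀ᶠ n : ℕ in atTop, 1 / (α n : ℝ) * L n ^ 1 < 1 / 2 :=
      (hna 1).eventually_lt_const (by norm_num)
    filter_upwards [hn1, hu1, hL1, hs, huT.eventually_ge_atTop (2 * Real.exp 4)] with n hn hun hL hs hu4
    obtain ⟨hx0, hxs⟩ := hx n hn
    obtain ⟨h1, h2⟩ := hξ (u n) hun
    have h2' : Real.exp (L n) = 1 + u n * L n := h2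
    have hap := hapos n
    have ha0 : (0 : ℝ) < α n := by linarith
    have hun' : u n * α n = n := div_mul_cancel₀ _ ha0.ne'
    have hx1 : 1 < x n := one_lt_x hx0 hxs (by nlinarith)
    have hgeo := geom_aux (α n) (x n)
    rw [hxs] at hgeo
    have hexp : Real.exp (Real.log (x n)) = x n := Real.exp_log hx0
    have hpow : ∀ b : ℕ, Real.exp (b * Real.log (x n)) = x n ^ b := by
      intro b; rw [Real.exp_nat_mul, hexp]
    have hxe : Real.exp (Real.log (x n)) * (Real.exp (α n * Real.log (x n)) - 1)
        = u n * α n * (Real.exp (Real.log (x n)) - 1) := by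
      rw [hpow, hexp, hun', hgeo]
    have hy : 0 < Real.log (x n) := Real.log_pos hx1
    have hsm : L n ≤ α n / 2 := by
      rw [pow_one, one_div, inv_mul_eq_div, div_lt_iff₀ ha0] at hs
      linarith
    obtain ⟨g1, g2, g3⟩ := t_close ha0 hL hu4 h2' hy hxe hsm
    have g4 := s_le_xi ha0 hL hun h2' hxe
    rw [hexp] at g1 g2 g3
    refine ⟨hx1, g2, g3, g1, ?_⟩
    rw [← hpow, Real.exp_le_exp]
    have : ((α n / 2 : ℕ) : ℝ) ≤ (α n : ℝ) / 2 := Nat.cast_div_le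
    calc _ ≤ (α n : ℝ) / 2 * Real.log (x n) := by gcongr
      _ ≤ _ := by linarith
  set r : ℕ → ℕ → ℝ := fun k n => (α n : ℝ) ^ k * RR (α n) (x n) k / u n with hr
  have hrb : ∀ k, ∃ C, ∀ᶠ n in atTop, |r k n| ≤ C := by
    intro k
    refine ⟨2 ^ (k + 1), ?_⟩
    filter_upwards [hn1, hu1] with n hn hun
    obtain ⟨hx0, hxs⟩ := hx n hn
    obtain ⟨g1, g2⟩ := RR_bound (hα1 n) hx0 hxs k
    have ha0 : (0 : ℝ) < α n := by linarith [hapos n]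
    have hun0 : 0 < u n := by linarith
    rw [abs_of_nonneg (by positivity), hr]
    simp only
    rw [div_le_iff₀ hun0]
    calc _ ≤ (α n : ℝ) ^ k * (n * (((α n : ℝ) / 2) ^ (k + 1))⁻¹) := by gcongr
      _ = _ := by rw [hu, div_pow]; field_simp; ring
  have hrr : ∀ k : ℕ, Negl L (fun n => r k n - 1 - ((k : ℝ) + 1) / L n * r (k + 1) n) := by
    intro k
    refine (hG.const_mul (3 * (2 ^ (k + 1) + 1) + 4 * ((k : ℝ) + 1) ^ 2 + 2 + 2 * 2 ^ (k + 1)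
          + 2 * (k + 1) * 2 ^ (k + 2))).mono ?_
    filter_upwards [hn1, hL1, hpack] with n hn hL hp
    obtain ⟨p1, p2, p3, p4, p5⟩ := hp
    exact rec_bound (hα1 n) (by exact_mod_cast hn) rfl p1 p2 p3 hL p4 p5 (hx n hn).2 k
  have hE1 := expansion hLT r hrb hrr N
  have hE2 := geo_expansion hLT (fun n => (α n : ℝ) * (x n - 1)) (fun n => x n / u n) ?_ ?_ N
  rotate_left
  · refine (hG.const_mul 3).mono ?_
    filter_upwards [hpack, hu1] with n hp hun
    have : 0 ≤ Real.exp (L n / 2) / u n := by positivity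
    linarith [hp.2.2.2.1]
  · refine (hne.const_mul 2).mono ?_
    filter_upwards [hpack, hu1, hL1] with n hp hun hL
    have hx0 : 0 < x n := by linarith [hp.1]
    have : 1 ≤ Real.exp (L n / 2) := Real.one_le_exp (by linarith)
    rw [abs_of_nonneg (by positivity), ← mul_div_assoc]
    gcongr
    linarith [hp.2.1]
  have hE3 : Negl L (fun n => (∑ j ∈ Finset.Icc 1 (α n / 2), x n ^ j / j) / u n) := by
    refine ((hne.mulL 1).const_mul (1 + 1 / (1 - α₁))).mono ?_
    filter_upwards [hpack, hu1, hL1, hulow, hn1] with n hp hun hL hul hn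
    obtain ⟨g1, g2⟩ := m_low (hα1 n) hp.1.le
    have hun0 : 0 < u n := by linarith
    have hn0 : (0 : ℝ) < n := by exact_mod_cast hn
    have hap := hapos n
    rw [abs_of_nonneg (by positivity)]
    obtain ⟨h1, h2⟩ := hξ (u n) hun
    have hexp : u n ≤ Real.exp (L n) := (xi_facts hun h1 h2).2.1
    have hd : 0 < 1 - α₁ := by linarith
    have hlog : Real.log n ≤ L n / (1 - α₁) := by
      rw [le_div_iff₀ hd, mul_comm, ← Real.log_rpow hn0]
      exact (Real.log_le_iff_le_exp (by positivity)).mpr (hul.trans hexp)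
    have hun' : u n * α n = n := div_mul_cancel₀ _ (by positivity)
    have hlog2 : Real.log (α n) ≤ Real.log n := Real.log_le_log (by linarith) (by nlinarith)
    have hlog3 : 0 ≤ Real.log (α n) := Real.log_nonneg hap
    calc _ ≤ Real.exp (L n / 2) * (L n + L n / (1 - α₁)) / u n := by
          gcongr
          refine g2.trans ?_
          have := hp.2.2.2.2
          gcongr
          linarith
      _ = _ := by ring
  have hfin := ((hE1.sub hE2).add (hE3 N))
  rw [sub_zero, add_zero] at hfin
  rw [Asymptotics.isLittleO_iff_tendsto']
  · refine hfin.congr' ?_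
    filter_upwards [hpack, hu1, hL1, hn1] with n hp hun hL hn
    have hn0 : (0 : ℝ) < n := by exact_mod_cast hn
    have ha0 : (0 : ℝ) < α n := by linarith [hapos n]
    have hun0 : 0 < u n := by linarith
    have hL0 : 0 < L n := by linarith
    have hx0 : 0 < x n := by linarith [hp.1]
    have hun' : u n * α n = n := div_mul_cancel₀ _ (by positivity)
    have hsum : ∑ k ∈ Finset.Icc 2 N, ((k.factorial : ℝ) - 1) / L n ^ k
        = ∑ k ∈ Finset.range (N + 1), (k.factorial : ℝ) / L n ^ k
          - ∑ k ∈ Finset.range (N + 1), 1 / L n ^ k := by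
      rw [← Finset.sum_sub_distrib]
      apply Finset.sum_subset_zero_on_sdiff
      · intro k hk
        simp only [Finset.mem_Icc, Finset.mem_range] at *
        omega
      · intro k hk
        simp only [Finset.mem_sdiff, Finset.mem_Icc, Finset.mem_range] at hk
        have : k = 0 ∨ k = 1 := by omega
        rcases this with rfl | rfl <;> simp
      · intro k _
        rw [sub_div]
    have hvn : v n = u n * (r 0 n + (∑ j ∈ Finset.Icc 1 (α n / 2), x n ^ j / j) / u n
        - (α n : ℝ) * (x n - 1) / ((α n : ℝ) * (x n - 1) - 1 + x n / u n)) := by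
      rw [hv, hm, m_split]
      have e1 : (α n : ℝ) * x n / n = x n / u n := by rw [← hun']; field_simp
      have e2 : 1 - (α n : ℝ) * (x n - 1) - x n / u n
          = -((α n : ℝ) * (x n - 1) - 1 + x n / u n) := by ring
      rw [e1, e2]
      set D := (α n : ℝ) * (x n - 1) - 1 + x n / u n with hD
      have e3 : (n : ℝ) * ((x n - 1) * x n / -D) / x n = -(u n * ((α n : ℝ) * (x n - 1) / D)) := by
        rw [div_neg, ← hun']; field_simp
      rw [e3, hr]
      field_simp
      ring
    have hsum' := hsum
    change _ = (v n - u n * ∑ k ∈ Finset.Icc 2 N, ((k.factorial : ℝ) - 1) / L n ^ k)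
      / (u n / L n ^ N)
    rw [hsum, hvn]
    field_simp
    ring
  · filter_upwards [hu1, hL1] with n hun hL h
    exfalso
    have : 0 < u n / L n ^ N := by positivity
    exact this.ne' h
end

section
/- Let α : ℕ → ℕ with α(n) ≥ 1 and let 0 < δ < 1 be such that n/(w·α(n)) > 1 for all sufficiently large n and all w ∈ (1−δ, 1+δ), and assume α(n)/n → 0. Then lim_{n→∞} (α(n)/n)·h̃''_{n,α}(1) = −1, where h̃''_{n,α} is the second derivative of h̃_{n,α}. -/
def SS (a k : ℕ) (y : ℝ) : ℝ := ∑ j ∈ Finset.Icc 1 a, (j : ℝ) ^ k * y ^ j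

lemma SS_pos (a k : ℕ) (ha : 1 ≤ a) (y : ℝ) (hy : 0 < y) : 0 < SS a k y := by
  unfold SS
  apply Finset.sum_pos
  · intro j hj
    have : 1 ≤ j := (Finset.mem_Icc.1 hj).1
    have : (0 : ℝ) < j := by exact_mod_cast this
    positivity
  · exact ⟨1, Finset.mem_Icc.2 ⟨le_refl _, ha⟩⟩

lemma SS_deriv (a k : ℕ) (y : ℝ) (hy : 0 < y) :
    HasDerivAt (SS a k) (SS a (k + 1) y / y) y := by
  unfold SS
  rw [Finset.sum_div]
  apply HasDerivAt.fun_sum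
  intro j hj
  have h1 : 1 ≤ j := (Finset.mem_Icc.1 hj).1
  refine HasDerivAt.congr_deriv ((hasDerivAt_pow j y).const_mul ((j : ℝ) ^ k)) ?_
  obtain ⟨i, rfl⟩ : ∃ i, j = i + 1 := ⟨j - 1, by omega⟩
  simp only [Nat.add_sub_cancel]
  field_simp
  ring

lemma Sm_deriv (a : ℕ) (y : ℝ) (hy : 0 < y) :
    HasDerivAt (fun y : ℝ => ∑ j ∈ Finset.Icc 1 a, y ^ j / (j : ℝ)) (SS a 0 y / y) y := by
  unfold SS
  rw [Finset.sum_div]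
  apply HasDerivAt.fun_sum
  intro j hj
  have h1 : 1 ≤ j := (Finset.mem_Icc.1 hj).1
  refine HasDerivAt.congr_deriv ((hasDerivAt_pow j y).div_const (j : ℝ)) ?_
  obtain ⟨i, rfl⟩ : ∃ i, j = i + 1 := ⟨j - 1, by omega⟩
  have : ((i + 1 : ℕ) : ℝ) ≠ 0 := by positivity
  simp only [Nat.add_sub_cancel]
  field_simp
  ring

lemma SS_succ_le (a k : ℕ) (y : ℝ) (hy : 0 < y) : SS a (k + 1) y ≤ a * SS a k y := by
  unfold SS
  rw [Finset.mul_sum]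
  apply Finset.sum_le_sum
  intro j hj
  have h1 : (j : ℝ) ≤ a := by exact_mod_cast (Finset.mem_Icc.1 hj).2
  have : 0 ≤ (j : ℝ) ^ k * y ^ j := by positivity
  calc (j : ℝ) ^ (k + 1) * y ^ j = j * ((j : ℝ) ^ k * y ^ j) := by ring
    _ ≤ _ := by gcongr

lemma SS_tele (a : ℕ) (y : ℝ) :
    (y - 1) * (a * SS a 0 y - SS a 1 y) = SS a 0 y - a * y := by
  have key : ∀ k, SS (a + 1) k y = SS a k y + ((a + 1 : ℕ) : ℝ) ^ k * y ^ (a + 1) := by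
    intro k
    unfold SS
    rw [Finset.sum_Icc_succ_top (by omega)]
  have geo : ∀ b : ℕ, (y - 1) * SS b 0 y = y ^ (b + 1) - y := by
    intro b
    induction b with
    | zero => simp [SS]
    | succ b ih =>
      have : SS (b + 1) 0 y = SS b 0 y + y ^ (b + 1) := by
        unfold SS
        rw [Finset.sum_Icc_succ_top (by omega)]
        simp
      rw [this, mul_add, ih]
      ring
  clear key
  induction a with
  | zero => simp [SS]
  | succ a ih =>
    have key : ∀ k, SS (a + 1) k y = SS a k y + ((a + 1 : ℕ) : ℝ) ^ k * y ^ (a + 1) := by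
      intro k
      unfold SS
      rw [Finset.sum_Icc_succ_top (by omega)]
    have g := geo a
    rw [key 0, key 1]
    push_cast
    linear_combination ih + g

lemma SS_zero_lower (a : ℕ) (ha : 1 ≤ a) (y z : ℝ) (hy : 0 < y) (hyz : y ≤ z) :
    z - y ≤ SS a 0 z - SS a 0 y := by
  unfold SS
  rw [← Finset.sum_sub_distrib]
  have := Finset.single_le_sum (f := fun j : ℕ => (j : ℝ) ^ 0 * z ^ j - (j : ℝ) ^ 0 * y ^ j)
    (s := Finset.Icc 1 a) (fun j _ => by
      have : y ^ j ≤ z ^ j := by gcongr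
      simpa using this) (Finset.mem_Icc.2 ⟨le_refl 1, ha⟩)
  simpa using this

lemma SS_abs (a : ℕ) (ha : 1 ≤ a) (y z : ℝ) (hy : 0 < y) (hz : 0 < z) :
    |z - y| ≤ |SS a 0 z - SS a 0 y| := by
  rcases le_total y z with h | h
  · rw [abs_of_nonneg (by linarith)]
    exact (SS_zero_lower a ha y z hy h).trans (le_abs_self _)
  · rw [abs_sub_comm, abs_sub_comm (SS a 0 z), abs_of_nonneg (by linarith)]
    exact (SS_zero_lower a ha z y hz h).trans (le_abs_self _)

lemma X_cont (a : ℕ) (ha : 1 ≤ a) (N : ℝ) (X : ℝ → ℝ)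
    (hX : ∀ w, 0 < w → 0 < X w ∧ SS a 0 (X w) = N / w) (w : ℝ) (hw : 0 < w) :
    ContinuousAt X w := by
  have h1 : Filter.Tendsto (fun v => |N / v - N / w|) (nhds w) (nhds 0) := by
    have : ContinuousAt (fun v => |N / v - N / w|) w := by
      apply ContinuousAt.abs
      apply ContinuousAt.sub _ continuousAt_const
      exact continuousAt_const.div continuousAt_id hw.ne'
    simpa [ContinuousAt] using this
  rw [ContinuousAt, tendsto_iff_dist_tendsto_zero]
  apply squeeze_zero' _ _ h1
  · exact Filter.Eventually.of_forall fun _ => dist_nonneg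
  · filter_upwards [lt_mem_nhds hw] with v hv
    rw [Real.dist_eq, ← (hX v hv).2, ← (hX w hw).2]
    exact SS_abs a ha _ _ (hX w hw).1 (hX v hv).1

lemma X_deriv (a : ℕ) (ha : 1 ≤ a) (N : ℝ) (hN : 0 < N) (X : ℝ → ℝ)
    (hX : ∀ w, 0 < w → 0 < X w ∧ SS a 0 (X w) = N / w) (w : ℝ) (hw : 0 < w) :
    HasDerivAt X (X w * (-N / (w ^ 2 * SS a 1 (X w)))) w := by
  obtain ⟨hp, he⟩ := hX w hw
  have h1 := SS_pos a 1 ha _ hp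
  have h0 := SS_pos a 0 ha _ hp
  have hf := (hasDerivAt_const (X w) N).div (SS_deriv a 0 (X w) hp) h0.ne'
  have := HasDerivAt.of_local_left_inverse (X_cont a ha N X hX w hw) hf (by
    simp only [zero_mul, zero_add, zero_sub]
    exact div_ne_zero (neg_ne_zero.2 (by positivity)) (by positivity)) (by
    filter_upwards [lt_mem_nhds hw] with v hv
    simp only [Pi.div_apply]
    rw [(hX v hv).2]
    field_simp)
  refine HasDerivAt.congr_deriv (this) ?_
  rw [he]
  simp only [zero_add]
  field_simp
  try ring

lemma h_deriv2 (a : ℕ) (ha : 1 ≤ a) (N : ℝ) (hN : 0 < N) (X : ℝ → ℝ)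
    (hX : ∀ w, 0 < w → 0 < X w ∧ SS a 0 (X w) = N / w) (h : ℝ → ℝ)
    (hh : ∀ w : ℝ, 0 < w →
      h w = w * ∑ j ∈ Finset.Icc 1 a, X w ^ j / j - N * Real.log (X w)
        - 1 / 2 * Real.log (2 * Real.pi * w * SS a 1 (X w))) :
    iteratedDeriv 2 h 1 = - N ^ 2 / SS a 1 (X 1) + 1 / 2 - N * SS a 2 (X 1) / SS a 1 (X 1) ^ 2
      - N ^ 2 / 2 * (SS a 3 (X 1) / SS a 1 (X 1) ^ 3 - 2 * SS a 2 (X 1) ^ 2 / SS a 1 (X 1) ^ 4) := by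
  have hS : ∀ k w, 0 < w → HasDerivAt (fun w => SS a k (X w))
      (SS a (k + 1) (X w) * (-N / (w ^ 2 * SS a 1 (X w)))) w := by
    intro k w hw
    have hp := (hX w hw).1
    have := (SS_deriv a k (X w) hp).comp w (X_deriv a ha N hN X hX w hw)
    refine HasDerivAt.congr_deriv (this) ?_
    field_simp
  have hM : ∀ w, 0 < w → HasDerivAt (fun w => ∑ j ∈ Finset.Icc 1 a, X w ^ j / (j : ℝ))
      (N / w * (-N / (w ^ 2 * SS a 1 (X w)))) w := by
    intro w hw
    have hp := (hX w hw).1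
    have := (Sm_deriv a (X w) hp).comp w (X_deriv a ha N hN X hX w hw)
    refine HasDerivAt.congr_deriv (this) ?_
    rw [(hX w hw).2]
    field_simp
  have hd1 : ∀ w, 0 < w → HasDerivAt h (∑ j ∈ Finset.Icc 1 a, X w ^ j / (j : ℝ)
      - 1 / (2 * w) + N * SS a 2 (X w) / (2 * w ^ 2 * SS a 1 (X w) ^ 2)) w := by
    intro w hw
    have hp := (hX w hw).1
    have h1 := SS_pos a 1 ha _ hp
    have e : h =ᶠ[nhds w] fun w => w * ∑ j ∈ Finset.Icc 1 a, X w ^ j / j - N * Real.log (X w)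
        - 1 / 2 * Real.log (2 * Real.pi * w * SS a 1 (X w)) := by
      filter_upwards [lt_mem_nhds hw] with v hv using hh v hv
    refine HasDerivAt.congr_of_eventuallyEq ?_ e
    have hpi := Real.pi_pos
    have d := (((hasDerivAt_id w).mul (hM w hw)).sub
      (((X_deriv a ha N hN X hX w hw).log hp.ne').const_mul N)).sub
      (((((hasDerivAt_id w).const_mul (2 * Real.pi)).mul (hS 1 w hw)).log (by
        simp only [Pi.mul_apply, id]; positivity)).const_mul (1 / 2))
    refine HasDerivAt.congr_deriv (d) ?_
    simp only [Pi.mul_apply, id]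
    field_simp
    ring
  have e : deriv h =ᶠ[nhds 1] fun w => (∑ j ∈ Finset.Icc 1 a, X w ^ j / (j : ℝ)
      - 1 / (2 * w) + N * SS a 2 (X w) / (2 * w ^ 2 * SS a 1 (X w) ^ 2)) := by
    filter_upwards [lt_mem_nhds one_pos] with v hv using (hd1 v hv).deriv
  have h22 : iteratedDeriv 2 h = deriv (deriv h) := by
    rw [iteratedDeriv_succ, iteratedDeriv_one]
  rw [h22, e.deriv_eq]
  have hp := (hX 1 one_pos).1
  have h1 := SS_pos a 1 ha _ hp
  apply HasDerivAt.deriv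
  have d := ((hM 1 one_pos).sub ((hasDerivAt_const (1 : ℝ) (1 : ℝ)).div
      ((hasDerivAt_id (1 : ℝ)).const_mul 2) (by norm_num))).add
    (((hS 2 1 one_pos).const_mul N).div
      ((((hasDerivAt_id (1 : ℝ)).pow 2).const_mul 2).mul ((hS 1 1 one_pos).pow 2))
      (by simp only [Pi.mul_apply, Pi.pow_apply, id]; positivity))
  refine HasDerivAt.congr_deriv (d) ?_
  simp only [Pi.mul_apply, Pi.pow_apply, id]
  norm_num
  field_simp
  ring

/-- bound for the main error term -/
lemma final_bound (a : ℕ) (ha : 1 ≤ a) (N : ℝ) (hN : 0 < N) (y : ℝ) (hy : 0 < y)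
    (r : ℝ) (hr : r = a * N / SS a 1 y) (hr2 : r ≤ 2) :
    |a / N * (- N ^ 2 / SS a 1 y + 1 / 2 - N * SS a 2 y / SS a 1 y ^ 2
      - N ^ 2 / 2 * (SS a 3 y / SS a 1 y ^ 3 - 2 * SS a 2 y ^ 2 / SS a 1 y ^ 4)) + r|
      ≤ a / N * 9 := by
  have h1 := SS_pos a 1 ha y hy
  have h2 := SS_pos a 2 ha y hy
  have h3 := SS_pos a 3 ha y hy
  have l2 : SS a 2 y ≤ a * SS a 1 y := SS_succ_le a 1 y hy
  have l3 : SS a 3 y ≤ a * SS a 2 y := SS_succ_le a 2 y hy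
  have ha0 : (0 : ℝ) < a := by exact_mod_cast ha
  set s := SS a 1 y
  set p := SS a 2 y
  set q := SS a 3 y
  have hr0 : 0 < r := by rw [hr]; positivity
  have l3' : q ≤ a ^ 2 * s := by nlinarith
  have A : N * p / s ^ 2 ≤ r := by
    rw [hr, div_le_div_iff₀ (by positivity) h1]
    nlinarith [mul_le_mul_of_nonneg_left l2 (by positivity : 0 ≤ N * s)]
  have B : N ^ 2 * q / s ^ 3 ≤ r ^ 2 := by
    rw [hr, div_pow, div_le_div_iff₀ (by positivity) (by positivity)]
    nlinarith [mul_le_mul_of_nonneg_left l3' (by positivity : 0 ≤ N ^ 2 * s ^ 2)]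
  have C : N ^ 2 * p ^ 2 / s ^ 4 ≤ r ^ 2 := by
    calc N ^ 2 * p ^ 2 / s ^ 4 = (N * p / s ^ 2) ^ 2 := by field_simp
      _ ≤ r ^ 2 := by gcongr
  have A0 : 0 ≤ N * p / s ^ 2 := by positivity
  have B0 : 0 ≤ N ^ 2 * q / s ^ 3 := by positivity
  have C0 : 0 ≤ N ^ 2 * p ^ 2 / s ^ 4 := by positivity
  have e : a / N * (- N ^ 2 / s + 1 / 2 - N * p / s ^ 2
      - N ^ 2 / 2 * (q / s ^ 3 - 2 * p ^ 2 / s ^ 4)) + r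
      = a / N * (1 / 2 - N * p / s ^ 2 - (N ^ 2 * q / s ^ 3) / 2 + N ^ 2 * p ^ 2 / s ^ 4) := by
    rw [hr]; field_simp; ring
  rw [e, abs_mul, abs_of_pos (by positivity : 0 < a / N)]
  gcongr
  have : r ^ 2 ≤ 4 := by nlinarith
  rw [abs_le]
  constructor <;> linarith

lemma r_bound (a : ℕ) (ha : 1 ≤ a) (N : ℝ) (hN : 0 < N) (y : ℝ) (hy : 0 < y)
    (he : SS a 0 y = N) (hbig : 1 < N / a) :
    1 - 1 / Real.log (N / a) ≤ SS a 1 y / (a * N) ∧ SS a 1 y / (a * N) ≤ 1 := by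
  have ha0 : (0 : ℝ) < a := by exact_mod_cast ha
  have hL := Real.log_pos hbig
  constructor
  · have hy1 : 1 < y := by
      by_contra hc
      push Not at hc
      have : SS a 0 y ≤ a := by
        unfold SS
        calc _ ≤ ∑ j ∈ Finset.Icc 1 a, (1 : ℝ) := by
              apply Finset.sum_le_sum
              intro j _
              simpa using pow_le_one₀ hy.le hc
          _ = a := by simp
      rw [lt_div_iff₀ ha0] at hbig
      linarith
    have hle : SS a 0 y ≤ a * y ^ a := by
      unfold SS
      calc _ ≤ ∑ j ∈ Finset.Icc 1 a, y ^ a := by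
            apply Finset.sum_le_sum
            intro j hj
            simpa using pow_le_pow_right₀ hy1.le (Finset.mem_Icc.1 hj).2
        _ = a * y ^ a := by simp
    have hlog : Real.log (N / a) ≤ a * (y - 1) := by
      calc Real.log (N / a) ≤ Real.log (y ^ a) := by
            apply Real.log_le_log (by positivity)
            rw [div_le_iff₀ ha0]; linarith
        _ = a * Real.log y := by rw [Real.log_pow]
        _ ≤ a * (y - 1) := by
            gcongr
            exact Real.log_le_sub_one_of_pos hy
    have ht := SS_tele a y
    rw [he] at ht
    set s := SS a 1 y
    set L := Real.log (N / a)
    have hD : 0 ≤ a * N - s := by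
      have := SS_succ_le a 0 y hy
      rw [he] at this
      simpa using this
    have h1 : L * (a * N - s) ≤ a * N := by
      calc L * (a * N - s) ≤ (a * (y - 1)) * (a * N - s) := by gcongr
        _ = a * (N - a * y) := by rw [← ht]; ring
        _ ≤ a * N := by
          have : 0 ≤ a * y := by positivity
          gcongr; linarith
    rw [le_div_iff₀ (by positivity), sub_mul, one_mul, div_mul_eq_mul_div, one_mul, sub_le_comm,
      le_div_iff₀ hL]
    linarith
  · rw [div_le_one (by positivity), ← he]
    exact SS_succ_le a 0 y hy

open Filter Real in
/-- asymptotics of `h̃''_{n,α}(1)`.  Suppose `n/(w α(n)) > 1`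
for all large `n` and all `w ∈ (1−δ, 1+δ)`, and `α(n)/n → 0`.  Here
`x n w = x_{n,α}(w)` is the positive solution of `∑_{j=1}^{α(n)} x^j = n/w` and
`h̃ n w = w ∑_{j=1}^{α(n)} x(w)^j/j − n log x(w) − (1/2) log(2πw ∑ j x(w)^j)`.
Then `(α(n)/n)·h̃''_{n,α}(1) → −1`. -/
theorem stmt_15 (α : ℕ → ℕ) (hα : ∀ n, 1 ≤ α n)
    (δ : ℝ) (hδ0 : 0 < δ) (hδ1 : δ < 1)
    (hbig : ∀ᶠ n : ℕ in atTop, ∀ w ∈ Set.Ioo (1 - δ) (1 + δ),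
      1 < (n : ℝ) / (w * α n))
    (hαn : Tendsto (fun n : ℕ => (α n : ℝ) / n) atTop (nhds 0))
    (x : ℕ → ℝ → ℝ)
    (hx : ∀ n, 1 ≤ n → ∀ w : ℝ, 0 < w →
      0 < x n w ∧ ∑ j ∈ Finset.Icc 1 (α n), x n w ^ j = (n : ℝ) / w)
    (h : ℕ → ℝ → ℝ)
    (hh : ∀ n, ∀ w : ℝ, 0 < w →
      h n w = w * ∑ j ∈ Finset.Icc 1 (α n), x n w ^ j / j - (n : ℝ) * Real.log (x n w)
        - 1 / 2 * Real.log (2 * π * w * ∑ j ∈ Finset.Icc 1 (α n), (j : ℝ) * x n w ^ j)) :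
    Tendsto (fun n : ℕ => (α n : ℝ) / n * iteratedDeriv 2 (h n) 1) atTop
      (nhds (-1)) := by
  have hSS0 : ∀ a y, SS a 0 y = ∑ j ∈ Finset.Icc 1 a, y ^ j := by intro a y; simp [SS]
  have hSS1 : ∀ a y, SS a 1 y = ∑ j ∈ Finset.Icc 1 a, (j : ℝ) * y ^ j := by
    intro a y; simp [SS]
  have hX : ∀ n, 1 ≤ n → ∀ w : ℝ, 0 < w → 0 < x n w ∧ SS (α n) 0 (x n w) = (n : ℝ) / w := by
    intro n hn w hw
    rw [hSS0]
    exact hx n hn w hw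
  have hinv : Tendsto (fun n : ℕ => (n : ℝ) / α n) atTop atTop := by
    have h1 : Tendsto (fun n : ℕ => (α n : ℝ) / n) atTop (nhdsWithin 0 (Set.Ioi 0)) := by
      apply tendsto_nhdsWithin_iff.2 ⟨hαn, _⟩
      filter_upwards [eventually_ge_atTop 1] with n hn
      have h1 : (0 : ℝ) < α n := by exact_mod_cast hα n
      have h2 : (0 : ℝ) < n := by exact_mod_cast hn
      exact div_pos h1 h2
    refine h1.inv_tendsto_nhdsGT_zero.congr fun n => ?_
    simp
  have hlow : Tendsto (fun n : ℕ => 1 - 1 / Real.log ((n : ℝ) / α n)) atTop (nhds 1) := by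
    have := (Real.tendsto_log_atTop.comp hinv).inv_tendsto_atTop
    have := this.const_sub 1
    simpa using this
  have hm : Tendsto (fun n : ℕ => SS (α n) 1 (x n 1) / (α n * n)) atTop (nhds 1) := by
    have hb : ∀ᶠ n : ℕ in atTop, 1 - 1 / Real.log ((n : ℝ) / α n) ≤
        SS (α n) 1 (x n 1) / (α n * n) ∧ SS (α n) 1 (x n 1) / (α n * n) ≤ 1 := by
      filter_upwards [eventually_ge_atTop 1, hinv.eventually_gt_atTop 1] with n hn hn1
      have := hX n hn 1 one_pos
      exact r_bound (α n) (hα n) n (by exact_mod_cast hn) _ this.1 (by simpa using this.2) hn1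
    exact tendsto_of_tendsto_of_tendsto_of_le_of_le' hlow tendsto_const_nhds
      (hb.mono fun _ h => h.1) (hb.mono fun _ h => h.2)
  have hr : Tendsto (fun n : ℕ => (α n : ℝ) * n / SS (α n) 1 (x n 1)) atTop (nhds 1) := by
    have := hm.inv₀ one_ne_zero
    simpa using this
  have hdiff : Tendsto (fun n : ℕ => (α n : ℝ) / n * iteratedDeriv 2 (h n) 1
      + (α n : ℝ) * n / SS (α n) 1 (x n 1)) atTop (nhds 0) := by
    apply squeeze_zero_norm' (a := fun n : ℕ => (α n : ℝ) / n * 9)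
    · filter_upwards [eventually_ge_atTop 1, hr.eventually_le_const one_lt_two] with n hn hr2
      have hn0 : (0 : ℝ) < n := by exact_mod_cast hn
      rw [h_deriv2 (α n) (hα n) n hn0 (x n) (hX n hn) (h n) (by
        intro w hw
        rw [hh n w hw, hSS1])]
      exact final_bound (α n) (hα n) n hn0 _ (hX n hn 1 one_pos).1 _ rfl hr2
    · simpa using hαn.mul_const 9
  have := hdiff.sub hr
  simpa using this
end
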